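/- arXiv:2205.06625 — 5 statements merged into one kernel-verified Lean document; each statement's English description precedes it below -/
import Mathlib

section
/- For each n ≥ 1 consider the probability measure on rooted labeled trees on n vertices with all out-degrees at most 2, in which a tree T is chosen with probability proportional to Ω(T) = 2^{b(T)}, where b(T) is the number of vertices of T with out-degree 2. Let g_n = (∑ Ω(T₁)·Ω(T₂), summed over ordered pairs (T₁, T₂) of isomorphic such trees) / (∑_T Ω(T))² be the probability that two independent samples are isomorphic. Then there exist constants C > 0 and δ ∈ (0,1) such that g_n / (n^{3/2} · δ^n) → C as n → ∞ (numerically C ≈ 1.279101 and δ ≈ 0.412681). -/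
open scoped Classical BigOperators

/-- A rooted labeled tree on `n` vertices: a simple graph on `Fin n` that is a
tree, together with a distinguished root vertex. -/
structure RTree (n : ℕ) where
  graph : SimpleGraph (Fin n)
  isTree : graph.IsTree
  root : Fin n

namespace RTree

/-- Two rooted labeled trees are isomorphic if there is a graph isomorphism
mapping root to root. -/
def Isom {n : ℕ} (T₁ T₂ : RTree n) : Prop :=
  ∃ φ : T₁.graph ≃g T₂.graph, φ T₁.root = T₂.root

/-- The out-degree (number of children) of a vertex: its degree if it is the
root and its degree minus one otherwise. -/
noncomputable def outdeg {n : ℕ} (T : RTree n) (v : Fin n) : ℕ :=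
  if v = T.root then (T.graph.neighborSet v).ncard
  else (T.graph.neighborSet v).ncard - 1

/-- The number of root-fixing graph automorphisms. -/
noncomputable def autCard {n : ℕ} (T : RTree n) : ℕ :=
  Nat.card {φ : T.graph ≃g T.graph // φ T.root = T.root}

instance finite {n : ℕ} : Finite (RTree n) := by
  have h : Function.Injective (fun T : RTree n => (T.graph, T.root)) := by
    rintro ⟨g₁, h₁, r₁⟩ ⟨g₂, h₂, r₂⟩ h
    simp_all
  exact Finite.of_injective _ h

noncomputable instance fintype {n : ℕ} : Fintype (RTree n) := Fintype.ofFinite _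

end RTree

/-- Rooted labeled trees on `n` vertices with all out-degrees at most `2`
(unary-binary trees). -/
def UBTree (n : ℕ) : Type :=
  {T : RTree n // ∀ v, T.outdeg v ≤ 2}

instance (n : ℕ) : Finite (UBTree n) := by
  unfold UBTree; infer_instance

noncomputable instance (n : ℕ) : Fintype (UBTree n) := Fintype.ofFinite _

/-- The weight `2^{b(T)}` of a unary-binary tree, where `b(T)` is the number
of vertices of out-degree `2`; this equals `∏ v, outdeg(v)!`, so the induced
measure corresponds to uniformly random plane unary-binary trees. -/
noncomputable def ubWeight {n : ℕ} (T : UBTree n) : ℝ :=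
  2 ^ (Finset.univ.filter fun v => T.1.outdeg v = 2).card

/-- The probability that two independent samples from the measure proportional
to `ubWeight` (i.e. two uniformly random plane unary-binary trees of size `n`)
are isomorphic. -/
noncomputable def probIsomUB (n : ℕ) : ℝ :=
  (∑ p : UBTree n × UBTree n,
      if p.1.1.Isom p.2.1 then ubWeight p.1 * ubWeight p.2 else 0) /
    (∑ T : UBTree n, ubWeight T) ^ 2

namespace UB

/-- plane unary-binary trees -/
inductive PT : Type
  | leaf : PT
  | un : PT → PT
  | bin : PT → PT → PT

namespace PT

def size : PT → ℕ
  | leaf => 1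
  | un a => a.size + 1
  | bin a b => a.size + b.size + 1

def eqv : PT → PT → Prop
  | leaf, leaf => True
  | un a, un b => eqv a b
  | bin a b, bin c d => (eqv a c ∧ eqv b d) ∨ (eqv a d ∧ eqv b c)
  | _, _ => False

theorem eqv_refl (a : PT) : eqv a a := by
  induction a <;> simp_all [eqv]

theorem eqv_symm {a b : PT} (h : eqv a b) : eqv b a := by
  induction a generalizing b with
  | leaf => cases b <;> simp_all [eqv]
  | un a ih => cases b <;> simp_all [eqv]
  | bin a b iha ihb =>
    cases b <;> simp only [eqv] at h ⊢
    rcases h with h | h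
    · exact Or.inl ⟨iha h.1, ihb h.2⟩
    · exact Or.inr ⟨ihb h.2, iha h.1⟩

theorem eqv_trans {a b c : PT} (h : eqv a b) (h' : eqv b c) : eqv a c := by
  induction a generalizing b c with
  | leaf => cases b <;> cases c <;> simp_all [eqv]
  | un a ih => 
    cases b <;> cases c <;> simp only [eqv] at h h' ⊢
    exact ih h h'
  | bin a b iha ihb =>
    cases b <;> cases c <;> simp only [eqv] at h h' ⊢
    rcases h with h | h <;> rcases h' with h' | h'
    · exact Or.inl ⟨iha h.1 h'.1, ihb h.2 h'.2⟩
    · exact Or.inr ⟨iha h.1 h'.1, ihb h.2 h'.2⟩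
    · exact Or.inr ⟨iha h.1 h'.2, ihb h.2 h'.1⟩
    · exact Or.inl ⟨iha h.1 h'.2, ihb h.2 h'.1⟩

theorem eqv_size {a b : PT} (h : eqv a b) : a.size = b.size := by
  induction a generalizing b with
  | leaf => cases b <;> simp_all [eqv]
  | un a ih => 
    cases b <;> simp only [eqv] at h
    simp [size, ih h]
  | bin a b iha ihb =>
    cases b <;> simp only [eqv] at h
    rcases h with h | h
    · simp [size, iha h.1, ihb h.2]
    · simp [size, iha h.1, ihb h.2]; omega

theorem size_pos (a : PT) : 0 < a.size := by cases a <;> simp [size]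

/-- all trees of height at most `h` -/
noncomputable def all : ℕ → Finset PT
  | 0 => ∅
  | h + 1 => insert leaf ((all h).image un ∪ Finset.image₂ bin (all h) (all h))

theorem mem_all {h : ℕ} {t : PT} (ht : t.size ≤ h) : t ∈ all h := by
  induction h generalizing t with
  | zero => have := size_pos t; omega
  | succ h ih =>
    cases t with
    | leaf => simp [all]
    | un a => simp only [size] at ht; simp [all, ih (show a.size ≤ h by omega)]
    | bin a b =>
      simp only [size] at ht
      have := size_pos a
      have := size_pos b
      simp [all, ih (show a.size ≤ h by omega), ih (show b.size ≤ h by omega)]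

noncomputable def trees (n : ℕ) : Finset PT := (all n).filter (fun t => t.size = n)

@[simp] theorem mem_trees {n : ℕ} {t : PT} : t ∈ trees n ↔ t.size = n := by
  simp only [trees, Finset.mem_filter, and_iff_right_iff_imp]
  intro h; exact mem_all h.le

theorem trees_zero : trees 0 = ∅ := by
  ext t; have := size_pos t; simp; omega

theorem trees_one : trees 1 = {leaf} := by
  ext t
  cases t with
  | leaf => simp [size]
  | un a => have := size_pos a; simp [size]; omega
  | bin a b => have := size_pos a; simp [size]; omega

theorem sum_trees (n : ℕ) (f : PT → ℝ) : ∑ t ∈ trees (n + 2), f t =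
    ∑ a ∈ trees (n + 1), f (un a) + ∑ p ∈ Finset.HasAntidiagonal.antidiagonal (n + 1),
      ∑ a ∈ trees p.1, ∑ b ∈ trees p.2, f (bin a b) := by
  have h : trees (n + 2) = (trees (n + 1)).image un ∪
      (Finset.HasAntidiagonal.antidiagonal (n+1)).biUnion (fun p => (trees p.1 ×ˢ trees p.2).image
        (fun q => bin q.1 q.2)) := by
    ext t
    cases t with
    | leaf => simp [size]
    | un a => simp [size]
    | bin a b => simp [size]
  rw [h, Finset.sum_union, Finset.sum_image, Finset.sum_biUnion]
  · congr 1
    refine Finset.sum_congr rfl fun p _ => ?_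
    rw [Finset.sum_image, Finset.sum_product]
    rintro ⟨a, b⟩ _ ⟨c, d⟩ _ h
    simpa using h
  · intro p _ q _ hpq
    simp only [Function.onFun]
    rw [Finset.disjoint_left]
    intro t ht ht'
    simp only [Finset.mem_image, Finset.mem_product, mem_trees] at ht ht'
    obtain ⟨x, hx, rfl⟩ := ht
    obtain ⟨y, hy, h⟩ := ht'
    simp only [bin.injEq] at h
    apply hpq
    ext <;> simp [← hx.1, ← hx.2, ← hy.1, ← hy.2, h]
  · intro a _ b _ h; simpa using h
  · rw [Finset.disjoint_left]
    intro t ht ht'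
    simp only [Finset.mem_image, Finset.mem_biUnion] at ht ht'
    obtain ⟨x, hx, rfl⟩ := ht
    obtain ⟨y, hy, z, hz, h⟩ := ht'
    simp at h

/-- equivalence class -/
noncomputable def cls : PT → Finset PT
  | leaf => {leaf}
  | un a => (cls a).image un
  | bin a b => Finset.image₂ bin (cls a) (cls b) ∪ Finset.image₂ bin (cls b) (cls a)

theorem mem_cls {s t : PT} : s ∈ cls t ↔ eqv s t := by
  induction t generalizing s with
  | leaf => cases s <;> simp [cls, eqv]
  | un a ih => cases s <;> simp [cls, eqv, ih]
  | bin a b iha ihb => 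
    cases s <;> simp [cls, eqv, iha, ihb]

theorem cls_eq {s t : PT} (h : eqv s t) : cls s = cls t := by
  ext u; rw [mem_cls, mem_cls]
  exact ⟨fun h' => eqv_trans h' h, fun h' => eqv_trans h' (eqv_symm h)⟩

noncomputable def e (t : PT) : ℕ := (cls t).card

theorem e_leaf : e leaf = 1 := by simp [e, cls]
theorem e_un (a : PT) : e (un a) = e a := by
  simp only [e, cls]
  apply Finset.card_image_of_injective
  intro a b h; simpa using h

theorem bin_inj : Function.Injective2 bin := by
  intro a b c d h; simpa using h

theorem e_bin (a b : PT) : e (bin a b) = if eqv a b then e a * e b else 2 * (e a * e b) := by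
  simp only [e, cls]
  split_ifs with h
  · rw [cls_eq h, Finset.union_self, Finset.card_image₂ bin_inj]
  · rw [Finset.card_union_of_disjoint, Finset.card_image₂ bin_inj, Finset.card_image₂ bin_inj]
    · ring
    · rw [Finset.disjoint_left]
      intro t ht ht'
      simp only [Finset.mem_image₂, mem_cls] at ht ht'
      obtain ⟨x, hx, y, hy, rfl⟩ := ht
      obtain ⟨z, hz, w, hw, h'⟩ := ht'
      simp only [bin.injEq] at h'
      obtain ⟨rfl, rfl⟩ := h'
      exact h (eqv_trans (eqv_symm hx) hz)

theorem e_pos (t : PT) : 0 < e t := Finset.card_pos.2 ⟨t, mem_cls.2 (eqv_refl t)⟩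

theorem e_sq (t : PT) : 2 * (e t) ^ 2 ≤ 2 ^ t.size := by
  induction t with
  | leaf => simp [e_leaf, size]
  | un a ih => rw [e_un, size, pow_succ 2]; omega
  | bin a b iha ihb =>
    have : e (bin a b) ≤ 2 * (e a * e b) := by
      rw [e_bin]; split_ifs <;> omega
    calc 2 * e (bin a b) ^ 2 ≤ 2 * (2 * (e a * e b)) ^ 2 := by gcongr
      _ = 2 * ((2 * e a ^ 2) * (2 * e b ^ 2)) := by ring
      _ ≤ 2 * (2 ^ a.size * 2 ^ b.size) := by gcongr
      _ = _ := by rw [size]; ring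

theorem sum_eqv (n : ℕ) (t : PT) (ht : t.size = n) (f : PT → ℝ) :
    ∑ s ∈ trees n, (if eqv s t then f s else 0) = ∑ s ∈ cls t, f s := by
  rw [← Finset.sum_filter]
  congr 1
  ext s
  simp only [Finset.mem_filter, mem_trees, mem_cls, and_iff_right_iff_imp]
  intro h; rw [eqv_size h, ht]

noncomputable def M (n : ℕ) : ℝ := (trees n).card
noncomputable def S (n : ℕ) : ℝ := ∑ t ∈ trees n, (e t : ℝ)
noncomputable def G (n : ℕ) : ℝ := ∑ t ∈ trees n, (e t : ℝ) ^ 3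

theorem S_eq (n : ℕ) : S n = ∑ s ∈ trees n, ∑ t ∈ trees n, if eqv s t then 1 else 0 := by
  rw [Finset.sum_comm, S]
  refine Finset.sum_congr rfl fun t ht => ?_
  rw [sum_eqv n t (mem_trees.1 ht)]
  simp [e]

theorem M_rec (n : ℕ) : M (n + 2) = M (n + 1) + ∑ p ∈ Finset.HasAntidiagonal.antidiagonal (n + 1), M p.1 * M p.2 := by
  have := sum_trees n (fun _ => 1)
  simpa [M] using this

theorem sum_pair (i j : ℕ) : ∑ a ∈ trees i, ∑ b ∈ trees j, (e (bin a b) : ℝ) =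
    2 * (S i * S j) - if i = j then G i else 0 := by
  have h1 : ∀ a b, (e (bin a b) : ℝ) = 2 * ((e a : ℝ) * e b) - if eqv b a then (e a : ℝ) * e b else 0 := by
    intro a b
    rw [e_bin]
    by_cases h : eqv a b
    · simp [h, eqv_symm h]; ring
    · have : ¬ eqv b a := fun h' => h (eqv_symm h')
      simp [h, this]
  simp_rw [h1, Finset.sum_sub_distrib]
  congr 1
  · simp_rw [← Finset.mul_sum]
    rw [S, S, Finset.sum_mul_sum]
    simp_rw [← Finset.mul_sum]
  · split_ifs with hij
    · subst hij
      rw [G]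
      refine Finset.sum_congr rfl fun a ha => ?_
      rw [sum_eqv i a (mem_trees.1 ha)]
      have : ∀ s ∈ cls a, (e a : ℝ) * e s = (e a : ℝ) * e a := by
        intro s hs
        rw [e, e, cls_eq (mem_cls.1 hs)]
      rw [Finset.sum_congr rfl this]
      simp only [Finset.sum_const, nsmul_eq_mul]
      rw [← e]; ring
    · apply Finset.sum_eq_zero; intro a ha
      apply Finset.sum_eq_zero; intro b hb
      rw [if_neg]
      intro h
      have := eqv_size h
      simp at ha hb
      omega

theorem S_rec (n : ℕ) : S (n + 2) = S (n + 1) +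
    ∑ p ∈ Finset.HasAntidiagonal.antidiagonal (n + 1), (2 * (S p.1 * S p.2) - if p.1 = p.2 then G p.1 else 0) := by
  rw [S, sum_trees, S]
  simp_rw [e_un, sum_pair]

theorem M_zero : M 0 = 0 := by simp [M, trees_zero]
theorem M_one : M 1 = 1 := by simp [M, trees_one]
theorem S_zero : S 0 = 0 := by simp [S, trees_zero]
theorem S_one : S 1 = 1 := by simp [S, trees_one, e_leaf]
theorem M_nonneg (n) : 0 ≤ M n := by unfold M; positivity
theorem S_nonneg (n) : 0 ≤ S n := by unfold S; positivity
theorem G_nonneg (n) : 0 ≤ G n := by unfold G; positivity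

theorem S_le (n) : S n ≤ M n * (3 / 2) ^ n := by
  rw [S, M, ← nsmul_eq_mul]
  apply Finset.sum_le_card_nsmul
  intro t ht
  have h := e_sq t
  rw [mem_trees.1 ht] at h
  have h2 : (e t : ℝ) ^ 2 ≤ 2 ^ n := by
    have : e t ^ 2 ≤ 2 ^ n := by omega
    exact_mod_cast this
  refine le_of_sq_le_sq ?_ (by positivity)
  refine h2.trans ?_
  rw [← pow_mul, mul_comm, pow_mul]
  gcongr
  norm_num

theorem G_le (n) : G n ≤ 2 ^ n / 2 * S n := by
  rw [S, G, Finset.mul_sum]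
  gcongr with t ht
  have h := e_sq t
  rw [mem_trees.1 ht] at h
  have h2 : 2 * (e t : ℝ) ^ 2 ≤ 2 ^ n := by exact_mod_cast h
  have : (0 : ℝ) ≤ e t := by positivity
  nlinarith

theorem G_le' (n) : G n ≤ S n * S n := by
  rw [S, Finset.sum_mul_sum, G]
  refine Finset.sum_le_sum fun a ha => ?_
  calc (e a : ℝ) ^ 3 = ∑ s ∈ trees n, (if eqv s a then (e a : ℝ) * e a else 0) := by
        rw [sum_eqv n a (mem_trees.1 ha)]; simp only [Finset.sum_const, nsmul_eq_mul]
        rw [← e]; ring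
    _ ≤ _ := by
      refine Finset.sum_le_sum fun s hs => ?_
      split_ifs with h
      · rw [e, e, cls_eq h]
      · positivity

end PT
end UB

namespace UB
open PT

/-- labelled plane unary-binary trees -/
inductive LT (V : Type) : Type
  | leaf : V → LT V
  | un : V → LT V → LT V
  | bin : V → LT V → LT V → LT V

namespace LT
variable {V : Type}

def root : LT V → V
  | leaf v => v
  | un v _ => v
  | bin v _ _ => v

def labels : LT V → List V
  | leaf v => [v]
  | un v a => v :: labels a
  | bin v a b => v :: (labels a ++ labels b)

def shape : LT V → PT
  | leaf _ => PT.leaf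
  | un _ a => PT.un (shape a)
  | bin _ a b => PT.bin (shape a) (shape b)

def edges : LT V → List (Sym2 V)
  | leaf _ => []
  | un v a => s(v, a.root) :: edges a
  | bin v a b => s(v, a.root) :: s(v, b.root) :: (edges a ++ edges b)

def map {W : Type} (f : V → W) : LT V → LT W
  | leaf v => leaf (f v)
  | un v a => un (f v) (map f a)
  | bin v a b => bin (f v) (map f a) (map f b)

def bins : LT V → ℕ
  | leaf _ => 0
  | un _ a => bins a
  | bin _ a b => bins a + bins b + 1

theorem root_mem (l : LT V) : l.root ∈ l.labels := by cases l <;> simp [root, labels]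

theorem labels_length (l : LT V) : l.labels.length = l.shape.size := by
  induction l <;> simp_all [labels, shape, PT.size]

theorem edges_length (l : LT V) : l.edges.length + 1 = l.labels.length := by
  induction l with
  | leaf => simp [edges, labels]
  | un v a ih => simp [edges, labels, ih]
  | bin v a b iha ihb => simp [edges, labels, ← iha, ← ihb]; omega

theorem edges_mem {l : LT V} {u w : V} (h : s(u, w) ∈ l.edges) : u ∈ l.labels := by
  induction l with
  | leaf => simp [edges] at h
  | un v a ih =>
    simp only [edges, List.mem_cons, Sym2.eq_iff] at h
    rcases h with (⟨rfl, rfl⟩ | ⟨rfl, rfl⟩) | h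
    · simp [labels]
    · simp [labels, root_mem]
    · simp [labels, ih h]
  | bin v a b iha ihb =>
    simp only [edges, List.mem_cons, List.mem_append, Sym2.eq_iff] at h
    rcases h with (⟨rfl, rfl⟩ | ⟨rfl, rfl⟩) | (⟨rfl, rfl⟩ | ⟨rfl, rfl⟩) | h | h
    · simp [labels]
    · simp [labels, root_mem]
    · simp [labels]
    · simp [labels, root_mem]
    · simp [labels, iha h]
    · simp [labels, ihb h]

theorem root_map {W : Type} (f : V → W) (l : LT V) : (l.map f).root = f l.root := by
  cases l <;> rfl
theorem shape_map {W : Type} (f : V → W) (l : LT V) : (l.map f).shape = l.shape := by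
  induction l <;> simp_all [map, shape]
theorem labels_map {W : Type} (f : V → W) (l : LT V) : (l.map f).labels = l.labels.map f := by
  induction l <;> simp_all [map, labels]
theorem edges_map {W : Type} (f : V → W) (l : LT V) :
    (l.map f).edges = l.edges.map (Sym2.map f) := by
  induction l <;> simp_all [map, edges, root_map]

theorem ext_shape {l l' : LT V} (h : l.shape = l'.shape) (h' : l.labels = l'.labels) : l = l' := by
  induction l generalizing l' with
  | leaf v => cases l' <;> simp_all [shape, labels]
  | un v a ih =>
    cases l' <;> simp only [shape, reduceCtorEq, PT.un.injEq] at h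
    simp only [labels, List.cons.injEq] at h'
    rw [h'.1, ih h h'.2]
  | bin v a b iha ihb =>
    cases l' <;> simp only [shape, reduceCtorEq, PT.bin.injEq] at h
    simp only [labels, List.cons.injEq] at h'
    have := List.append_inj h'.2 (by rw [labels_length, labels_length, h.1])
    rw [h'.1, iha h.1 this.1, ihb h.2 this.2]

theorem exists_fill (t : PT) (xs : List V) (h : xs.length = t.size) :
    ∃ l : LT V, l.shape = t ∧ l.labels = xs := by
  induction t generalizing xs with
  | leaf =>
    match xs, h with
    | [v], _ => exact ⟨leaf v, rfl, rfl⟩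
  | un a ih =>
    match xs, h with
    | v :: ys, h =>
      obtain ⟨l, h1, h2⟩ := ih ys (by simpa [PT.size] using h)
      exact ⟨un v l, by simp [shape, h1], by simp [labels, h2]⟩
  | bin a b iha ihb =>
    match xs, h with
    | v :: ys, h =>
      simp only [PT.size, List.length_cons, Nat.add_right_cancel_iff] at h
      obtain ⟨l, h1, h2⟩ := iha (ys.take a.size) (by simp; omega)
      obtain ⟨l', h1', h2'⟩ := ihb (ys.drop a.size) (by simp; omega)
      exact ⟨bin v l l', by simp [shape, h1, h1'], by simp [labels, h2, h2']⟩

/-- `Rep G p l`: `l` is a plane representation of the part of `G` below `l.root`,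
whose parent is `p`. -/
def Rep (G : SimpleGraph V) : Option V → LT V → Prop
  | p, leaf v => ∀ w, ¬ (G.Adj v w ∧ some w ≠ p)
  | p, un v a => (∀ w, (G.Adj v w ∧ some w ≠ p) ↔ w = a.root) ∧ Rep G (some v) a
  | p, bin v a b => (∀ w, (G.Adj v w ∧ some w ≠ p) ↔ (w = a.root ∨ w = b.root)) ∧
      a.root ≠ b.root ∧ Rep G (some v) a ∧ Rep G (some v) b

theorem Rep.edges_adj {G : SimpleGraph V} {p : Option V} {l : LT V} (h : Rep G p l)
    {e : Sym2 V} (he : e ∈ l.edges) : e ∈ G.edgeSet := by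
  induction l generalizing p with
  | leaf => simp [edges] at he
  | un v a ih =>
    simp only [edges, List.mem_cons] at he
    rcases he with rfl | he
    · exact ((h.1 _).2 rfl).1
    · exact ih h.2 he
  | bin v a b iha ihb =>
    simp only [edges, List.mem_cons, List.mem_append] at he
    rcases he with rfl | rfl | he | he
    · exact ((h.1 _).2 (Or.inl rfl)).1
    · exact ((h.1 _).2 (Or.inr rfl)).1
    · exact iha h.2.2.1 he
    · exact ihb h.2.2.2 he

theorem Rep.adj_edges {G : SimpleGraph V} {p : Option V} {l : LT V} (h : Rep G p l)
    {u w : V} (hu : u ∈ l.labels) (ha : G.Adj u w) :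
    s(u, w) ∈ l.edges ∨ (u = l.root ∧ some w = p) := by
  induction l generalizing p with
  | leaf v =>
    simp only [labels, List.mem_singleton] at hu
    subst hu
    have := h w
    simp only [root]; tauto
  | un v a ih =>
    simp only [labels, List.mem_cons] at hu
    rcases hu with rfl | hu
    · have := h.1 w
      simp only [edges, root, List.mem_cons, Sym2.congr_right]; tauto
    · rcases ih h.2 hu with h' | ⟨rfl, h'⟩
      · simp [edges, h']
      · simp only [Option.some.injEq] at h'
        subst h'
        simp [edges, Sym2.eq_swap]
  | bin v a b iha ihb =>
    simp only [labels, List.mem_cons, List.mem_append] at hu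
    rcases hu with rfl | hu | hu
    · have := h.1 w
      simp only [edges, root, List.mem_cons, Sym2.congr_right]; tauto
    · rcases iha h.2.2.1 hu with h' | ⟨rfl, h'⟩
      · simp [edges, h']
      · simp only [Option.some.injEq] at h'
        subst h'
        simp [edges, Sym2.eq_swap]
    · rcases ihb h.2.2.2 hu with h' | ⟨rfl, h'⟩
      · simp [edges, h']
      · simp only [Option.some.injEq] at h'
        subst h'
        simp [edges, Sym2.eq_swap]

theorem Rep.adj_iff {G : SimpleGraph V} {l : LT V} (h : Rep G none l) (hl : ∀ v, v ∈ l.labels)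
    (u w : V) : G.Adj u w ↔ s(u, w) ∈ l.edges := by
  constructor
  · intro ha
    rcases h.adj_edges (hl u) ha with h | h
    · exact h
    · simp at h
  · intro he; exact h.edges_adj he

/-- the graph of a labelled plane tree -/
def toGraph (l : LT V) : SimpleGraph V := SimpleGraph.fromEdgeSet {e | e ∈ l.edges}

theorem not_loop {l : LT V} (h : l.labels.Nodup) (v : V) : s(v, v) ∉ l.edges := by
  induction l with
  | leaf => simp [edges]
  | un u a ih =>
    simp only [labels, List.nodup_cons] at h
    have h1 := ih h.2
    have h2 : v = u → v = a.root → False := fun e1 e2 => h.1 (e1 ▸ e2 ▸ root_mem a)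
    simp only [edges, List.mem_cons, Sym2.eq_iff]
    tauto
  | bin u a b iha ihb =>
    simp only [labels, List.nodup_cons, List.mem_append, not_or, List.nodup_append] at h
    have h1 := iha h.2.1
    have h1' := ihb h.2.2.1
    have h2 : v = u → v = a.root → False := fun e1 e2 => h.1.1 (e1 ▸ e2 ▸ root_mem a)
    have h3 : v = u → v = b.root → False := fun e1 e2 => h.1.2 (e1 ▸ e2 ▸ root_mem b)
    simp only [edges, List.mem_cons, Sym2.eq_iff, List.mem_append]
    tauto

theorem toGraph_adj {l : LT V} (h : l.labels.Nodup) (u w : V) :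
    l.toGraph.Adj u w ↔ s(u, w) ∈ l.edges := by
  simp only [toGraph, SimpleGraph.fromEdgeSet_adj, Set.mem_ofPred_eq, ne_eq, and_iff_left_iff_imp]
  rintro h1 rfl
  exact not_loop h u h1

theorem edges_mem' {l : LT V} {u w : V} (h : s(u, w) ∈ l.edges) : w ∈ l.labels := by
  rw [Sym2.eq_swap] at h; exact edges_mem h

theorem rep_of {G : SimpleGraph V} {p : Option V} {l : LT V} (hn : l.labels.Nodup)
    (hp : ∀ q, p = some q → q ∉ l.labels)
    (h : ∀ u ∈ l.labels, ∀ w, G.Adj u w ↔ (s(u, w) ∈ l.edges ∨ (u = l.root ∧ some w = p))) :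
    Rep G p l := by
  induction l generalizing p with
  | leaf v =>
    intro w
    have := h v (by simp [labels]) w
    simp only [edges, root, List.not_mem_nil] at this
    tauto
  | un v a ih =>
    simp only [labels, List.nodup_cons] at hn
    refine ⟨fun w => ?_, ih hn.2 ?_ ?_⟩
    · have h1 := h v (by simp [labels]) w
      simp only [edges, root, List.mem_cons, Sym2.congr_right] at h1
      have h2 : s(v, w) ∉ a.edges := fun h => hn.1 (edges_mem h)
      have h3 : w = a.root → some w ≠ p := by
        rintro rfl h4
        exact hp _ h4.symm (by simp [labels, root_mem])
      tauto
    · intro q hq; simp only [Option.some.injEq] at hq; subst hq; exact hn.1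
    · intro u hu w
      rw [h u (by simp [labels, hu]) w]
      have h1 : u ≠ v := fun h => hn.1 (h ▸ hu)
      simp only [edges, root, List.mem_cons, Sym2.eq_iff, Option.some.injEq]
      tauto
  | bin v a b iha ihb =>
    simp only [labels, List.nodup_cons, List.mem_append, not_or, List.nodup_append'] at hn
    obtain ⟨⟨hva, hvb⟩, hna, hnb, hd⟩ := hn
    have hd' : ∀ x, x ∈ a.labels → x ∈ b.labels → False := fun x h1 h2 => hd h1 h2
    refine ⟨fun w => ?_, ?_, iha hna ?_ ?_, ihb hnb ?_ ?_⟩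
    · have h1 := h v (by simp [labels]) w
      simp only [edges, root, List.mem_cons, Sym2.congr_right, List.mem_append] at h1
      have h2 : s(v, w) ∉ a.edges := fun h => hva (edges_mem h)
      have h2' : s(v, w) ∉ b.edges := fun h => hvb (edges_mem h)
      have h3 : w = a.root → some w ≠ p := by
        rintro rfl h4
        exact hp _ h4.symm (by simp [labels, root_mem])
      have h3' : w = b.root → some w ≠ p := by
        rintro rfl h4
        exact hp _ h4.symm (by simp [labels, root_mem])
      tauto
    · intro h; exact hd' _ (root_mem a) (h ▸ root_mem b)
    · intro q hq; simp only [Option.some.injEq] at hq; subst hq; exact hva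
    · intro u hu w
      rw [h u (by simp [labels, hu]) w]
      have h1 : u ≠ v := fun h => hva (h ▸ hu)
      have h2 : u ≠ b.root := fun h => hd' u hu (h ▸ root_mem b)
      have h3 : s(u, w) ∉ b.edges := fun h => hd' u hu (edges_mem h)
      simp only [edges, root, List.mem_cons, Sym2.eq_iff, Option.some.injEq, List.mem_append]
      tauto
    · intro q hq; simp only [Option.some.injEq] at hq; subst hq; exact hvb
    · intro u hu w
      rw [h u (by simp [labels, hu]) w]
      have h1 : u ≠ v := fun h => hvb (h ▸ hu)
      have h2 : u ≠ a.root := fun h => hd' u (h ▸ root_mem a) hu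
      have h3 : s(u, w) ∉ a.edges := fun h => hd' u (edges_mem h) hu
      simp only [edges, root, List.mem_cons, Sym2.eq_iff, Option.some.injEq, List.mem_append]
      tauto

theorem rep_toGraph {l : LT V} (hn : l.labels.Nodup) : Rep l.toGraph none l := by
  apply rep_of hn (by simp)
  intro u hu w
  rw [toGraph_adj hn]; simp

theorem reach {l : LT V} {G : SimpleGraph V} (h : ∀ u w, s(u, w) ∈ l.edges → G.Adj u w)
    {u : V} (hu : u ∈ l.labels) : G.Reachable l.root u := by
  induction l with
  | leaf v => simp [labels] at hu; subst hu; exact SimpleGraph.Reachable.refl _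
  | un v a ih =>
    simp only [labels, List.mem_cons] at hu
    rcases hu with rfl | hu
    · exact SimpleGraph.Reachable.refl _
    · exact (h v a.root (by simp [edges])).reachable.trans
        (ih (fun u w he => h u w (by simp [edges, he])) hu)
  | bin v a b iha ihb =>
    simp only [labels, List.mem_cons, List.mem_append] at hu
    rcases hu with rfl | hu | hu
    · exact SimpleGraph.Reachable.refl _
    · exact (h v a.root (by simp [edges])).reachable.trans
        (iha (fun u w he => h u w (by simp [edges, he])) hu)
    · exact (h v b.root (by simp [edges])).reachable.trans
        (ihb (fun u w he => h u w (by simp [edges, he])) hu)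

theorem labels_card [Fintype V] {l : LT V} (hn : l.labels.Nodup) (hc : ∀ v, v ∈ l.labels) :
    l.labels.length = Fintype.card V := by
  rw [← List.toFinset_card_of_nodup hn]
  rw [← Finset.card_univ]
  congr 1
  ext v; simp [hc v]

theorem isTree_toGraph [Fintype V] {l : LT V} (hn : l.labels.Nodup) (hc : ∀ v, v ∈ l.labels) :
    l.toGraph.IsTree := by
  have hcon : l.toGraph.Connected := by
    have : Nonempty V := ⟨l.root⟩
    refine ⟨fun u w => ?_⟩
    have := fun u => reach (fun u w h => (toGraph_adj hn u w).2 h) (hc u)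
    exact (this u).symm.trans (this w)
  rw [SimpleGraph.isTree_iff_connected_and_card]
  refine ⟨hcon, le_antisymm ?_ hcon.card_vert_le_card_edgeSet_add_one⟩
  have h1 : l.toGraph.edgeSet ⊆ (l.edges.toFinset : Set (Sym2 V)) := by
    intro e he
    induction e with | _ u w
    rw [SimpleGraph.mem_edgeSet, toGraph_adj hn] at he
    simpa using he
  have h2 : Nat.card l.toGraph.edgeSet ≤ l.edges.length := by
    calc Nat.card l.toGraph.edgeSet = l.toGraph.edgeSet.ncard := rfl
      _ ≤ (l.edges.toFinset : Set (Sym2 V)).ncard := Set.ncard_le_ncard h1 (Finset.finite_toSet _)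
      _ = l.edges.toFinset.card := Set.ncard_coe_finset _
      _ ≤ _ := List.toFinset_card_le _
  have h3 := edges_length l
  rw [labels_card hn hc] at h3
  rw [Nat.card_eq_fintype_card (α := V)]
  omega

/-- rearrangements -/
noncomputable def R : LT V → Finset (LT V)
  | leaf v => {leaf v}
  | un v a => (R a).image (un v)
  | bin v a b => Finset.image₂ (bin v) (R a) (R b) ∪ Finset.image₂ (bin v) (R b) (R a)

theorem R_root {l l' : LT V} (h : l' ∈ R l) : l'.root = l.root := by
  cases l with
  | leaf v => simp [R] at h; rw [h]
  | un v a => simp [R] at h; obtain ⟨x, _, rfl⟩ := h; rfl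
  | bin v a b =>
    simp [R] at h; rcases h with ⟨x, _, y, _, rfl⟩ | ⟨x, _, y, _, rfl⟩ <;> rfl

theorem mem_R {G : SimpleGraph V} {p : Option V} {l : LT V} (h : Rep G p l) (l' : LT V) :
    l' ∈ R l ↔ (Rep G p l' ∧ l'.root = l.root) := by
  induction l generalizing p l' with
  | leaf v =>
    simp only [R, Finset.mem_singleton]
    constructor
    · rintro rfl; exact ⟨h, rfl⟩
    · rintro ⟨h1, h2⟩
      simp only [Rep] at h
      cases l' with
      | leaf u => simp only [root] at h2; rw [h2]
      | un u a => simp only [root] at h2; subst h2; exact absurd ((h1.1 _).2 rfl) (h _)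
      | bin u a b => simp only [root] at h2; subst h2; exact absurd ((h1.1 _).2 (Or.inl rfl)) (h _)
  | un v a ih =>
    simp only [R, Finset.mem_image]
    constructor
    · rintro ⟨x, hx, rfl⟩
      refine ⟨⟨?_, ((ih h.2 x).1 hx).1⟩, rfl⟩
      rw [R_root hx]; exact h.1
    · rintro ⟨h1, h2⟩
      cases l' with
      | leaf u => simp only [root] at h2; subst h2; exact absurd ((h.1 _).2 rfl) (h1 _)
      | un u b =>
        simp only [root] at h2; subst h2
        refine ⟨b, ?_, rfl⟩
        have h3 : b.root = a.root := (h.1 _).1 ((h1.1 _).2 rfl)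
        exact (ih h.2 b).2 ⟨h1.2, h3⟩
      | bin u b c =>
        simp only [root] at h2; subst h2
        have h3 : b.root = a.root := (h.1 _).1 ((h1.1 _).2 (Or.inl rfl))
        have h4 : c.root = a.root := (h.1 _).1 ((h1.1 _).2 (Or.inr rfl))
        exact absurd (h3.trans h4.symm) h1.2.1
  | bin v a b iha ihb =>
    simp only [R, Finset.mem_union, Finset.mem_image₂]
    obtain ⟨hv, hne, hra, hrb⟩ := h
    constructor
    · rintro (⟨x, hx, y, hy, rfl⟩ | ⟨x, hx, y, hy, rfl⟩)
      · refine ⟨⟨?_, ?_, ((iha hra x).1 hx).1, ((ihb hrb y).1 hy).1⟩, rfl⟩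
        · rw [R_root hx, R_root hy]; exact hv
        · rw [R_root hx, R_root hy]; exact hne
      · refine ⟨⟨?_, ?_, ((ihb hrb x).1 hx).1, ((iha hra y).1 hy).1⟩, rfl⟩
        · rw [R_root hx, R_root hy]; intro w; rw [hv]; tauto
        · rw [R_root hx, R_root hy]; exact hne.symm
    · rintro ⟨h1, h2⟩
      cases l' with
      | leaf u => simp only [root] at h2; subst h2; exact absurd ((hv _).2 (Or.inl rfl)) (h1 _)
      | un u c =>
        simp only [root] at h2; subst h2
        have h3 : a.root = c.root := (h1.1 _).1 ((hv _).2 (Or.inl rfl))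
        have h4 : b.root = c.root := (h1.1 _).1 ((hv _).2 (Or.inr rfl))
        exact absurd (h3.trans h4.symm) hne
      | bin u c d =>
        simp only [root] at h2; subst h2
        obtain ⟨hv', hne', hrc, hrd⟩ := h1
        have h3 : c.root = a.root ∨ c.root = b.root := (hv _).1 ((hv' _).2 (Or.inl rfl))
        have h4 : d.root = a.root ∨ d.root = b.root := (hv _).1 ((hv' _).2 (Or.inr rfl))
        rcases h3 with h3 | h3 <;> rcases h4 with h4 | h4
        · exact absurd (h3.trans h4.symm) hne'
        · exact Or.inl ⟨c, (iha hra c).2 ⟨hrc, h3⟩, d, (ihb hrb d).2 ⟨hrd, h4⟩, rfl⟩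
        · exact Or.inr ⟨c, (ihb hrb c).2 ⟨hrc, h3⟩, d, (iha hra d).2 ⟨hrd, h4⟩, rfl⟩
        · exact absurd (h3.trans h4.symm) hne'

theorem card_R {G : SimpleGraph V} {p : Option V} {l : LT V} (h : Rep G p l) :
    (R l).card = 2 ^ l.bins := by
  induction l generalizing p with
  | leaf v => simp [R, bins]
  | un v a ih =>
    rw [R, Finset.card_image_of_injective, ih h.2, bins]
    intro x y h; simpa using h
  | bin v a b iha ihb =>
    have hi : Function.Injective2 (bin v) := by intro a b c d h; simpa using h
    rw [R, Finset.card_union_of_disjoint, Finset.card_image₂ hi, Finset.card_image₂ hi,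
      iha h.2.2.1, ihb h.2.2.2, bins]
    · ring
    · rw [Finset.disjoint_left]
      intro t ht ht'
      simp only [Finset.mem_image₂] at ht ht'
      obtain ⟨x, hx, y, hy, rfl⟩ := ht
      obtain ⟨z, hz, w, hw, h'⟩ := ht'
      obtain ⟨rfl, rfl⟩ := hi h'
      exact h.2.1 ((R_root hx).symm.trans (R_root hz))

theorem R_shape {l l' : LT V} (h : l' ∈ R l) : eqv l'.shape l.shape := by
  induction l generalizing l' with
  | leaf v => simp [R] at h; subst h; exact eqv_refl _
  | un v a ih => 
    simp only [R, Finset.mem_image] at h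
    obtain ⟨x, hx, rfl⟩ := h
    simp only [shape, eqv]; exact ih hx
  | bin v a b iha ihb =>
    simp only [R, Finset.mem_union, Finset.mem_image₂] at h
    rcases h with ⟨x, hx, y, hy, rfl⟩ | ⟨x, hx, y, hy, rfl⟩
    · simp only [shape, eqv]; exact Or.inl ⟨iha hx, ihb hy⟩
    · simp only [shape, eqv]; exact Or.inr ⟨ihb hx, iha hy⟩

theorem R_exists {l : LT V} {t : PT} (h : eqv t l.shape) : ∃ l' ∈ R l, l'.shape = t := by
  induction l generalizing t with
  | leaf v => cases t <;> simp [shape, eqv, R] at h ⊢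
  | un v a ih =>
    cases t <;> simp only [shape, eqv] at h
    obtain ⟨l', h1, h2⟩ := ih h
    exact ⟨un v l', by simp [R, h1], by simp [shape, h2]⟩
  | bin v a b iha ihb =>
    cases t <;> simp only [shape, eqv] at h
    rcases h with h | h
    · obtain ⟨x, h1, h2⟩ := iha h.1
      obtain ⟨y, h3, h4⟩ := ihb h.2
      exact ⟨bin v x y, by simp [R, h1, h3], by simp [shape, h2, h4]⟩
    · obtain ⟨x, h1, h2⟩ := iha h.2
      obtain ⟨y, h3, h4⟩ := ihb h.1
      exact ⟨bin v y x, by simp [R, h1, h3], by simp [shape, h2, h4]⟩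

theorem Rep.map {W : Type} {G : SimpleGraph V} {H : SimpleGraph W} (φ : G ≃g H) {p : Option V} {l : LT V}
    (h : Rep G p l) : Rep H (p.map φ) (l.map φ) := by
  have key : ∀ v : V, ∀ w : W, (H.Adj (φ v) w ∧ some w ≠ p.map φ) ↔
      (G.Adj v (φ.symm w) ∧ some (φ.symm w) ≠ p) := by
    intro v w
    obtain ⟨u, rfl⟩ := φ.surjective w
    rw [φ.map_adj_iff]
    simp only [RelIso.symm_apply_apply]
    cases p <;> simp
  have key2 : ∀ w x, (φ.symm w = x) ↔ w = φ x := by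
    intro w x
    constructor
    · rintro rfl; simp
    · rintro rfl; simp
  induction l generalizing p with
  | leaf v =>
    intro w
    rw [key]; exact h _
  | un v a ih =>
    refine ⟨fun w => ?_, ?_⟩
    · rw [key, h.1, root_map, key2]
    · exact ih (p := some v) h.2 (fun v w => by
        obtain ⟨u, rfl⟩ := φ.surjective w
        rw [φ.map_adj_iff]
        simp)
  | bin v a b iha ihb =>
    refine ⟨fun w => ?_, ?_, ?_, ?_⟩
    · rw [key, h.1, root_map, root_map, key2, key2]
    · rw [root_map, root_map]; exact fun h' => h.2.1 (φ.injective h')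
    · exact iha (p := some v) h.2.2.1 (fun v w => by
        obtain ⟨u, rfl⟩ := φ.surjective w
        rw [φ.map_adj_iff]
        simp)
    · exact ihb (p := some v) h.2.2.2 (fun v w => by
        obtain ⟨u, rfl⟩ := φ.surjective w
        rw [φ.map_adj_iff]
        simp)

end LT
end UB

namespace UB
open PT

theorem parent_unique {V : Type} {G : SimpleGraph V} (hG : G.IsTree) (r : V) {p q v : V}
    (hp : G.Adj p v) (hq : G.Adj q v) (hdp : G.dist r v = G.dist r p + 1)
    (hdq : G.dist r v = G.dist r q + 1) : p = q := by
  obtain ⟨P, hP, hP'⟩ := hG.connected.exists_path_of_dist r v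
  have key : ∀ p, G.Adj p v → G.dist r v = G.dist r p + 1 → p = P.penultimate := by
    intro p hp hd
    apply hG.isAcyclic.eq_penultimate_of_adj_end hP hp.symm
    by_contra hns
    obtain ⟨Q, hQ, hQ'⟩ := hG.connected.exists_path_of_dist r p
    have hv := hG.isAcyclic.mem_support_of_ne_mem_support_of_adj_of_isPath hQ hP hp hns
    have h1 := (Q.takeUntil v hv).length
    have h2 := SimpleGraph.dist_le (Q.takeUntil v hv)
    have h3 := Q.length_takeUntil_le_length hv
    omega
  rw [key p hp hdp, key q hq hdq]

/-- the parent condition -/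
def Par {V : Type} (G : SimpleGraph V) (r : V) (p : Option V) (v : V) : Prop :=
  (p = none ∧ v = r) ∨ ∃ q, p = some q ∧ G.Adj q v ∧ G.dist r v = G.dist r q + 1

theorem Par.step {V : Type} {G : SimpleGraph V} (hG : G.IsTree) {r : V} {p : Option V} {v w : V}
    (h : Par G r p v) (hw : G.Adj v w ∧ some w ≠ p) : G.dist r w = G.dist r v + 1 := by
  rcases hG.dist_eq_dist_add_one_of_adj r hw.1 with h1 | h1
  · exfalso
    rcases h with ⟨rfl, rfl⟩ | ⟨q, rfl, hq, hd⟩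
    · simp at h1
    · have := parent_unique hG r hq hw.1.symm hd h1
      exact hw.2 (by rw [this])
  · exact h1

theorem Par.step' {V : Type} {G : SimpleGraph V} (hG : G.IsTree) {r : V} {p : Option V} {v w : V}
    (h : Par G r p v) (hw : G.Adj v w ∧ some w ≠ p) : Par G r (some v) w :=
  Or.inr ⟨v, rfl, hw.1, h.step hG hw⟩

namespace LT
variable {V : Type}

theorem Rep.parent {G : SimpleGraph V} (hG : G.IsTree) {r : V} {p : Option V} {l : LT V}
    (h : Rep G p l) (hp : Par G r p l.root) {w : V} (hw : w ∈ l.labels) :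
    w = l.root ∨ ∃ u ∈ l.labels, G.Adj u w ∧ G.dist r w = G.dist r u + 1 ∧
      G.dist r l.root ≤ G.dist r u := by
  induction l generalizing p with
  | leaf v => simp [labels] at hw; exact Or.inl hw
  | un v a ih =>
    simp only [labels, List.mem_cons] at hw
    rcases hw with rfl | hw
    · exact Or.inl rfl
    · right
      have hc := (h.1 _).2 rfl
      have hd : G.dist r a.root = G.dist r v + 1 := hp.step hG hc
      rcases ih h.2 (hp.step' hG hc) hw with rfl | ⟨u, hu, h1, h2, h3⟩
      · exact ⟨v, by simp [labels], hc.1, hd, le_rfl⟩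
      · exact ⟨u, by simp [labels, hu], h1, h2, by change G.dist r v ≤ _; omega⟩
  | bin v a b iha ihb =>
    simp only [labels, List.mem_cons, List.mem_append] at hw
    rcases hw with rfl | hw | hw
    · exact Or.inl rfl
    · right
      have hc := (h.1 _).2 (Or.inl rfl)
      have hd : G.dist r a.root = G.dist r v + 1 := hp.step hG hc
      rcases iha h.2.2.1 (hp.step' hG hc) hw with rfl | ⟨u, hu, h1, h2, h3⟩
      · exact ⟨v, by simp [labels], hc.1, hd, le_rfl⟩
      · exact ⟨u, by simp [labels, hu], h1, h2, by change G.dist r v ≤ _; omega⟩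
    · right
      have hc := (h.1 _).2 (Or.inr rfl)
      have hd : G.dist r b.root = G.dist r v + 1 := hp.step hG hc
      rcases ihb h.2.2.2 (hp.step' hG hc) hw with rfl | ⟨u, hu, h1, h2, h3⟩
      · exact ⟨v, by simp [labels], hc.1, hd, le_rfl⟩
      · exact ⟨u, by simp [labels, hu], h1, h2, by change G.dist r v ≤ _; omega⟩

theorem Rep.disj {G : SimpleGraph V} (hG : G.IsTree) {r : V} {p q : Option V} {a b : LT V}
    (ha : Rep G p a) (hb : Rep G q b) (hpa : Par G r p a.root) (hpb : Par G r q b.root)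
    (hd : G.dist r a.root = G.dist r b.root) (d : ℕ) :
    ∀ w, G.dist r w = d → w ∈ a.labels → w ∈ b.labels → a.root = b.root := by
  induction d using Nat.strong_induction_on with
  | _ d ih =>
    intro w hw h1 h2
    rcases ha.parent hG hpa h1 with h3 | ⟨u, hu, h3, h4, h5⟩
    · rcases hb.parent hG hpb h2 with h3' | ⟨u', hu', h3', h4', h5'⟩
      · rw [← h3, ← h3']
      · rw [h3] at h4'; omega
    · rcases hb.parent hG hpb h2 with h3' | ⟨u', hu', h3', h4', h5'⟩
      · rw [h3'] at h4; omega
      · have := parent_unique hG r h3 h3' h4 h4'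
        subst this
        exact ih (G.dist r u) (by omega) u rfl hu hu'

theorem Rep.nodup {G : SimpleGraph V} (hG : G.IsTree) {r : V} {p : Option V} {l : LT V}
    (h : Rep G p l) (hp : Par G r p l.root) : l.labels.Nodup := by
  have hlow : ∀ {q : Option V} {a : LT V}, Rep G q a → Par G r q a.root → ∀ w ∈ a.labels,
      G.dist r a.root ≤ G.dist r w := by
    intro q a hqa hpa w hw
    rcases hqa.parent hG hpa hw with rfl | ⟨u, _, _, h1, h2⟩
    · rfl
    · omega
  induction l generalizing p with
  | leaf v => simp [labels]
  | un v a ih =>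
    have hc := (h.1 _).2 rfl
    have hd : G.dist r a.root = G.dist r v + 1 := hp.step hG hc
    have hp' := hp.step' hG hc
    simp only [labels, List.nodup_cons]
    refine ⟨fun hv => ?_, ih h.2 hp'⟩
    have := hlow h.2 hp' v hv
    omega
  | bin v a b iha ihb =>
    have hc := (h.1 _).2 (Or.inl rfl)
    have hd : G.dist r a.root = G.dist r v + 1 := hp.step hG hc
    have hp' := hp.step' hG hc
    have hc2 := (h.1 _).2 (Or.inr rfl)
    have hd2 : G.dist r b.root = G.dist r v + 1 := hp.step hG hc2
    have hp2' := hp.step' hG hc2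
    simp only [labels, List.nodup_cons, List.mem_append, List.nodup_append']
    refine ⟨?_, iha h.2.2.1 hp', ihb h.2.2.2 hp2', ?_⟩
    · rintro (hv | hv)
      · have := hlow h.2.2.1 hp' v hv
        omega
      · have := hlow h.2.2.2 hp2' v hv
        omega
    · intro w h1 h2
      exact h.2.1 (Rep.disj hG h.2.2.1 h.2.2.2 hp' hp2' (by omega) _ w rfl h1 h2)

theorem Rep.complete {G : SimpleGraph V} (hG : G.Connected) {l : LT V}
    (h : Rep G none l) (w : V) : w ∈ l.labels := by
  have W := (hG l.root w).some
  suffices ∀ u, ∀ _ : G.Walk u w, u ∈ l.labels → w ∈ l.labels from this _ W (root_mem l)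
  clear W
  intro u W
  induction W with
  | nil => exact id
  | cons ha _ ih =>
    intro hu
    apply ih
    rcases h.adj_edges hu ha with h1 | h1
    · exact edges_mem' h1
    · simp at h1

theorem outdeg_eq {n : ℕ} (T : RTree n) {p : Option (Fin n)} {v : Fin n}
    (hp : Par T.graph T.root p v) :
    T.outdeg v = {w | T.graph.Adj v w ∧ some w ≠ p}.ncard := by
  unfold RTree.outdeg
  rcases hp with ⟨rfl, rfl⟩ | ⟨q, rfl, hq, hd⟩
  · rw [if_pos rfl]; congr 1; ext w; simp
  · rw [if_neg]
    · have : {w | T.graph.Adj v w ∧ some w ≠ some q} = T.graph.neighborSet v \ {q} := by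
        ext w; simp
      rw [this, Set.ncard_sdiff_singleton_of_mem]
      exact hq.symm
    · rintro rfl; simp at hd

theorem exists_rep {n : ℕ} (T : RTree n) (hT : ∀ v, T.outdeg v ≤ 2) :
    ∃ l : LT (Fin n), l.root = T.root ∧ Rep T.graph none l := by
  obtain ⟨N, hN⟩ : ∃ N, ∀ v, T.graph.dist T.root v ≤ N := by
    obtain ⟨N, hN⟩ := (Set.finite_range (fun v => T.graph.dist T.root v)).bddAbove
    exact ⟨N, fun v => hN ⟨v, rfl⟩⟩
  have key : ∀ k : ℕ, ∀ (p : Option (Fin n)) (v : Fin n), Par T.graph T.root p v →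
      N + 1 ≤ T.graph.dist T.root v + k → ∃ l : LT (Fin n), l.root = v ∧ Rep T.graph p l := by
    intro k
    induction k with
    | zero => intro p v _ h; have := hN v; omega
    | succ k ih =>
      intro p v hp hk
      have h2 := hT v
      rw [outdeg_eq T hp] at h2
      have hch : ∀ w, (T.graph.Adj v w ∧ some w ≠ p) →
          ∃ l : LT (Fin n), l.root = w ∧ Rep T.graph (some v) l := by
        intro w hw
        apply ih _ _ (hp.step' T.isTree hw)
        rw [hp.step T.isTree hw]; omega
      set C := {w | T.graph.Adj v w ∧ some w ≠ p} with hC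
      have hfin : C.Finite := Set.toFinite _
      rcases (show C.ncard = 0 ∨ C.ncard = 1 ∨ C.ncard = 2 by omega) with h | h | h
      · rw [Set.ncard_eq_zero hfin] at h
        refine ⟨leaf v, rfl, fun w hw => ?_⟩
        have : w ∈ C := hw
        simp [h] at this
      · rw [Set.ncard_eq_one] at h
        obtain ⟨c, hc⟩ := h
        have hm : ∀ w, (T.graph.Adj v w ∧ some w ≠ p) ↔ w = c := by
          intro w
          have : w ∈ C ↔ w = c := by simp [hc]
          exact this
        obtain ⟨l, hl, hl'⟩ := hch c ((hm c).2 rfl)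
        exact ⟨un v l, rfl, by rw [hl]; exact hm, hl'⟩
      · rw [Set.ncard_eq_two] at h
        obtain ⟨c, d, hcd, hc⟩ := h
        have hm : ∀ w, (T.graph.Adj v w ∧ some w ≠ p) ↔ (w = c ∨ w = d) := by
          intro w
          have : w ∈ C ↔ (w = c ∨ w = d) := by simp [hc]
          exact this
        obtain ⟨l, hl, hl'⟩ := hch c ((hm c).2 (Or.inl rfl))
        obtain ⟨m, hm1, hm'⟩ := hch d ((hm d).2 (Or.inr rfl))
        exact ⟨bin v l m, rfl, by rw [hl, hm1]; exact hm, by rw [hl, hm1]; exact hcd, hl', hm'⟩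
  exact key (N + 1) none T.root (Or.inl ⟨rfl, rfl⟩) (by omega)

theorem Rep.outdeg {n : ℕ} (T : RTree n) {p : Option (Fin n)} {l : LT (Fin n)}
    (h : Rep T.graph p l) (hp : Par T.graph T.root p l.root) :
    (∀ v ∈ l.labels, T.outdeg v ≤ 2) ∧ l.labels.countP (fun v => T.outdeg v = 2) = l.bins := by
  induction l generalizing p with
  | leaf v =>
    have ho : T.outdeg v = 0 := by
      rw [outdeg_eq T (v := v) hp]
      rw [Set.ncard_eq_zero (Set.toFinite _)]
      ext w; simpa using h w
    simp [labels, bins, ho]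
  | un v a ih =>
    have hp' := hp.step' T.isTree ((h.1 _).2 rfl)
    have ho : T.outdeg v = 1 := by
      rw [outdeg_eq T (v := v) hp]
      rw [Set.ncard_eq_one]
      exact ⟨a.root, by ext w; simpa using h.1 w⟩
    have := ih h.2 hp'
    refine ⟨?_, ?_⟩
    · simp only [labels, List.mem_cons, forall_eq_or_imp]
      exact ⟨by omega, this.1⟩
    · rw [labels, List.countP_cons, this.2]; simp [bins, ho]
  | bin v a b iha ihb =>
    have hp' := hp.step' T.isTree ((h.1 _).2 (Or.inl rfl))
    have hp2' := hp.step' T.isTree ((h.1 _).2 (Or.inr rfl))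
    have ho : T.outdeg v = 2 := by
      rw [outdeg_eq T (v := v) hp]
      rw [Set.ncard_eq_two]
      exact ⟨a.root, b.root, h.2.1, by ext w; simpa using h.1 w⟩
    have h1 := iha h.2.2.1 hp'
    have h2 := ihb h.2.2.2 hp2'
    refine ⟨?_, ?_⟩
    · simp only [labels, List.mem_cons, forall_eq_or_imp, List.mem_append]
      refine ⟨by omega, ?_⟩
      rintro x (hx | hx)
      · exact h1.1 x hx
      · exact h2.1 x hx
    · rw [labels, List.countP_cons, List.countP_append, h1.2, h2.2]; simp [bins, ho]

theorem Rep.weight {n : ℕ} (T : UBTree n) {l : LT (Fin n)}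
    (h : Rep T.1.graph none l) (hr : l.root = T.1.root) : ubWeight T = 2 ^ l.bins := by
  have hp : Par T.1.graph T.1.root none l.root := Or.inl ⟨rfl, hr⟩
  have h1 := (Rep.outdeg T.1 h hp).2
  have hn := h.nodup T.1.isTree hp
  have hc := h.complete T.1.isTree.connected
  unfold ubWeight
  congr 1
  rw [← h1, List.countP_eq_length_filter, ← List.toFinset_card_of_nodup (hn.filter _)]
  congr 1
  ext v
  simp [hc v]

end LT

/-- fully labelled plane trees -/
abbrev Bn (n : ℕ) : Type := {l : LT (Fin n) // l.labels.Nodup ∧ ∀ v, v ∈ l.labels}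

/-- full label lists -/
abbrev Ln (n : ℕ) : Type := {xs : List (Fin n) // xs.Nodup ∧ ∀ v, v ∈ xs}

theorem Ln_length {n : ℕ} (xs : Ln n) : xs.1.length = n := by
  rw [← List.toFinset_card_of_nodup xs.2.1]
  have : xs.1.toFinset = Finset.univ := by ext v; simp [xs.2.2 v]
  rw [this]; simp

noncomputable def bnEquiv (n : ℕ) : Bn n ≃ {t // t ∈ trees n} × Ln n :=
  Equiv.ofBijective (fun l => (⟨l.1.shape, by
    rw [mem_trees, ← LT.labels_length]; exact Ln_length ⟨l.1.labels, l.2⟩⟩, ⟨l.1.labels, l.2⟩)) (by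
    constructor
    · intro l l' h
      simp only [Prod.mk.injEq, Subtype.mk.injEq] at h
      exact Subtype.ext (LT.ext_shape h.1 h.2)
    · rintro ⟨⟨t, ht⟩, xs⟩
      obtain ⟨l, h1, h2⟩ := LT.exists_fill t xs.1 (by rw [Ln_length, mem_trees.1 ht])
      refine ⟨⟨l, by rw [h2]; exact xs.2⟩, ?_⟩
      simp only [Prod.mk.injEq, Subtype.mk.injEq]
      exact ⟨h1, Subtype.ext h2⟩)

instance (n : ℕ) : Finite (Ln n) := by
  have : Function.Injective (β := List.Vector (Fin n) n) (fun xs : Ln n => ⟨xs.1, Ln_length xs⟩) := by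
    intro x y h
    exact Subtype.ext (congrArg List.Vector.toList h)
  exact Finite.of_injective (β := List.Vector (Fin n) n) _ this

instance (n : ℕ) : Finite (Bn n) := Finite.of_equiv _ (bnEquiv n).symm
noncomputable instance (n : ℕ) : Fintype (Ln n) := Fintype.ofFinite _
noncomputable instance (n : ℕ) : Fintype (Bn n) := Fintype.ofFinite _

instance (n : ℕ) : Nonempty (Ln n) := ⟨⟨List.finRange n, List.nodup_finRange n, List.mem_finRange⟩⟩

theorem sum_Bn (n : ℕ) (f : PT → ℝ) :
    ∑ l : Bn n, f l.1.shape = (Fintype.card (Ln n) : ℝ) * ∑ t ∈ trees n, f t := by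
  rw [← Finset.sum_coe_sort (trees n), Finset.mul_sum]
  rw [Fintype.sum_equiv (bnEquiv n) (fun l => f l.1.shape) (fun q => f q.1.1) (fun l => rfl)]
  rw [Fintype.sum_prod_type]
  simp

/-- the tree of a labelled plane tree -/
noncomputable def tau {n : ℕ} (l : Bn n) : UBTree n :=
  ⟨⟨l.1.toGraph, LT.isTree_toGraph l.2.1 l.2.2, l.1.root⟩, fun v =>
    (LT.Rep.outdeg ⟨l.1.toGraph, LT.isTree_toGraph l.2.1 l.2.2, l.1.root⟩
      (LT.rep_toGraph l.2.1) (Or.inl ⟨rfl, rfl⟩)).1 v (l.2.2 v)⟩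

theorem tau_eq_iff {n : ℕ} (l : Bn n) (T : UBTree n) :
    tau l = T ↔ LT.Rep T.1.graph none l.1 ∧ l.1.root = T.1.root := by
  constructor
  · rintro rfl
    exact ⟨LT.rep_toGraph l.2.1, rfl⟩
  · rintro ⟨h1, h2⟩
    have hg : l.1.toGraph = T.1.graph := by
      ext u w
      rw [LT.toGraph_adj l.2.1, h1.adj_iff l.2.2]
    obtain ⟨⟨G, hG, r⟩, hT⟩ := T
    subst hg
    subst h2
    rfl

theorem card_fiber {n : ℕ} (T : UBTree n) :
    ((Finset.univ.filter (fun l : Bn n => tau l = T)).card : ℝ) = ubWeight T := by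
  obtain ⟨l, hr, hl⟩ := LT.exists_rep T.1 T.2
  rw [hl.weight T hr]
  have : (Finset.univ.filter (fun l : Bn n => tau l = T)).card = (LT.R l).card := by
    apply Finset.card_bij (fun l' _ => l'.1)
    · intro l' h
      simp only [Finset.mem_filter, Finset.mem_univ, true_and, tau_eq_iff] at h
      rw [LT.mem_R hl, hr]; exact h
    · intro a _ b _ h; exact Subtype.ext h
    · intro l' h
      rw [LT.mem_R hl, hr] at h
      have hn := h.1.nodup T.1.isTree (r := T.1.root) (Or.inl ⟨rfl, h.2⟩)
      have hc := h.1.complete T.1.isTree.connected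
      refine ⟨⟨l', hn, hc⟩, ?_, rfl⟩
      simp only [Finset.mem_filter, Finset.mem_univ, true_and, tau_eq_iff]
      exact h
  rw [this, LT.card_R hl]
  norm_cast

theorem isom_iff {n : ℕ} (l l' : Bn n) :
    (tau l).1.Isom (tau l').1 ↔ eqv l.1.shape l'.1.shape := by
  have hl' := (tau_eq_iff l' _).1 rfl
  have hl := (tau_eq_iff l _).1 rfl
  constructor
  · rintro ⟨φ, hφ⟩
    have h1 := hl.1.map φ
    have h2 : l.1.map φ ∈ LT.R l'.1 := by
      rw [LT.mem_R hl'.1]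
      refine ⟨h1, ?_⟩
      rw [LT.root_map]
      exact hφ
    have := LT.R_shape h2
    rwa [LT.shape_map] at this
  · intro h
    obtain ⟨m, hm, hs⟩ := LT.R_exists h
    rw [LT.mem_R hl'.1] at hm
    have hn := hm.1.nodup (tau l').1.isTree (r := l'.1.root) (Or.inl ⟨rfl, hm.2⟩)
    have hc := hm.1.complete (tau l').1.isTree.connected
    -- build the permutation
    have hlen : l.1.labels.length = n := Ln_length ⟨_, l.2⟩
    have hlen' : m.labels.length = n := Ln_length ⟨_, hn, hc⟩
    let e1 : Fin l.1.labels.length ≃ Fin n := l.2.1.getEquivOfForallMemList _ l.2.2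
    let e2 : Fin m.labels.length ≃ Fin n := hn.getEquivOfForallMemList _ hc
    let σ : Fin n ≃ Fin n := (e1.symm.trans (finCongr (hlen.trans hlen'.symm))).trans e2
    have hmap : l.1.map σ = m := by
      apply LT.ext_shape
      · rw [LT.shape_map, hs]
      · rw [LT.labels_map]
        apply List.ext_getElem
        · simp [hlen, hlen']
        · intro i h1 h2
          rw [List.getElem_map]
          have hi : i < l.1.labels.length := by simpa using h1
          have : l.1.labels[i] = e1 ⟨i, hi⟩ := rfl
          rw [this]
          simp only [σ, Equiv.trans_apply, Equiv.symm_apply_apply]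
          rfl
    refine ⟨⟨σ, ?_⟩, ?_⟩
    · intro u w
      rw [hm.1.adj_iff hc, hl.1.adj_iff l.2.2, ← hmap, LT.edges_map]
      have : s(σ u, σ w) = Sym2.map σ s(u, w) := rfl
      rw [this, List.mem_map_of_injective (Sym2.map.injective σ.injective)]
    · show σ l.1.root = l'.1.root
      rw [← LT.root_map σ l.1, hmap, hm.2]

theorem sum_tau {n : ℕ} (f : UBTree n → ℝ) :
    ∑ T : UBTree n, ubWeight T * f T = ∑ l : Bn n, f (tau l) := by
  rw [← Finset.sum_fiberwise_of_maps_to (g := tau) (t := Finset.univ) (fun _ _ => Finset.mem_univ _)]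
  refine Finset.sum_congr rfl fun T _ => ?_
  rw [← card_fiber, ← nsmul_eq_mul, ← Finset.sum_const]
  refine Finset.sum_congr rfl fun l hl => ?_
  simp only [Finset.mem_filter, Finset.mem_univ, true_and] at hl
  rw [hl]

theorem sum_weight (n : ℕ) :
    ∑ T : UBTree n, ubWeight T = (Fintype.card (Ln n) : ℝ) * M n := by
  have h := sum_Bn n (fun _ => 1)
  have h2 := sum_tau (n := n) (fun _ => 1)
  simp only [mul_one] at h2
  rw [h2, h]
  simp [M]

theorem sum_pairs (n : ℕ) :
    (∑ p : UBTree n × UBTree n,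
      if p.1.1.Isom p.2.1 then ubWeight p.1 * ubWeight p.2 else 0) =
      (Fintype.card (Ln n) : ℝ) ^ 2 * S n := by
  rw [Fintype.sum_prod_type]
  have h1 : ∀ x y : UBTree n, (if x.1.Isom y.1 then ubWeight x * ubWeight y else 0) =
      ubWeight x * (ubWeight y * if x.1.Isom y.1 then 1 else 0) := by
    intro x y; split_ifs <;> ring
  simp_rw [h1, ← Finset.mul_sum]
  rw [sum_tau (fun x => ∑ y, ubWeight y * if x.1.Isom y.1 then 1 else 0)]
  have h2 : ∀ l : Bn n, (∑ y, ubWeight y * if (tau l).1.Isom y.1 then (1:ℝ) else 0) =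
      (Fintype.card (Ln n) : ℝ) * ∑ t ∈ trees n, if eqv l.1.shape t then 1 else 0 := by
    intro l
    rw [sum_tau (fun y => if (tau l).1.Isom y.1 then (1:ℝ) else 0)]
    simp_rw [isom_iff]
    exact sum_Bn n (fun t => if eqv l.1.shape t then (1:ℝ) else 0)
  simp_rw [h2, ← Finset.mul_sum]
  rw [sum_Bn n (fun s => ∑ t ∈ trees n, if eqv s t then (1:ℝ) else 0), S_eq]
  ring

theorem prob_eq (n : ℕ) : probIsomUB n = S n / M n ^ 2 := by
  rw [probIsomUB, sum_pairs, sum_weight, mul_pow, mul_div_mul_left]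
  have : 0 < Fintype.card (Ln n) := Fintype.card_pos
  positivity

end UB

namespace UB
noncomputable section
open PowerSeries Filter Topology

def HS (f : PowerSeries ℂ) (z v : ℂ) : Prop := HasSum (fun n => coeff n f * z ^ n) v

theorem hasSum_congr_aux {f g : ℕ → ℂ} {v : ℂ} (h : HasSum g v) (e : ∀ n, f n = g n) :
    HasSum f v := by
  have : f = g := funext e
  rw [this]; exact h

theorem HS.add {f g : PowerSeries ℂ} {z v w : ℂ} (hf : HS f z v) (hg : HS g z w) :
    HS (f + g) z (v + w) := by
  unfold HS at *
  simpa [add_mul] using HasSum.add hf hg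

theorem HS.sub {f g : PowerSeries ℂ} {z v w : ℂ} (hf : HS f z v) (hg : HS g z w) :
    HS (f - g) z (v - w) := by
  unfold HS at *
  simpa [sub_mul] using HasSum.sub hf hg

theorem HS.mul {f g : PowerSeries ℂ} {z v w : ℂ} (hf : HS f z v) (hg : HS g z w) :
    HS (f * g) z (v * w) := by
  unfold HS at *
  have nf := hf.summable.norm
  have ng := hg.summable.norm
  have h1 := tsum_mul_tsum_eq_tsum_sum_antidiagonal_of_summable_norm nf ng
  have h2 := (summable_norm_sum_mul_antidiagonal_of_summable_norm nf ng).of_norm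
  rw [hf.tsum_eq, hg.tsum_eq] at h1
  have h3 := h2.hasSum
  rw [← h1] at h3
  refine hasSum_congr_aux h3 ?_
  intro n
  rw [coeff_mul, Finset.sum_mul]
  apply Finset.sum_congr rfl
  intro p hp
  rw [Finset.HasAntidiagonal.mem_antidiagonal] at hp
  rw [← hp, pow_add]; ring

theorem HS.C (a z : ℂ) : HS (PowerSeries.C a) z a := by
  unfold HS
  convert hasSum_single (f := fun n => coeff n (PowerSeries.C a) * z ^ n) 0 ?_ using 1
  · simp
  · intro n hn; simp [coeff_C, hn]

theorem HS.X (z : ℂ) : HS (PowerSeries.X) z z := by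
  unfold HS
  convert hasSum_single (f := fun n => coeff n (PowerSeries.X) * z ^ n) 1 ?_ using 1
  · simp
  · intro n hn; simp [coeff_X, hn]

theorem HS.one (z : ℂ) : HS 1 z 1 := by
  simpa using HS.C 1 z

theorem HS.uniq {f g : PowerSeries ℂ} {F : ℂ → ℂ} {r : ℝ} (hr : 0 < r)
    (hf : ∀ z, ‖z‖ < r → HS f z (F z)) (hg : ∀ z, ‖z‖ < r → HS g z (F z)) : f = g := by
  have key : ∀ h : PowerSeries ℂ, (∀ z, ‖z‖ < r → HS h z (F z)) →
      HasFPowerSeriesAt F (FormalMultilinearSeries.ofScalars ℂ (fun n => coeff n h)) 0 := by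
    intro h hh
    rw [hasFPowerSeriesAt_iff]
    have : ∀ᶠ z : ℂ in 𝓝 0, ‖z‖ < r := by
      have := Metric.ball_mem_nhds (0:ℂ) hr
      filter_upwards [this] with z hz
      simpa using hz
    filter_upwards [this] with z hz
    have := hh z hz
    unfold HS at this
    simpa [FormalMultilinearSeries.coeff_ofScalars, mul_comm] using this
  have e := (key f hf).eq_formalMultilinearSeries (key g hg)
  ext n
  have := congrArg (fun p => FormalMultilinearSeries.coeff p n) e
  simpa [FormalMultilinearSeries.coeff_ofScalars] using this

theorem exists_taylor {F : ℂ → ℂ} {R : ℝ} (hF : DifferentiableOn ℂ F (Metric.ball 0 R)) :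
    ∃ f : PowerSeries ℂ, ∀ z, ‖z‖ < R → HS f z (F z) := by
  refine ⟨PowerSeries.mk fun n => (n.factorial : ℂ)⁻¹ * iteratedDeriv n F 0, ?_⟩
  intro z hz
  have := Complex.hasSum_taylorSeries_on_ball hF (z := z) (by simpa using hz)
  unfold HS
  refine hasSum_congr_aux this ?_
  intro n
  simp; ring

theorem exists_sqrt {f : ℂ → ℂ} {R : ℝ} (hR : 0 < R) (hf : DifferentiableOn ℂ f (Metric.ball 0 R))
    (hne : ∀ z ∈ Metric.ball (0:ℂ) R, f z ≠ 0) (h0 : f 0 = 1) :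
    ∃ Q : ℂ → ℂ, DifferentiableOn ℂ Q (Metric.ball 0 R) ∧
      (∀ z ∈ Metric.ball (0:ℂ) R, Q z ^ 2 = f z) ∧ Q 0 = 1 := by
  have hop : IsOpen (Metric.ball (0:ℂ) R) := Metric.isOpen_ball
  have hd : DifferentiableOn ℂ (fun z => deriv f z / f z) (Metric.ball 0 R) :=
    (hf.deriv hop).div hf hne
  obtain ⟨g, hg⟩ := hd.isExactOn_ball
  have m0 : (0:ℂ) ∈ Metric.ball (0:ℂ) R := by simpa using hR
  have hfd : ∀ z ∈ Metric.ball (0:ℂ) R, HasDerivAt f (deriv f z) z := fun z hz =>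
    (hf.differentiableAt (hop.mem_nhds hz)).hasDerivAt
  have hh : ∀ z ∈ Metric.ball (0:ℂ) R,
      HasDerivAt (fun z => f z * Complex.exp (-(g z - g 0))) 0 z := by
    intro z hz
    have h1 := ((hg z hz).sub_const (g 0)).neg.cexp
    have h2 := (hfd z hz).mul h1
    refine h2.congr_deriv ?_
    field_simp [hne z hz]
    simp
  have hc := fun z (hz : z ∈ Metric.ball (0:ℂ) R) => hop.is_const_of_deriv_eq_zero (convex_ball (0:ℂ) R).isPreconnected
    (fun z hz => (hh z hz).differentiableAt.differentiableWithinAt) (fun z hz => (hh z hz).deriv) hz m0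
  refine ⟨fun z => Complex.exp ((g z - g 0)/2), ?_, ?_, by simp⟩
  · intro z hz
    exact (((hg z hz).sub_const (g 0)).div_const 2).cexp.differentiableAt.differentiableWithinAt
  · intro z hz
    have h := hc z hz
    simp only [sub_self, neg_zero, Complex.exp_zero, mul_one, h0] at h
    rw [← Complex.exp_nat_mul]
    have : ((2:ℕ):ℂ) * ((g z - g 0)/2) = g z - g 0 := by push_cast; ring
    rw [this]
    rw [Complex.exp_neg] at h
    have := Complex.exp_ne_zero (g z - g 0)
    field_simp at h
    exact h.symm

theorem exists_bigger_ball {f : ℂ → ℂ} {R ρ : ℝ} (hρ : 0 < ρ) (hR : ρ < R)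
    (hf : DifferentiableOn ℂ f (Metric.ball 0 R))
    (hne : ∀ z, ‖z‖ ≤ ρ → f z ≠ 0) :
    ∃ R', ρ < R' ∧ R' ≤ R ∧ ∀ z ∈ Metric.ball (0:ℂ) R', f z ≠ 0 := by
  have hU : IsOpen (Metric.ball (0:ℂ) R ∩ f ⁻¹' {0}ᶜ) :=
    hf.continuousOn.isOpen_inter_preimage Metric.isOpen_ball isOpen_compl_singleton
  obtain ⟨ε, hε, hs⟩ := (isCompact_closedBall (0:ℂ) ρ).exists_thickening_subset_open hU (by
    intro z hz
    have hz' : ‖z‖ ≤ ρ := by simpa using hz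
    exact ⟨by simpa using lt_of_le_of_lt hz' hR, hne z hz'⟩)
  rw [thickening_closedBall hε hρ.le] at hs
  refine ⟨min (ε + ρ) R, lt_min (by linarith) hR, min_le_right _ _, ?_⟩
  intro z hz
  exact (hs (Metric.ball_subset_ball (min_le_left _ _) hz)).2

theorem eq_of_sq_eq {f g : PowerSeries ℂ} (h : f ^ 2 = g ^ 2) (hf : constantCoeff f = 1)
    (hg : constantCoeff g = 1) : f = g := by
  rcases sq_eq_sq_iff_eq_or_eq_neg.mp h with h | h
  · exact h
  · exfalso
    have := congrArg constantCoeff h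
    rw [map_neg, hf, hg] at this
    norm_num at this

end
end UB

namespace UB
noncomputable section
open PowerSeries Filter Topology

theorem tendsto_centralBinom :
    Tendsto (fun n : ℕ => (n.centralBinom : ℝ) * √n / 4 ^ n) atTop (𝓝 (1 / √Real.pi)) := by
  have h := Stirling.tendsto_stirlingSeq_sqrt_pi
  have h2 : Tendsto (fun n : ℕ => 2 * n) atTop atTop := by
    apply tendsto_atTop_mono (fun n => by omega : ∀ n, n ≤ 2 * n) tendsto_id
  have hp : √Real.pi ≠ 0 := by positivity
  have h3 := (h.comp h2).div (h.pow 2) (pow_ne_zero 2 hp)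
  have e : √Real.pi / √Real.pi ^ 2 = 1 / √Real.pi := by field_simp
  rw [e] at h3
  refine h3.congr' ?_
  filter_upwards [eventually_gt_atTop 0] with n hn
  have hn' : (0:ℝ) < n := by exact_mod_cast hn
  simp only [Function.comp, Pi.div_apply, Stirling.stirlingSeq]
  have hcb : (n.centralBinom : ℝ) = (2 * n).factorial / (n.factorial : ℝ)^2 := by
    have := Nat.centralBinom_eq_two_mul_choose n
    rw [this, Nat.cast_choose ℝ (by omega)]
    have : 2 * n - n = n := by omega
    rw [this]; ring
  rw [hcb]
  have hf : (n.factorial : ℝ) ≠ 0 := by positivity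
  have s1 : √(2 * ((2 * n : ℕ):ℝ)) = 2 * √n := by
    push_cast
    rw [show (2 * (2 * (n:ℝ))) = 2^2 * n by ring, Real.sqrt_mul (by norm_num), Real.sqrt_sq (by norm_num)]
  have s2 : √(2 * (n:ℝ)) ^ 2 = 2 * n := Real.sq_sqrt (by positivity)
  have s3 : √(n:ℝ) ^ 2 = n := Real.sq_sqrt (by positivity)
  rw [s1]
  have hsn : √(n:ℝ) ≠ 0 := by positivity
  have he : Real.exp 1 ≠ 0 := Real.exp_ne_zero _
  have p1 : (((2 * n : ℕ):ℝ) / Real.exp 1) ^ (2 * n) = 4 ^ n * (((n:ℝ)/Real.exp 1)^n)^2 := by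
    push_cast
    rw [← pow_mul, mul_comm n 2, show (4:ℝ) = 2^2 by norm_num, ← pow_mul, ← mul_pow]
    congr 1; ring
  rw [p1]
  have hx : ((n:ℝ)/Real.exp 1)^n ≠ 0 := by positivity
  generalize ((n:ℝ)/Real.exp 1)^n = x at *
  rw [div_pow, mul_pow, s2]
  field_simp
  rw [s3]

def bser : PowerSeries ℂ := 1 - PowerSeries.C 2 * X * (catalanSeries.map (Nat.castRingHom ℂ))

theorem bser_sq : bser ^ 2 = 1 - PowerSeries.C 4 * X := by
  have h := congrArg (PowerSeries.map (Nat.castRingHom ℂ)) catalanSeries_sq_mul_X_add_one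
  simp only [map_add, map_mul, map_pow, map_X, map_one] at h
  unfold bser
  have h4 : (PowerSeries.C 4 : PowerSeries ℂ) = PowerSeries.C 2 * PowerSeries.C 2 := by
    rw [← map_mul]; norm_num
  have h5 : (PowerSeries.C 2 : PowerSeries ℂ) = 2 := map_ofNat _ 2
  rw [h4, h5]
  linear_combination (4 * X) * h

theorem bser_const : constantCoeff bser = 1 := by
  simp [bser]

theorem bser_succ (n : ℕ) : coeff (n+1) bser = -2 * (catalan n : ℂ) := by
  unfold bser
  rw [mul_assoc, map_sub, coeff_C_mul, coeff_succ_X_mul]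
  simp [coeff_one]

/-- normalized coefficients -/
def beta (n : ℕ) : ℂ := coeff n bser / 4 ^ n

theorem tendsto_beta : Tendsto (fun n : ℕ => beta n * (((n:ℝ) ^ (3/2 : ℝ) : ℝ) : ℂ)) atTop
    (𝓝 ((-(1 / (2 * √Real.pi)) : ℝ) : ℂ)) := by
  rw [← tendsto_add_atTop_iff_nat 1]
  have h1 := tendsto_centralBinom
  have h2 : Tendsto (fun n : ℕ => √(1 + 1 / (n:ℝ))) atTop (𝓝 (√(1 + 0))) :=
    (Real.continuous_sqrt.tendsto _).comp (tendsto_const_nhds.add tendsto_one_div_atTop_nhds_zero_nat)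
  have h3 := (h1.mul h2).const_mul (-(1/2))
  have h4 := (Complex.continuous_ofReal.tendsto _).comp h3
  have e : -(1/2) * (1 / √Real.pi * √(1+0)) = -(1 / (2 * √Real.pi)) := by
    simp; ring
  rw [e] at h4
  refine h4.congr' ?_
  filter_upwards [eventually_gt_atTop 0] with n hn
  have hn' : (0:ℝ) < n := by exact_mod_cast hn
  unfold beta
  rw [bser_succ]
  have hc : ((n:ℝ) + 1) * (catalan n : ℝ) = n.centralBinom := by
    exact_mod_cast succ_mul_catalan_eq_centralBinom n
  simp only [Function.comp]
  have : (-2 * (catalan n : ℂ) / 4^(n+1)) = ((-2 * (catalan n : ℝ) / 4^(n+1) : ℝ) : ℂ) := by push_cast; ring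
  rw [this, ← Complex.ofReal_mul]
  congr 1
  have hr : ((n+1 : ℕ):ℝ) ^ (3/2:ℝ) = (n+1) * √(n+1) := by
    push_cast
    rw [show (3/2:ℝ) = 1 + 1/2 by norm_num, Real.rpow_add (by positivity), Real.rpow_one, Real.sqrt_eq_rpow]
  have hs : √(n:ℝ) * √(1 + 1/(n:ℝ)) = √(n+1) := by
    rw [← Real.sqrt_mul hn'.le]; congr 1; field_simp
  rw [hr, ← hc, ← hs]
  rw [pow_succ]
  field_simp
  ring

theorem beta_bound : ∃ B : ℝ, 0 ≤ B ∧ ∀ n, ‖beta n‖ * ((n:ℝ)+1) ^ (3/2 : ℝ) ≤ B := by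
  have h := tendsto_beta.norm
  have h2 : Tendsto (fun n : ℕ => (1 + 1 / (n:ℝ)) ^ (3/2:ℝ)) atTop (𝓝 ((1 + 0) ^ (3/2:ℝ))) :=
    (tendsto_const_nhds.add tendsto_one_div_atTop_nhds_zero_nat).rpow_const (by norm_num)
  have h3 : Tendsto (fun n : ℕ => ‖beta n‖ * ((n:ℝ)+1) ^ (3/2 : ℝ)) atTop
      (𝓝 (‖((-(1 / (2 * √Real.pi)) : ℝ) : ℂ)‖ * ((1 + 0) ^ (3/2:ℝ)))) := by
    refine (h.mul h2).congr' ?_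
    filter_upwards [eventually_gt_atTop 0] with n hn
    have hn' : (0:ℝ) < n := by exact_mod_cast hn
    rw [norm_mul, Complex.norm_real, Real.norm_of_nonneg (by positivity), mul_assoc,
      ← Real.mul_rpow (by positivity) (by positivity)]
    congr 2; field_simp
  obtain ⟨B, hB⟩ := h3.bddAbove_range
  refine ⟨max B 0, le_max_right _ _, fun n => le_trans (hB ⟨n, rfl⟩) (le_max_left _ _)⟩

theorem conv_asymp {η : ℕ → ℂ} {s : ℝ} (hs : 1 < s) (hη : Summable fun n => ‖η n‖ * s ^ n) :
    Tendsto (fun n : ℕ => (((n:ℝ) ^ (3/2 : ℝ) : ℝ) : ℂ) *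
        ∑ p ∈ Finset.HasAntidiagonal.antidiagonal n, η p.1 * beta p.2) atTop
      (𝓝 (((-(1 / (2 * √Real.pi)) : ℝ) : ℂ) * ∑' n, η n)) := by
  obtain ⟨B, hB0, hB⟩ := beta_bound
  set c : ℂ := ((-(1 / (2 * √Real.pi)) : ℝ) : ℂ) with hc
  -- dominating sequence
  have hgeo : Summable fun j : ℕ => (((j:ℝ)+1)^2 * (1/s)^j) := by
    have hs' : ‖(1/s : ℝ)‖ < 1 := by
      rw [Real.norm_of_nonneg (by positivity), div_lt_one (by linarith)]; exact hs
    have a := summable_pow_mul_geometric_of_norm_lt_one 2 hs'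
    have b := summable_pow_mul_geometric_of_norm_lt_one 1 hs'
    have d := summable_pow_mul_geometric_of_norm_lt_one 0 hs'
    refine ((a.add (b.mul_left 2)).add d).congr ?_
    intro j; simp; ring
  obtain ⟨K, hK⟩ := hgeo.tendsto_atTop_zero.bddAbove_range
  have hK' : ∀ j : ℕ, ((j:ℝ)+1)^2 ≤ K * s^j := by
    intro j
    have := hK ⟨j, rfl⟩
    simp only [one_div, inv_pow] at this
    have hsj : 0 < s^j := by positivity
    rw [← div_eq_mul_inv, div_le_iff₀ hsj] at this
    exact this
  have hsum : Summable fun j => B * K * (‖η j‖ * s^j) := hη.mul_left _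
  let f : ℕ → ℕ → ℂ := fun n j => if j ≤ n then
    (((n:ℝ) ^ (3/2 : ℝ) : ℝ) : ℂ) * (η j * beta (n - j)) else 0
  have main := tendsto_tsum_of_dominated_convergence (f := f) (𝓕 := atTop)
    (g := fun j => c * η j) hsum ?_ ?_
  · rw [tsum_mul_left] at main
    refine main.congr ?_
    intro n
    rw [Finset.Nat.sum_antidiagonal_eq_sum_range_succ (fun i j => η i * beta j), Finset.mul_sum]
    rw [tsum_eq_sum (s := Finset.range n.succ)]
    · apply Finset.sum_congr rfl
      intro j hj
      have : j ≤ n := by simpa [Nat.lt_succ_iff] using hj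
      simp [f, this]
    · intro j hj
      have : ¬ j ≤ n := by simpa [Nat.lt_succ_iff] using hj
      simp [f, this]
  · intro j
    have h1 : Tendsto (fun n : ℕ => beta n * (((n:ℝ) ^ (3/2 : ℝ) : ℝ) : ℂ) *
        (((1 + (j:ℝ) * (1 / (n:ℝ))) ^ (3/2 : ℝ) : ℝ) : ℂ)) atTop (𝓝 (c * (((1 + (j:ℝ) * 0) ^ (3/2 : ℝ) : ℝ) : ℂ))) := by
      refine tendsto_beta.mul ((Complex.continuous_ofReal.tendsto _).comp ?_)
      exact (tendsto_const_nhds.add (tendsto_one_div_atTop_nhds_zero_nat.const_mul _)).rpow_const (by norm_num)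
    have h2 : Tendsto (fun n : ℕ => f (n + j) j) atTop (𝓝 (c * η j)) := by
      have := h1.mul_const (η j)
      simp only [mul_zero, add_zero, Real.one_rpow, Complex.ofReal_one, mul_one] at this
      refine this.congr' ?_
      filter_upwards [eventually_gt_atTop 0] with n hn
      have hn' : (0:ℝ) < n := by exact_mod_cast hn
      have e : (((n + j : ℕ):ℝ)) ^ (3/2:ℝ) = (n:ℝ)^(3/2:ℝ) * (1 + (j:ℝ) * (1 / (n:ℝ))) ^ (3/2 : ℝ) := by
        rw [← Real.mul_rpow (by positivity) (by positivity)]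
        congr 1; push_cast; field_simp
      simp only [f, Nat.le_add_left, if_true, Nat.add_sub_cancel]
      rw [e]; push_cast; ring
    exact (tendsto_add_atTop_iff_nat j).mp h2
  · refine Eventually.of_forall fun n j => ?_
    by_cases hj : j ≤ n
    · simp only [f, hj, if_true]
      rw [norm_mul, norm_mul, Complex.norm_real, Real.norm_of_nonneg (by positivity)]
      have hb := hB (n - j)
      have hk := hK' j
      have hn : (n:ℝ) ≤ (((n - j : ℕ):ℝ) + 1) * ((j:ℝ)+1) := by
        rw [Nat.cast_sub hj]
        have : (j:ℝ) ≤ n := by exact_mod_cast hj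
        nlinarith [mul_nonneg (sub_nonneg.mpr this) (Nat.cast_nonneg (α := ℝ) j)]
      have h1 : (n:ℝ)^(3/2:ℝ) ≤ (((n - j : ℕ):ℝ) + 1)^(3/2:ℝ) * ((j:ℝ)+1)^(3/2:ℝ) := by
        rw [← Real.mul_rpow (by positivity) (by positivity)]
        exact Real.rpow_le_rpow (by positivity) hn (by norm_num)
      have h2 : ((j:ℝ)+1)^(3/2:ℝ) ≤ ((j:ℝ)+1)^2 := by
        rw [← Real.rpow_natCast]
        exact Real.rpow_le_rpow_of_exponent_le (by linarith [Nat.cast_nonneg (α := ℝ) j]) (by norm_num)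
      have h3 := h2.trans hk
      calc (n:ℝ)^(3/2:ℝ) * (‖η j‖ * ‖beta (n-j)‖)
          ≤ ((((n - j : ℕ):ℝ) + 1)^(3/2:ℝ) * ((j:ℝ)+1)^(3/2:ℝ)) * (‖η j‖ * ‖beta (n-j)‖) := by gcongr
        _ = (‖beta (n-j)‖ * (((n - j : ℕ):ℝ) + 1)^(3/2:ℝ)) * (((j:ℝ)+1)^(3/2:ℝ) * ‖η j‖) := by ring
        _ ≤ B * ((K * s^j) * ‖η j‖) := by gcongr
        _ = _ := by ring
    · simp only [f, hj, if_false, norm_zero]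
      have : 0 ≤ K := by
        have := hK' 0
        simp at this; linarith
      positivity

end
end UB

namespace UB
noncomputable section
open PowerSeries Filter Topology

theorem HS.at_zero {f : PowerSeries ℂ} {v : ℂ} (h : HS f 0 v) : v = constantCoeff f := by
  have h2 := hasSum_single (f := fun n => coeff n f * (0:ℂ) ^ n) 0 (by
    intro n hn; simp [hn])
  have := HasSum.unique h h2
  simpa using this

theorem sqrt_series {Df : PowerSeries ℂ} {D : ℂ → ℂ} {R ρ : ℝ} (hρ : 0 < ρ) (hR : ρ < R)
    (hD : ∀ z, ‖z‖ < R → HS Df z (D z)) (hdiff : DifferentiableOn ℂ D (Metric.ball 0 R))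
    (hc : constantCoeff Df = 1) (hne : ∀ z, ‖z‖ ≤ ρ → D z ≠ 0) :
    ∃ (R' : ℝ) (q : PowerSeries ℂ) (Q : ℂ → ℂ), ρ < R' ∧ R' ≤ R ∧ constantCoeff q = 1 ∧ q ^ 2 = Df ∧
      (∀ z, ‖z‖ < R' → HS q z (Q z)) ∧ ∀ z, ‖z‖ < R' → Q z ^ 2 = D z := by
  obtain ⟨R', h1, h2, h3⟩ := exists_bigger_ball hρ hR hdiff hne
  have hR' : 0 < R' := hρ.trans h1
  have hD0 : D 0 = 1 := by
    rw [← hc]; exact (hD 0 (by simpa using hρ.trans hR)).at_zero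
  obtain ⟨Q, hQ, hQ2, hQ0⟩ := exists_sqrt hR' (hdiff.mono (Metric.ball_subset_ball h2)) h3 hD0
  obtain ⟨q, hq⟩ := exists_taylor hQ
  refine ⟨R', q, Q, h1, h2, ?_, ?_, hq, fun z hz => hQ2 z (by simpa using hz)⟩
  · rw [← hQ0]; exact ((hq 0 (by simpa using hR')).at_zero).symm
  · refine HS.uniq (F := D) hR' ?_ (fun z hz => hD z (hz.trans_le h2))
    intro z hz
    rw [← hQ2 z (by simpa using hz), sq, sq]
    exact (hq z hz).mul (hq z hz)

def brho (ρ : ℝ) : PowerSeries ℂ := rescale ((1 / (4 * ρ) : ℝ) : ℂ) bser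

theorem brho_sq {ρ : ℝ} (hρ : 0 < ρ) : brho ρ ^ 2 = 1 - PowerSeries.C ((1 / ρ : ℝ) : ℂ) * X := by
  unfold brho
  rw [← map_pow, bser_sq]
  ext n
  rw [coeff_rescale]
  have hρ' : (ρ : ℂ) ≠ 0 := by exact_mod_cast hρ.ne'
  rcases n with _ | _ | n
  · simp
  · simp [coeff_one]
  · simp [coeff_one, coeff_X]

theorem coeff_brho {ρ : ℝ} (n : ℕ) : coeff n (brho ρ) = beta n * ((1 / ρ : ℝ) : ℂ) ^ n := by
  unfold brho beta
  rw [coeff_rescale]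
  push_cast
  rw [div_pow, div_pow, mul_pow]
  ring

theorem transfer {a : ℕ → ℝ} (ha : ∀ n, 0 ≤ a n) {κ : ℝ} (hκ : 0 < κ) {Df : PowerSeries ℂ}
    (hy : (1 - X - PowerSeries.C (κ : ℂ) * X * PowerSeries.mk (fun n => (a n : ℂ))) ^ 2 = Df)
    {D : ℂ → ℂ} {R ρ : ℝ} (hρ : 0 < ρ) (hR : ρ < R)
    (hD : ∀ z, ‖z‖ < R → HS Df z (D z)) (hdiff : DifferentiableOn ℂ D (Metric.ball 0 R))
    (h0 : D ρ = 0) (h1 : deriv D ρ ≠ 0) (hne : ∀ z : ℂ, ‖z‖ ≤ ρ → z ≠ ρ → D z ≠ 0) :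
    ∃ C : ℝ, 0 < C ∧ Tendsto (fun n : ℕ => a n * ρ ^ n * (n:ℝ) ^ (3/2:ℝ)) atTop (𝓝 C) := by
  have hρC : (ρ : ℂ) ≠ 0 := by exact_mod_cast hρ.ne'
  set y : PowerSeries ℂ := 1 - X - PowerSeries.C (κ : ℂ) * X * PowerSeries.mk (fun n => (a n : ℂ)) with hydef
  have hyc : constantCoeff y = 1 := by simp [hydef]
  have hDfc : constantCoeff Df = 1 := by rw [← hy, map_pow, hyc, one_pow]
  have hD0 : D 0 = 1 := by
    rw [← hDfc]; exact (hD 0 (by simpa using hρ.trans hR)).at_zero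
  have hmem : Metric.ball (0:ℂ) R ∈ 𝓝 (ρ : ℂ) :=
    Metric.isOpen_ball.mem_nhds (by simpa [abs_of_pos hρ] using hR)
  let E : ℂ → ℂ := fun z => -ρ * dslope D ρ z
  have hE : DifferentiableOn ℂ E (Metric.ball 0 R) :=
    (((Complex.differentiableOn_dslope hmem).mpr hdiff)).const_mul _
  have hDE : ∀ z, D z = (1 - ((1 / ρ : ℝ) : ℂ) * z) * E z := by
    intro z
    by_cases hz : z = ρ
    · subst hz; rw [h0]; push_cast; simp [hρC]
    · have := sub_ne_zero.mpr hz
      simp only [E, dslope_of_ne D hz, slope_def_field, h0]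
      push_cast
      field_simp
      ring
  have hEne : ∀ z, ‖z‖ ≤ ρ → E z ≠ 0 := by
    intro z hz
    by_cases h : z = ρ
    · subst h
      simp only [E, dslope_same]
      exact mul_ne_zero (neg_ne_zero.mpr hρC) h1
    · intro h2
      apply hne z hz h
      rw [hDE, h2, mul_zero]
  obtain ⟨Ef, hEf⟩ := exists_taylor hE
  have hE0 : E 0 = 1 := by
    have := hDE 0
    rw [hD0] at this; simpa using this.symm
  have hEc : constantCoeff Ef = 1 := by
    rw [← hE0]; exact ((hEf 0 (by simpa using hρ.trans hR)).at_zero).symm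
  obtain ⟨R', q, Q, hρR', hR'R, hqc, hq2, hqQ, hQ2⟩ := sqrt_series hρ hR hEf hE hEc hEne
  have hDf : Df = (1 - PowerSeries.C ((1 / ρ : ℝ) : ℂ) * X) * Ef := by
    refine HS.uniq (F := D) (hρ.trans hR) hD ?_
    intro z hz
    rw [hDE]
    exact ((HS.one z).sub ((HS.C _ z).mul (HS.X z))).mul (hEf z hz)
  have hyq : y = q * brho ρ := by
    apply eq_of_sq_eq _ hyc
    · rw [map_mul, hqc]
      rw [one_mul, brho, ← coeff_zero_eq_constantCoeff_apply, coeff_rescale, pow_zero, one_mul,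
        coeff_zero_eq_constantCoeff_apply, bser_const]
    · rw [hy, hDf, mul_pow, brho_sq hρ, hq2]; ring
  -- asymptotics
  let s : ℝ := (ρ + R') / 2 / ρ
  have hs : 1 < s := by
    simp only [s]; rw [lt_div_iff₀ hρ]; linarith
  have hρs : ρ * s = (ρ + R')/2 := by simp only [s]; field_simp
  let η : ℕ → ℂ := fun n => coeff n q * (ρ : ℂ) ^ n
  have hηs : Summable fun n => ‖η n‖ * s ^ n := by
    have h : ‖(((ρ + R')/2 : ℝ) : ℂ)‖ < R' := by
      rw [Complex.norm_real, Real.norm_of_nonneg (by linarith)]; linarith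
    have := (hqQ _ h).summable.norm
    refine this.congr ?_
    intro n
    simp only [η, norm_mul, norm_pow, Complex.norm_real]
    rw [← hρs, norm_mul, mul_pow, Real.norm_of_nonneg (by linarith : (0:ℝ) ≤ s)]
    ring
  have hηsum : ∑' n, η n = Q ρ := by
    have := hqQ ρ (by simpa [abs_of_pos hρ] using hρR')
    exact this.tsum_eq
  have hQρ : Q ρ ≠ 0 := by
    intro h
    have h2 := hQ2 ρ (by simpa [abs_of_pos hρ] using hρR')
    rw [h] at h2
    exact hEne ρ (by simp [abs_of_pos hρ]) (by rw [← h2]; simp)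
  have hlim := conv_asymp hs hηs
  rw [hηsum] at hlim
  set w : ℂ := ((-(1 / (2 * √Real.pi)) : ℝ) : ℂ) * Q ρ with hw
  have hw0 : w ≠ 0 := by
    rw [hw]
    apply mul_ne_zero _ hQρ
    rw [Complex.ofReal_ne_zero]
    have : (0:ℝ) < 1 / (2 * √Real.pi) := by positivity
    linarith
  have hcoef : ∀ n : ℕ, ∑ p ∈ Finset.HasAntidiagonal.antidiagonal n, η p.1 * beta p.2 =
      coeff n y * (ρ : ℂ) ^ n := by
    intro n
    rw [hyq, coeff_mul, Finset.sum_mul]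
    apply Finset.sum_congr rfl
    intro p hp
    rw [Finset.HasAntidiagonal.mem_antidiagonal] at hp
    rw [coeff_brho, ← hp, pow_add]
    simp only [η]
    push_cast
    rw [div_pow]
    field_simp
    simp
  simp only [hcoef] at hlim
  have hycoef : ∀ n : ℕ, 0 < n → coeff (n+1) y = -(κ : ℂ) * (a n : ℂ) := by
    intro n hn
    rw [hydef, mul_assoc, map_sub, map_sub, coeff_C_mul, coeff_succ_X_mul, coeff_mk]
    simp [coeff_one, coeff_X, hn.ne']
  have hlim1 := (tendsto_add_atTop_iff_nat 1).mpr hlim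
  have h2 : Tendsto (fun n : ℕ => (1 + 1 / (n:ℝ)) ^ (3/2:ℝ)) atTop (𝓝 ((1 + 0) ^ (3/2:ℝ))) :=
    (tendsto_const_nhds.add tendsto_one_div_atTop_nhds_zero_nat).rpow_const (by norm_num)
  have h3 := (h2.inv₀ (by norm_num)).const_mul (-(1 / (κ * ρ)))
  have h4 := hlim1.mul ((Complex.continuous_ofReal.tendsto _).comp h3)
  set w' : ℂ := w * ((-(1 / (κ * ρ)) * (((1:ℝ) + 0) ^ (3/2:ℝ))⁻¹ : ℝ) : ℂ) with hw'
  have hw'0 : w' ≠ 0 := by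
    rw [hw']
    apply mul_ne_zero hw0
    rw [Complex.ofReal_ne_zero]
    apply mul_ne_zero
    · have : (0:ℝ) < 1 / (κ * ρ) := by positivity
      linarith
    · simp
  have h5 : Tendsto (fun n : ℕ => ((a n * ρ ^ n * (n:ℝ) ^ (3/2:ℝ) : ℝ) : ℂ)) atTop (𝓝 w') := by
    refine h4.congr' ?_
    filter_upwards [eventually_gt_atTop 0] with n hn
    have hn' : (0:ℝ) < n := by exact_mod_cast hn
    rw [hycoef n hn]
    simp only [Function.comp]
    have e : (((n + 1 : ℕ):ℝ)) ^ (3/2:ℝ) = (n:ℝ)^(3/2:ℝ) * (1 + (1 / (n:ℝ))) ^ (3/2 : ℝ) := by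
      rw [← Real.mul_rpow (by positivity) (by positivity)]
      congr 1; push_cast; field_simp
    rw [e]
    have hx : (1 + (1 / (n:ℝ))) ^ (3/2 : ℝ) ≠ 0 := by positivity
    generalize (1 + (1 / (n:ℝ))) ^ (3/2 : ℝ) = x at *
    generalize (n:ℝ)^(3/2:ℝ) = t at *
    have hxC : (x : ℂ) ≠ 0 := by exact_mod_cast hx
    have hκC : (κ : ℂ) ≠ 0 := by exact_mod_cast hκ.ne'
    push_cast
    rw [pow_succ]
    field_simp
  have hre := (Complex.continuous_re.tendsto _).comp h5
  have him := (Complex.continuous_im.tendsto _).comp h5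
  have him0 : w'.im = 0 := by
    refine tendsto_nhds_unique him ?_
    have : (Complex.im ∘ fun n : ℕ => ((a n * ρ ^ n * (n:ℝ) ^ (3/2:ℝ) : ℝ) : ℂ)) = fun _ => 0 := by
      funext n; exact Complex.ofReal_im _
    rw [this]; exact tendsto_const_nhds
  have hre' : Tendsto (fun n : ℕ => a n * ρ ^ n * (n:ℝ) ^ (3/2:ℝ)) atTop (𝓝 w'.re) := by
    refine hre.congr ?_
    intro n; exact Complex.ofReal_re _
  refine ⟨w'.re, ?_, hre'⟩
  have hnn : 0 ≤ w'.re := ge_of_tendsto' hre' (fun n => by have := ha n; positivity)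
  refine lt_of_le_of_ne hnn ?_
  intro h
  exact hw'0 (Complex.ext h.symm him0)

end
end UB

namespace UB
noncomputable section
open PowerSeries Filter Topology

def Mser : PowerSeries ℂ := PowerSeries.mk fun n => (PT.M n : ℂ)
def Sser : PowerSeries ℂ := PowerSeries.mk fun n => (PT.S n : ℂ)
def Gser : PowerSeries ℂ := PowerSeries.mk fun n => if Even n then (PT.G (n/2) : ℂ) else 0

theorem G_zero : PT.G 0 = 0 := by
  have h1 := PT.G_le' 0
  have h2 := PT.G_nonneg 0
  rw [PT.S_zero] at h1
  linarith

theorem Mser_eq : Mser = X * (1 + Mser + Mser * Mser) := by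
  ext n
  rcases n with _ | _ | n
  · simp [Mser, PT.M_zero]
  · rw [coeff_succ_X_mul]
    simp [Mser, PT.M_one, PT.M_zero, ]
  · rw [coeff_succ_X_mul, map_add, map_add, coeff_mul]
    simp only [Mser, coeff_mk, PT.M_rec]
    simp [coeff_one, add_sub_assoc]

theorem diag_sum (k : ℕ) : ∑ p ∈ Finset.HasAntidiagonal.antidiagonal k,
    (if p.1 = p.2 then PT.G p.1 else 0) = if Even k then PT.G (k/2) else 0 := by
  split_ifs with h
  · obtain ⟨m, rfl⟩ := h
    rw [Finset.sum_eq_single (m, m)]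
    · have : (m + m)/2 = m := by omega
      simp [this]
    · rintro ⟨a, b⟩ hp hne
      rw [Finset.HasAntidiagonal.mem_antidiagonal] at hp
      simp only at hp ⊢
      rw [if_neg]
      intro e
      apply hne
      have : a = m := by omega
      have : b = m := by omega
      simp [*]
    · intro hn
      exfalso; apply hn
      rw [Finset.HasAntidiagonal.mem_antidiagonal]
  · apply Finset.sum_eq_zero
    rintro ⟨a, b⟩ hp
    rw [Finset.HasAntidiagonal.mem_antidiagonal] at hp
    simp only at hp ⊢
    rw [if_neg]
    intro e
    exact h ⟨a, by omega⟩

theorem Sser_eq : Sser = X * (1 + Sser + PowerSeries.C 2 * (Sser * Sser) - Gser) := by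
  ext n
  rcases n with _ | _ | n
  · simp [Sser, PT.S_zero]
  · rw [coeff_succ_X_mul]
    simp [Sser, Gser, PT.S_one, PT.S_zero, G_zero]
  · rw [coeff_succ_X_mul, map_sub, map_add, map_add, coeff_C_mul, coeff_mul]
    simp only [Sser, Gser, coeff_mk]
    rw [PT.S_rec, Finset.sum_sub_distrib, diag_sum, ← Finset.mul_sum]
    split_ifs <;> · push_cast; simp [coeff_one, add_sub_assoc]

theorem My_sq : (1 - X - PowerSeries.C ((2:ℝ):ℂ) * X * Mser) ^ 2 =
    (1 - X) * (1 - X) - PowerSeries.C 4 * (X * X) := by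
  have h := Mser_eq
  have h2 : (PowerSeries.C ((2:ℝ):ℂ) : PowerSeries ℂ) = 2 := by
    rw [show ((2:ℝ):ℂ) = 2 by norm_num]; exact map_ofNat _ 2
  have h4 : (PowerSeries.C (4:ℂ) : PowerSeries ℂ) = 4 := map_ofNat _ 4
  rw [h2, h4]
  linear_combination (-4 * X) * h

theorem Sy_sq : (1 - X - PowerSeries.C ((4:ℝ):ℂ) * X * Sser) ^ 2 =
    (1 - X) * (1 - X) - PowerSeries.C 8 * (X * X) * (1 - Gser) := by
  have h := Sser_eq
  have h2 : (PowerSeries.C (2:ℂ) : PowerSeries ℂ) = 2 := map_ofNat _ 2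
  have h4 : (PowerSeries.C ((4:ℝ):ℂ) : PowerSeries ℂ) = 4 := by
    rw [show ((4:ℝ):ℂ) = 4 by norm_num]; exact map_ofNat _ 4
  have h8 : (PowerSeries.C (8:ℂ) : PowerSeries ℂ) = 8 := map_ofNat _ 8
  rw [h2] at h
  rw [h4, h8]
  linear_combination (-8 * X) * h

theorem M_asymp : ∃ C : ℝ, 0 < C ∧
    Tendsto (fun n : ℕ => PT.M n * (1/3) ^ n * (n:ℝ) ^ (3/2:ℝ)) atTop (𝓝 C) := by
  have hd : ∀ z : ℂ, HasDerivAt (fun z : ℂ => (1 - z) * (1 - z) - 4 * (z * z)) (-2 - 6 * z) z := by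
    intro z
    have h1 : HasDerivAt (fun z : ℂ => 1 - z) (-1) z := by
      simpa using (hasDerivAt_id z).const_sub 1
    have h2 := hasDerivAt_id z
    have := (h1.mul h1).sub ((h2.mul h2).const_mul 4)
    refine this.congr_deriv ?_
    simp; ring
  refine transfer (a := PT.M) PT.M_nonneg (κ := 2) (by norm_num) My_sq
    (D := fun z => (1 - z) * (1 - z) - 4 * (z * z)) (R := 1) (by norm_num) (by norm_num) ?_ ?_ ?_ ?_ ?_
  · intro z _
    exact (((HS.one z).sub (HS.X z)).mul ((HS.one z).sub (HS.X z))).sub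
      ((HS.C 4 z).mul ((HS.X z).mul (HS.X z)))
  · intro z _; exact (hd z).differentiableAt.differentiableWithinAt
  · push_cast; norm_num
  · rw [(hd _).deriv]; push_cast; norm_num
  · intro z hz hne h
    have e : (1 - 3 * z) * (1 + z) = 0 := by linear_combination h
    rcases mul_eq_zero.mp e with e | e
    · apply hne; push_cast; linear_combination (-1/3) * e
    · have : z = -1 := by linear_combination e
      rw [this] at hz; norm_num at hz

theorem base_summable : Summable fun n => PT.S n * (1/5:ℝ) ^ n := by
  obtain ⟨C, hC, h⟩ := M_asymp
  obtain ⟨K, hK⟩ := h.bddAbove_range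
  have hb : ∀ n : ℕ, PT.S n * (1/5:ℝ)^n ≤ max K 0 * (9/10)^n := by
    intro n
    rcases Nat.eq_zero_or_pos n with rfl | hn
    · simp [PT.S_zero]
    have h1 := hK ⟨n, rfl⟩
    simp only at h1
    have hn1 : (1:ℝ) ≤ (n:ℝ)^(3/2:ℝ) := by
      apply Real.one_le_rpow _ (by norm_num)
      exact_mod_cast hn
    have h2 : PT.M n * (1/3)^n ≤ max K 0 := by
      refine le_trans ?_ (h1.trans (le_max_left _ _))
      have : 0 ≤ PT.M n * (1/3)^n := by have := PT.M_nonneg n; positivity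
      nlinarith
    calc PT.S n * (1/5:ℝ)^n ≤ (PT.M n * (3/2)^n) * (1/5:ℝ)^n := by
          gcongr; exact PT.S_le n
      _ = (PT.M n * (1/3)^n) * (9/10)^n := by
          rw [mul_assoc, mul_assoc, ← mul_pow, ← mul_pow]; norm_num
      _ ≤ _ := by gcongr
  refine Summable.of_nonneg_of_le (fun n => ?_) hb ((summable_geometric_of_lt_one (by norm_num) (by norm_num)).mul_left _)
  have := PT.S_nonneg n; positivity

end
end UB

namespace UB
noncomputable section
open PowerSeries Filter Topology
open PT (S G S_nonneg G_nonneg G_le G_le' S_one)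

def Sm (x : ℝ) : Prop := Summable fun n => S n * x ^ n
def Fr (x : ℝ) : ℝ := ∑' n, S n * x ^ n
def gr (x : ℝ) : ℝ := ∑' n, G n * x ^ n
def Fc (z : ℂ) : ℂ := ∑' n, (S n : ℂ) * z ^ n
def gc (z : ℂ) : ℂ := ∑' n, (G n : ℂ) * z ^ n

theorem Fc_ofReal (x : ℝ) : Fc x = (Fr x : ℂ) := by
  unfold Fc Fr; rw [Complex.ofReal_tsum]; push_cast; rfl

theorem gc_ofReal (x : ℝ) : gc x = (gr x : ℂ) := by
  unfold gc gr; rw [Complex.ofReal_tsum]; push_cast; rfl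

theorem Sm_mono {x y : ℝ} (hx : 0 ≤ x) (hxy : x ≤ y) (h : Sm y) : Sm x := by
  refine Summable.of_nonneg_of_le (fun n => ?_) (fun n => ?_) h
  · have := S_nonneg n; positivity
  · have := S_nonneg n; gcongr

theorem Fr_mono {x y : ℝ} (hx : 0 ≤ x) (hxy : x ≤ y) (h : Sm y) : Fr x ≤ Fr y := by
  refine Summable.tsum_le_tsum (fun n => ?_) (Sm_mono hx hxy h) h
  have := S_nonneg n; gcongr

theorem Fr_nonneg {x : ℝ} (hx : 0 ≤ x) : 0 ≤ Fr x :=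
  tsum_nonneg fun n => by have := S_nonneg n; positivity

theorem term_le {x : ℝ} (hx : 0 ≤ x) (h : Sm x) (n : ℕ) : S n * x ^ n ≤ Fr x :=
  h.le_tsum n fun m _ => by have := S_nonneg m; positivity

theorem HS_S {x : ℝ} (h : Sm x) {z : ℂ} (hz : ‖z‖ ≤ x) : HS Sser z (Fc z) := by
  unfold HS Sser Fc
  simp only [coeff_mk]
  apply Summable.hasSum
  apply Summable.of_norm_bounded h
  intro n
  rw [norm_mul, norm_pow, Complex.norm_real, Real.norm_of_nonneg (S_nonneg n)]
  have := S_nonneg n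
  gcongr

theorem norm_Fc_le {x : ℝ} (h : Sm x) {z : ℂ} (hz : ‖z‖ ≤ x) : ‖Fc z‖ ≤ Fr x := by
  refine tsum_of_norm_bounded h.hasSum ?_
  intro n
  rw [norm_mul, norm_pow, Complex.norm_real, Real.norm_of_nonneg (S_nonneg n)]
  have := S_nonneg n
  gcongr

theorem HS_G {z : ℂ} (h : Summable fun n => (G n : ℂ) * (z ^ 2) ^ n) : HS Gser z (gc (z ^ 2)) := by
  unfold HS Gser gc
  have hi : Function.Injective (fun n : ℕ => 2 * n) := fun a b h => by simpa using h
  have := h.hasSum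
  refine (hi.hasSum_iff ?_).mp ?_
  · intro n hn
    rw [coeff_mk, if_neg, zero_mul]
    intro he
    obtain ⟨m, rfl⟩ := he
    exact hn ⟨m, by simp only; omega⟩
  · refine hasSum_congr_aux this ?_
    intro n
    simp [pow_mul]

theorem gterm {x : ℝ} (hx : 0 ≤ x) (h : Sm x) (n : ℕ) : G n * (x^2)^n ≤ Fr x * (S n * x^n) := by
  have h1 := G_le' n
  have h2 := term_le hx h n
  have h3 := S_nonneg n
  calc G n * (x^2)^n ≤ (S n * S n) * (x^2)^n := by gcongr
    _ = (S n * x^n) * (S n * x^n) := by rw [← pow_mul, mul_comm 2 n, pow_mul]; ring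
    _ ≤ Fr x * (S n * x^n) := by gcongr

theorem g_summable {x : ℝ} (hx : 0 ≤ x) (h : Sm x) : Summable fun n => G n * (x^2)^n := by
  refine Summable.of_nonneg_of_le (fun n => ?_) (gterm hx h) (Summable.mul_left _ h)
  have := G_nonneg n; positivity

theorem g_le {x : ℝ} (hx : 0 ≤ x) (h : Sm x) : gr (x^2) ≤ Fr x * Fr x := by
  unfold gr
  refine (Summable.tsum_le_tsum (gterm hx h) (g_summable hx h) (Summable.mul_left _ h)).trans ?_
  rw [tsum_mul_left]; rfl

theorem F_eq {x : ℝ} (hx : 0 ≤ x) (h : Sm x) :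
    Fr x = x * (1 + Fr x + 2 * (Fr x * Fr x) - gr (x^2)) := by
  have hn : ‖(x:ℂ)‖ ≤ x := by rw [Complex.norm_real, Real.norm_of_nonneg hx]
  have h1 := HS_S h hn
  have hg : Summable fun n => (G n : ℂ) * ((x:ℂ) ^ 2) ^ n := by
    have := Complex.ofRealCLM.summable (g_summable hx h)
    refine this.congr ?_
    intro n; simp
  have h2 := (HS.X (x:ℂ)).mul ((((HS.one (x:ℂ)).add h1).add ((HS.C 2 _).mul (h1.mul h1))).sub (HS_G hg))
  rw [← Sser_eq] at h2
  have h3 := HasSum.unique h1 h2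
  rw [Fc_ofReal, ← Complex.ofReal_pow, gc_ofReal] at h3
  exact_mod_cast h3

theorem x_le {x : ℝ} (hx : 0 < x) (h : Sm x) : x ≤ 1/3 ∧ Fr x ≤ 1 / x := by
  have h1 := F_eq hx.le h
  have h2 := g_le hx.le h
  have h3 : x ≤ Fr x := by
    have := term_le hx.le h 1
    rw [S_one] at this; simpa using this
  set F := Fr x
  have h4 : x * (1 + F + F * F) ≤ F := by nlinarith
  have hF : 0 < F := by linarith
  have h5 : F ≤ 1 / x := by
    rw [le_div_iff₀ hx]
    have : x * F ≤ 1 := by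
      by_contra hc
      push Not at hc
      nlinarith
    linarith
  refine ⟨?_, h5⟩
  have h6 : x * (3 * F) ≤ F := by nlinarith [sq_nonneg (F - 1)]
  have : x * 3 ≤ 1 := by
    by_contra hc
    push Not at hc
    nlinarith
  linarith

theorem exists_rho : ∃ ρ : ℝ, 1/5 ≤ ρ ∧ ρ ≤ 1/3 ∧ Sm ρ ∧ ∀ x, ρ < x → ¬ Sm x := by
  let A : Set ℝ := {x | 0 < x ∧ Sm x}
  have hA : (1/5:ℝ) ∈ A := ⟨by norm_num, base_summable⟩
  have hb : BddAbove A := ⟨1/3, fun x hx => (x_le hx.1 hx.2).1⟩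
  have h5 : 1/5 ≤ sSup A := le_csSup hb hA
  have h3 : sSup A ≤ 1/3 := csSup_le ⟨_, hA⟩ fun x hx => (x_le hx.1 hx.2).1
  refine ⟨sSup A, h5, h3, ?_, ?_⟩
  · by_cases he : sSup A = 1/5
    · rw [he]; exact base_summable
    have hlt : 1/5 < sSup A := lt_of_le_of_ne h5 (Ne.symm he)
    have hbd : ∀ x, 1/5 < x → x < sSup A → Sm x ∧ Fr x ≤ 5 := by
      intro x hx1 hx2
      obtain ⟨y, hy, hxy⟩ := exists_lt_of_lt_csSup ⟨_, hA⟩ hx2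
      have hs := Sm_mono (by linarith) hxy.le hy.2
      refine ⟨hs, (x_le (by linarith) hs).2.trans ?_⟩
      rw [div_le_iff₀ (by linarith)]; linarith
    refine summable_of_sum_range_le (c := 5) (fun n => ?_) ?_
    · have := S_nonneg n; positivity
    · intro N
      have hcont : Continuous fun x : ℝ => ∑ n ∈ Finset.range N, S n * x ^ n := by fun_prop
      have ht : Tendsto (fun x : ℝ => ∑ n ∈ Finset.range N, S n * x ^ n) (𝓝[<] (sSup A))
        (𝓝 (∑ n ∈ Finset.range N, S n * (sSup A) ^ n)) := hcont.continuousWithinAt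
      refine le_of_tendsto ht ?_
      filter_upwards [Ioo_mem_nhdsLT hlt] with x hx
      obtain ⟨hs, hF⟩ := hbd x hx.1 hx.2
      refine le_trans (Summable.sum_le_tsum _ (fun n _ => ?_) hs) hF
      have := S_nonneg n
      have : 0 ≤ x := by linarith [hx.1]
      positivity
  · intro x hx hs
    have : x ∈ A := ⟨by linarith, hs⟩
    exact absurd (le_csSup hb this) (not_le.mpr hx)

end
end UB

namespace UB
noncomputable section
open PowerSeries Filter Topology
open PT (S G S_nonneg G_nonneg G_le G_le' S_one)

def Dc (z : ℂ) : ℂ := (1 - z) * (1 - z) - 8 * (z * z) * (1 - gc (z ^ 2))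
def Pr (x : ℝ) : ℝ := x + 4 * x * Fr x

theorem Gbound {ρ : ℝ} (hρ : 0 < ρ) {w : ℂ} (hw : ‖w‖ ≤ ρ / 2) (n : ℕ) :
    ‖(G n : ℂ) * w ^ n‖ ≤ S n * ρ ^ n := by
  rw [norm_mul, norm_pow, Complex.norm_real, Real.norm_of_nonneg (G_nonneg n)]
  have h1 := G_le n
  have h2 := S_nonneg n
  have h3 := G_nonneg n
  calc G n * ‖w‖^n ≤ (2^n/2 * S n) * (ρ/2)^n := by gcongr
    _ = S n * ρ^n * (1/2) := by
      rw [div_pow]; field_simp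
    _ ≤ S n * ρ^n := by
      have : 0 ≤ S n * ρ^n := by positivity
      linarith

theorem gc_summable {ρ : ℝ} (hρ : 0 < ρ) (h : Sm ρ) {w : ℂ} (hw : ‖w‖ ≤ ρ / 2) :
    Summable fun n => (G n : ℂ) * w ^ n :=
  Summable.of_norm_bounded h (Gbound hρ hw)

theorem gc_diff {ρ : ℝ} (hρ : 0 < ρ) (h : Sm ρ) :
    DifferentiableOn ℂ gc (Metric.ball 0 (ρ/2)) := by
  unfold gc
  refine Complex.differentiableOn_tsum_of_summable_norm h (fun n => ?_) Metric.isOpen_ball ?_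
  · fun_prop
  · intro n w hw
    exact Gbound hρ (by simpa using (Metric.mem_ball.mp hw).le) n

theorem sq_lt_of {ρ : ℝ} {z : ℂ} (hz : ‖z‖ < √(ρ/2)) : ‖z^2‖ < ρ/2 := by
  rw [norm_pow]
  exact (Real.lt_sqrt (norm_nonneg _)).mp hz

theorem Dc_diff {ρ : ℝ} (hρ : 0 < ρ) (h : Sm ρ) :
    DifferentiableOn ℂ Dc (Metric.ball 0 (√(ρ/2))) := by
  have h1 : DifferentiableOn ℂ (fun z : ℂ => gc (z^2)) (Metric.ball 0 (√(ρ/2))) := by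
    refine (gc_diff hρ h).comp (by fun_prop) ?_
    intro z hz
    have := sq_lt_of (ρ := ρ) (z := z) (by simpa using hz)
    simpa using this
  unfold Dc
  fun_prop

theorem Dc_HS {ρ : ℝ} (hρ : 0 < ρ) (h : Sm ρ) (z : ℂ) (hz : ‖z‖ < √(ρ/2)) :
    HS ((1 - X) * (1 - X) - PowerSeries.C 8 * (X * X) * (1 - Gser)) z (Dc z) := by
  have hg := HS_G (gc_summable hρ h (sq_lt_of hz).le)
  exact (((HS.one z).sub (HS.X z)).mul ((HS.one z).sub (HS.X z))).sub
      (((HS.C 8 z).mul ((HS.X z).mul (HS.X z))).mul ((HS.one z).sub hg))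

theorem rho_lt {ρ : ℝ} (hρ : 0 < ρ) (h3 : ρ ≤ 1/3) : ρ < √(ρ/2) := by
  rw [Real.lt_sqrt hρ.le]; nlinarith

theorem Dc_eq {ρ : ℝ} (hρ : 0 < ρ) (h3 : ρ ≤ 1/3) (h : Sm ρ) (z : ℂ) (hz : ‖z‖ ≤ ρ) :
    Dc z = (1 - z - 4 * z * Fc z) ^ 2 := by
  have h1 := Dc_HS hρ h z (hz.trans_lt (rho_lt hρ h3))
  rw [← Sy_sq] at h1
  have h2 := ((HS.one z).sub (HS.X z)).sub (((HS.C ((4:ℝ):ℂ) z).mul (HS.X z)).mul (HS_S h hz))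
  have h4 := h2.mul h2
  rw [← sq, ← sq] at h4
  have := HasSum.unique h1 h4
  rw [this]; push_cast; rfl

theorem Dc_ofReal (x : ℝ) : Dc x =
    (((1 - x) * (1 - x) - 8 * (x * x) * (1 - gr (x^2)) : ℝ) : ℂ) := by
  unfold Dc
  rw [← Complex.ofReal_pow, gc_ofReal]; push_cast; rfl

theorem Dr_eq {ρ : ℝ} (hρ : 0 < ρ) (h3 : ρ ≤ 1/3) (h : Sm ρ) {x : ℝ} (hx : 0 ≤ x) (hxρ : x ≤ ρ) :
    Dc x = (((1 - Pr x) ^ 2 : ℝ) : ℂ) := by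
  rw [Dc_eq hρ h3 h x (by rw [Complex.norm_real, Real.norm_of_nonneg hx]; exact hxρ), Fc_ofReal]
  unfold Pr; push_cast; ring

theorem mpow_le (m : ℕ) : (m:ℝ) * (2/3)^m ≤ 1 := by
  have h : ∀ k : ℕ, ((k+2 : ℕ):ℝ) * (2/3)^(k+2) ≤ 8/9 := by
    intro k
    induction k with
    | zero => norm_num
    | succ k ih =>
      have hp : (0:ℝ) < (2/3)^(k+2) := by positivity
      have hk : (0:ℝ) ≤ k := by positivity
      rw [show k + 1 + 2 = (k+2)+1 by ring, pow_succ]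
      push_cast at ih ⊢
      nlinarith [mul_nonneg hk hp.le]
  rcases m with _ | _ | k
  · simp
  · norm_num
  · exact (h k).trans (by norm_num)

theorem g_slope {x0 x : ℝ} (hx : 0 < x) (hxx : x < x0) (h3 : x0 ≤ 1/3) (h : Sm x0) :
    gr (x0^2) - gr (x^2) ≤ (x0 - x) / x0 * Fr x0 := by
  have hx0 : 0 < x0 := hx.trans hxx
  have s0 := g_summable hx0.le h
  have s1 := g_summable hx.le (Sm_mono hx.le hxx.le h)
  unfold gr Fr
  rw [← s0.tsum_sub s1, ← tsum_mul_left]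
  refine Summable.tsum_le_tsum (fun m => ?_) (s0.sub s1) (Summable.mul_left _ h)
  have hG := G_le m
  have hS := S_nonneg m
  have hG0 := G_nonneg m
  -- Bernoulli
  have hB : 1 - (2 * m : ℕ) * ((x0 - x)/x0) ≤ (x/x0)^(2*m) := by
    have := one_add_mul_le_pow (a := (x/x0 - 1)) (by
      have : 0 < x/x0 := by positivity
      linarith) (2*m)
    have e : (x0 - x)/x0 = 1 - x/x0 := by field_simp
    rw [e]
    have e2 : 1 + (x/x0 - 1) = x/x0 := by ring
    rw [e2] at this
    linarith
  have hp : (0:ℝ) < x0^(2*m) := by positivity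
  have hB2 : x0^(2*m) - x^(2*m) ≤ x0^(2*m) * ((2 * m : ℕ) * ((x0 - x)/x0)) := by
    rw [div_pow] at hB
    have : x^(2*m) = x0^(2*m) * (x^(2*m)/x0^(2*m)) := by field_simp
    rw [this]
    nlinarith
  have ht : 0 ≤ (x0 - x)/x0 := div_nonneg (by linarith) hx0.le
  have hm : (m:ℝ) * (2 * x0)^m ≤ 1 := by
    refine le_trans ?_ (mpow_le m)
    gcongr; linarith
  calc G m * (x0^2)^m - G m * (x^2)^m = G m * (x0^(2*m) - x^(2*m)) := by
        rw [← pow_mul, ← pow_mul]; ring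
    _ ≤ G m * (x0^(2*m) * ((2 * m : ℕ) * ((x0 - x)/x0))) := by gcongr
    _ ≤ (2^m/2 * S m) * (x0^(2*m) * ((2 * m : ℕ) * ((x0 - x)/x0))) := by gcongr
    _ = ((x0 - x)/x0 * (S m * x0^m)) * (m * (2*x0)^m) := by
        rw [mul_pow, mul_comm 2 m, pow_mul]; push_cast; ring
    _ ≤ ((x0 - x)/x0 * (S m * x0^m)) * 1 := by gcongr
    _ = _ := by ring

theorem slope_neg {ρ x0 : ℝ} (hρ : 0 < ρ) (h3 : ρ ≤ 1/3) (h : Sm ρ) (hx0 : 0 < x0) (hxρ : x0 ≤ ρ)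
    (hP : Pr x0 = 1) : HasDerivAt (fun x : ℝ => (Dc x).re) (deriv Dc x0).re x0 ∧
      (deriv Dc x0).re < 0 := by
  have hx3 : x0 ≤ 1/3 := hxρ.trans h3
  have hs0 : Sm x0 := Sm_mono hx0.le hxρ h
  have hmem : Metric.ball (0:ℂ) (√(ρ/2)) ∈ 𝓝 (x0 : ℂ) := by
    apply Metric.isOpen_ball.mem_nhds
    have := hxρ.trans_lt (rho_lt hρ h3)
    simpa [abs_of_pos hx0] using this
  have hd : HasDerivAt Dc (deriv Dc x0) x0 := ((Dc_diff hρ h).differentiableAt hmem).hasDerivAt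
  have hdr := hd.real_of_complex
  refine ⟨hdr, ?_⟩
  have hsl := (hasDerivAt_iff_tendsto_slope.mp hdr).mono_left
    (nhdsWithin_mono x0 (fun x (hx : x ∈ Set.Iio x0) => ne_of_lt hx))
  have hDre : ∀ x : ℝ, (Dc x).re = (1 - x) * (1 - x) - 8 * (x * x) * (1 - gr (x^2)) := by
    intro x; rw [Dc_ofReal, Complex.ofReal_re]
  have hD0 : (1 - x0) * (1 - x0) - 8 * (x0 * x0) * (1 - gr (x0^2)) = 0 := by
    have := Dr_eq hρ h3 h hx0.le hxρ
    rw [Dc_ofReal, hP] at this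
    have h2 := Complex.ofReal_injective this
    rw [h2]; ring
  set g0 := gr (x0^2) with hg0
  set F := Fr x0 with hF
  have hPF : 4 * x0 * F = 1 - x0 := by unfold Pr at hP; linarith
  let br : ℝ → ℝ := fun x => -((2 - x - x0) + 8 * (x0 + x) * (1 - g0) - 8 * x^2 * F / x0)
  have hbr : Tendsto br (𝓝[<] x0) (𝓝 (br x0)) := by
    have : Continuous br := by simp only [br]; fun_prop
    exact this.continuousWithinAt
  have hle : (deriv Dc x0).re ≤ br x0 := by
    refine le_of_tendsto_of_tendsto hsl hbr ?_
    filter_upwards [Ioo_mem_nhdsLT hx0] with x hx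
    have hg := g_slope hx.1 hx.2 hx3 hs0
    rw [slope_def_field, hDre, hDre, ← hg0]
    rw [show ∀ a b : ℝ, (a - b)/(x - x0) = (b - a)/(x0 - x) from fun a b => by
      rw [← neg_sub b a, ← neg_sub x0 x, neg_div_neg_eq]]
    have hpos : 0 < x0 - x := by linarith [hx.2]
    rw [div_le_iff₀ hpos]
    have h8 : 8 * x^2 * (g0 - gr (x^2)) ≤ 8 * x^2 * ((x0 - x)/x0 * F) := by gcongr
    have e : br x * (x0 - x) = -(x0 - x) * (2 - x - x0) - 8 * (x0^2 - x^2) * (1 - g0)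
        + 8 * x^2 * ((x0 - x)/x0 * F) := by
      simp only [br]; field_simp; ring
    rw [e]
    nlinarith
  refine hle.trans_lt ?_
  have e : br x0 = -(2 * (1 - x0)^2 / x0) := by
    simp only [br]
    have h1 : 8 * x0^2 * F / x0 = 8 * x0 * F := by field_simp
    have h2 : 8 * (x0 + x0) * (1 - g0) = 2 * (1 - x0)^2 / x0 := by
      rw [eq_div_iff hx0.ne']; linarith
    rw [h1, h2]; linarith
  rw [e]
  have : 0 < 1 - x0 := by linarith
  have : 0 < 2 * (1 - x0)^2 / x0 := by positivity
  linarith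

theorem no_interior {ρ x0 : ℝ} (hρ : 0 < ρ) (h3 : ρ ≤ 1/3) (h : Sm ρ) (hx0 : 0 < x0) (hxρ : x0 < ρ) :
    Pr x0 ≠ 1 := by
  intro hP
  obtain ⟨h1, h2⟩ := slope_neg hρ h3 h hx0 hxρ.le hP
  have hmin : IsLocalMin (fun x : ℝ => (Dc x).re) x0 := by
    filter_upwards [Ioo_mem_nhds hx0 hxρ] with x hx
    rw [Dr_eq hρ h3 h hx0.le hxρ.le, Dr_eq hρ h3 h hx.1.le hx.2.le, hP, Complex.ofReal_re, Complex.ofReal_re]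
    simp; positivity
  have := hmin.hasDerivAt_eq_zero h1
  linarith

theorem Pr_le {ρ : ℝ} (hρ : 0 < ρ) (h3 : ρ ≤ 1/3) (h : Sm ρ) : Pr ρ ≤ 1 := by
  by_contra hc
  push Not at hc
  have hcF : ContinuousOn Fr (Set.Icc 0 ρ) := by
    unfold Fr
    refine continuousOn_tsum (fun n => by fun_prop) h ?_
    intro n x hx
    have := S_nonneg n
    have hx0 := hx.1
    rw [Real.norm_of_nonneg (by positivity)]
    gcongr; exact hx.2
  have hcont : ContinuousOn Pr (Set.Icc 0 ρ) := by
    unfold Pr; fun_prop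
  have := intermediate_value_Ioo hρ.le hcont
  obtain ⟨x, hx, he⟩ := this (show (1:ℝ) ∈ Set.Ioo (Pr 0) (Pr ρ) from ⟨by simp [Pr], hc⟩)
  exact no_interior hρ h3 h hx.1 hx.2 he

theorem Pr_eq {ρ : ℝ} (hρ : 0 < ρ) (h3 : ρ ≤ 1/3) (h : Sm ρ) (hmax : ∀ x, ρ < x → ¬ Sm x) :
    Pr ρ = 1 := by
  by_contra hne
  have hlt : Pr ρ < 1 := lt_of_le_of_ne (Pr_le hρ h3 h) hne
  obtain ⟨R', q, Q, h1, h2, hqc, hq2, hqQ, -⟩ := sqrt_series hρ (rho_lt hρ h3) (Dc_HS hρ h) (Dc_diff hρ h)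
    (by simp) (by
      intro z hz h0
      rw [Dc_eq hρ h3 h z hz] at h0
      have h0 := pow_eq_zero_iff (two_ne_zero) |>.mp h0
      have e : (1:ℂ) = z + 4 * z * Fc z := by linear_combination h0
      have hn : ‖z + 4 * z * Fc z‖ ≤ Pr ρ := by
        refine (norm_add_le _ _).trans ?_
        rw [norm_mul, norm_mul]
        have := norm_Fc_le h hz
        have h4 : ‖(4:ℂ)‖ = 4 := by norm_num
        unfold Pr
        rw [h4]
        gcongr
      rw [← e, norm_one] at hn
      linarith)
  rw [← Sy_sq] at hq2
  have hyc : constantCoeff (1 - X - PowerSeries.C ((4:ℝ):ℂ) * X * Sser) = 1 := by simp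
  have hqy := eq_of_sq_eq hq2 hqc hyc
  let r : ℝ := (ρ + R')/2
  have hr : ρ < r := by simp only [r]; linarith
  have hr0 : 0 < r := hρ.trans hr
  apply hmax r hr
  have hs := (hqQ (r:ℂ) (by
    rw [Complex.norm_real, Real.norm_of_nonneg hr0.le]; simp only [r]; linarith)).summable.norm
  have hs1 := (summable_nat_add_iff 2).mpr hs
  unfold Sm
  rw [← summable_nat_add_iff 1]
  refine (hs1.mul_left (1/(4*r))).congr ?_
  intro n
  rw [hqy, show n + 2 = (n+1)+1 by ring, mul_assoc, map_sub, map_sub, coeff_C_mul, coeff_succ_X_mul]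
  simp [coeff_one, coeff_X, Sser, abs_of_pos hr0, abs_of_nonneg (S_nonneg (n+1))]
  field_simp
  ring

theorem S_asymp : ∃ ρ C : ℝ, 1/5 ≤ ρ ∧ 0 < C ∧
    Tendsto (fun n : ℕ => S n * ρ ^ n * (n:ℝ) ^ (3/2:ℝ)) atTop (𝓝 C) := by
  obtain ⟨ρ, h5, h3, h, hmax⟩ := exists_rho
  have hρ : 0 < ρ := by linarith
  have hP := Pr_eq hρ h3 h hmax
  have key := transfer (a := S) S_nonneg (κ := 4) (by norm_num) Sy_sq hρ (rho_lt hρ h3) (Dc_HS hρ h)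
    (Dc_diff hρ h) ?_ ?_ ?_
  · obtain ⟨C, hC, ht⟩ := key
    exact ⟨ρ, C, h5, hC, ht⟩
  · rw [Dr_eq hρ h3 h hρ.le le_rfl, hP]; simp
  · intro h0
    have := (slope_neg hρ h3 h hρ le_rfl hP).2
    rw [h0] at this; simp at this
  · intro z hz hzne h0
    rw [Dc_eq hρ h3 h z hz] at h0
    have h0 := pow_eq_zero_iff (two_ne_zero) |>.mp h0
    have e : z = 1 - 4 * z * Fc z := by linear_combination -h0
    have hn : ‖4 * z * Fc z‖ ≤ 4 * ρ * Fr ρ := by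
      rw [norm_mul, norm_mul]
      have := norm_Fc_le h hz
      have h4 : ‖(4:ℂ)‖ = 4 := by norm_num
      rw [h4]
      gcongr
    have hre : z.re = 1 - (4 * z * Fc z).re := by
      have := congrArg Complex.re e
      simpa using this
    have h6 := (Complex.abs_re_le_norm (4 * z * Fc z))
    have h7 := le_abs_self (4 * z * Fc z).re
    unfold Pr at hP
    have h8 : ρ ≤ z.re := by linarith
    have h9 : z.re ^ 2 + z.im ^ 2 ≤ ρ ^ 2 := by
      have : ‖z‖ ^ 2 ≤ ρ ^ 2 := by gcongr
      rw [Complex.sq_norm, Complex.normSq_apply] at this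
      linarith
    apply hzne
    have him : z.im = 0 := by
      have : z.im ^ 2 ≤ 0 := by nlinarith
      exact pow_eq_zero_iff two_ne_zero |>.mp (le_antisymm this (sq_nonneg _))
    have hre' : z.re = ρ := by
      refine le_antisymm ?_ h8
      nlinarith [sq_nonneg z.im]
    exact Complex.ext (by simpa using hre') (by simpa using him)

end
end UB

/-- The probability `g_n` that two uniformly random plane
unary-binary trees of size `n` are isomorphic satisfies
`g_n / (n^(3/2) δ^n) → C` for some constants `C > 0` and `δ ∈ (0,1)`. -/
theorem prob_isom_unary_binary_asymptotics :
    ∃ C δ : ℝ, 0 < C ∧ 0 < δ ∧ δ < 1 ∧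
      Filter.Tendsto
        (fun n : ℕ => probIsomUB n / ((n : ℝ) ^ (3 / 2 : ℝ) * δ ^ n))
        Filter.atTop (nhds C) := by
  obtain ⟨ρ, C1, hρ, hC1, h1⟩ := UB.S_asymp
  obtain ⟨C2, hC2, h2⟩ := UB.M_asymp
  have hρ0 : 0 < ρ := by linarith
  refine ⟨C1 / C2 ^ 2, 1 / (9 * ρ), by positivity, by positivity, ?_, ?_⟩
  · rw [div_lt_one (by positivity)]; linarith
  · refine (h1.div (h2.pow 2) (by positivity)).congr' ?_
    filter_upwards [Filter.eventually_gt_atTop 0] with n hn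
    have hn' : (0:ℝ) < n := by exact_mod_cast hn
    have hx : (n:ℝ) ^ (3 / 2 : ℝ) ≠ 0 := by positivity
    rw [UB.prob_eq]
    have e9 : (1 / (9 * ρ)) ^ n = ((1/3:ℝ)^n)^2 / ρ ^ n := by
      rw [← pow_mul, mul_comm n 2, pow_mul, ← div_pow]
      congr 1
      field_simp; norm_num
    rw [e9]
    have h3 : (1/3:ℝ)^n ≠ 0 := by positivity
    have hr : ρ ^ n ≠ 0 := by positivity
    simp only [Pi.div_apply]
    generalize (n:ℝ) ^ (3 / 2 : ℝ) = t at *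
    generalize (1/3:ℝ)^n = u at *
    generalize ρ ^ n = v at *
    by_cases hM : UB.PT.M n = 0
    · simp [hM]
    · field_simp
end

section
/- For every n ≥ 1, ∑_T ∏_v outdeg(v)! = n! · Catalan(n−1), where the sum runs over all rooted labeled trees T on n vertices, the product runs over all vertices v of T, and Catalan(m) is the m-th Catalan number. -/
open scoped Classical BigOperators

namespace CatAux

open Finset

/-- Out-degree for a rooted graph on any vertex type. -/
noncomputable def od {V : Type} (G : SimpleGraph V) (r x : V) : ℕ :=
  if x = r then (G.neighborSet x).ncard else (G.neighborSet x).ncard - 1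

lemma ncard_eq_degree {V : Type} [Fintype V] (G : SimpleGraph V) (x : V) :
    (G.neighborSet x).ncard = G.degree x := by
  rw [Set.ncard_eq_toFinset_card']; rfl

lemma tree_iff {V : Type} [Fintype V] (G : SimpleGraph V) (v : V)
    (u : ({v}ᶜ : Set V)) (h : ∀ x, G.Adj v x ↔ x = u) :
    G.IsTree ↔ (G.induce {v}ᶜ).IsTree := by
  have hdeg : G.degree v = 1 := by
    rw [SimpleGraph.degree_eq_one_iff_existsUnique_adj]
    exact ⟨u, (h _).2 rfl, fun y hy => (h y).1 hy⟩
  have hconn : G.Connected ↔ (G.induce {v}ᶜ).Connected := by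
    refine ⟨fun hc => hc.induce_compl_singleton_of_degree_eq_one hdeg, fun hc => ?_⟩
    have key : ∀ x, G.Reachable x u := by
      intro x
      by_cases hx : x = v
      · subst hx; exact ((h _).2 rfl).reachable
      · exact (hc.preconnected ⟨x, hx⟩ u).map (SimpleGraph.Embedding.induce _).toHom
    have : Nonempty V := ⟨v⟩
    exact ⟨fun x y => (key x).trans (key y).symm⟩
  rw [SimpleGraph.isTree_iff_connected_and_card, SimpleGraph.isTree_iff_connected_and_card, hconn]
  have e1 := G.card_edgeFinset_induce_compl_singleton v
  have e2 := G.card_edgeFinset_deleteIncidenceSet v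
  rw [hdeg] at e2
  have e3 : 0 < #G.edgeFinset := Finset.card_pos.2 ⟨s(v, u.1), by simp [h]⟩
  have e4 : Nat.card G.edgeSet = #G.edgeFinset := by
    rw [Nat.card_eq_fintype_card, SimpleGraph.edgeFinset_card]
  have e5 : Nat.card (G.induce {v}ᶜ).edgeSet = #(G.induce {v}ᶜ).edgeFinset := by
    rw [Nat.card_eq_fintype_card, SimpleGraph.edgeFinset_card]
  have e6 : Nat.card ({v}ᶜ : Set V) + 1 = Nat.card V := by
    have := Set.ncard_add_ncard_compl ({v} : Set V)
    rw [Set.ncard_singleton] at this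
    rw [Nat.card_coe_set_eq]; omega
  constructor
  · rintro ⟨a, b⟩; exact ⟨a, by omega⟩
  · rintro ⟨a, b⟩; exact ⟨a, by omega⟩

lemma deg_induce {V : Type} [Fintype V] (G : SimpleGraph V) (v : V)
    (u : ({v}ᶜ : Set V)) (h : ∀ x, G.Adj v x ↔ x = u) (x : ({v}ᶜ : Set V)) :
    (G.neighborSet x).ncard =
      ((G.induce {v}ᶜ).neighborSet x).ncard + if x = u then 1 else 0 := by
  have h0 : ((G.induce {v}ᶜ).neighborSet x).ncard =
      (Subtype.val '' ((G.induce {v}ᶜ).neighborSet x)).ncard :=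
    (Set.ncard_image_of_injective _ Subtype.val_injective).symm
  rw [h0]
  split_ifs with hx
  · subst hx
    rw [← Set.ncard_insert_of_notMem (a := v)]
    · congr 1
      ext y
      have := (h x).2 rfl
      by_cases hy : y = v
      · simp [hy, this.symm]
      · simp [hy]
    · simp
  · rw [add_zero]
    congr 1
    ext y
    by_cases hy : y = v
    · subst hy
      have : ¬ G.Adj x y := fun h' => hx (Subtype.ext ((h _).1 h'.symm))
      simp [this]
    · simp [hy]

lemma pos_of_conn {V : Type} [Fintype V] (G : SimpleGraph V) (hG : G.Connected) {x y : V}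
    (hxy : x ≠ y) : 0 < (G.neighborSet x).ncard := by
  have : Nontrivial V := ⟨x, y, hxy⟩
  rw [ncard_eq_degree]
  exact hG.preconnected.degree_pos_of_nontrivial x

lemma od_induce {V : Type} [Fintype V] (G : SimpleGraph V) (v : V)
    (u : ({v}ᶜ : Set V)) (h : ∀ x, G.Adj v x ↔ x = u) (hG : (G.induce {v}ᶜ).IsTree)
    (r x : ({v}ᶜ : Set V)) :
    od G r x = od (G.induce {v}ᶜ) r x + if x = u then 1 else 0 := by
  unfold od
  rw [deg_induce G v u h x]
  by_cases hx : x = r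
  · simp [hx]
  · have : (x : V) ≠ r := fun h => hx (Subtype.ext h)
    have := pos_of_conn _ hG.connected hx
    simp only [*, if_false]
    omega

/-- Adding a leaf. -/
def addLeaf {V : Type} (v : V) (u : ({v}ᶜ : Set V)) (H : SimpleGraph ({v}ᶜ : Set V)) :
    SimpleGraph V where
  Adj x y := (∃ (hx : x ≠ v) (hy : y ≠ v), H.Adj ⟨x, hx⟩ ⟨y, hy⟩) ∨
    (x = v ∧ y = u) ∨ (y = v ∧ x = u)
  symm := ⟨by
    rintro x y (⟨hx, hy, h⟩ | h | h)
    · exact Or.inl ⟨hy, hx, h.symm⟩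
    · exact Or.inr (Or.inr h)
    · exact Or.inr (Or.inl h)⟩
  loopless := ⟨by
    rintro x (⟨hx, hy, h⟩ | ⟨h, h'⟩ | ⟨h, h'⟩)
    · exact H.loopless.irrefl _ h
    · exact u.2 (h'.symm.trans h)
    · exact u.2 (h'.symm.trans h)⟩

lemma addLeaf_adj {V : Type} (v : V) (u : ({v}ᶜ : Set V)) (H : SimpleGraph ({v}ᶜ : Set V))
    (x : V) : (addLeaf v u H).Adj v x ↔ x = u := by
  have : v ≠ u := fun h => u.2 h.symm
  simp [addLeaf, this]

lemma addLeaf_induce {V : Type} (v : V) (u : ({v}ᶜ : Set V)) (H : SimpleGraph ({v}ᶜ : Set V)) :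
    (addLeaf v u H).induce {v}ᶜ = H := by
  ext x y
  have hx : (x : V) ≠ v := x.2
  have hy : (y : V) ≠ v := y.2
  simp [addLeaf, hx, hy]

lemma induce_addLeaf {V : Type} (G : SimpleGraph V) (v : V)
    (u : ({v}ᶜ : Set V)) (h : ∀ x, G.Adj v x ↔ x = u) :
    addLeaf v u (G.induce {v}ᶜ) = G := by
  ext x y
  have := fun x => (G.adj_comm x v).trans (h x)
  have hu : (u : V) ≠ v := u.2
  by_cases hx : x = v <;> by_cases hy : y = v <;> simp_all [addLeaf, eq_comm]

/-- Rooted trees with given out-degrees. -/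
noncomputable def A {V : Type} [Fintype V] (d : V → ℕ) : Finset (SimpleGraph V × V) :=
  {p | p.1.IsTree ∧ ∀ x, od p.1 p.2 x = d x}

lemma mem_A {V : Type} [Fintype V] (d : V → ℕ) (p : SimpleGraph V × V) :
    p ∈ A d ↔ p.1.IsTree ∧ ∀ x, od p.1 p.2 x = d x := by simp [A]

lemma leaf {V : Type} [Fintype V] (d : V → ℕ) {v w : V} (hvw : v ≠ w) (hv : d v = 0)
    (p : SimpleGraph V × V) (hp : p ∈ A d) : p.2 ≠ v ∧ (p.1.neighborSet v).ncard = 1 := by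
  rw [mem_A] at hp
  have h1 := pos_of_conn _ hp.1.connected hvw
  have h2 := hp.2 v
  rw [hv, od] at h2
  split_ifs at h2 with h3
  · omega
  · exact ⟨fun h => h3 h.symm, by omega⟩

lemma card_fiber {V : Type} [Fintype V] (d : V → ℕ) {v w : V} (hvw : v ≠ w) (hv : d v = 0)
    (u : ({v}ᶜ : Set V)) (d' : ({v}ᶜ : Set V) → ℕ)
    (hd : ∀ x : ({v}ᶜ : Set V), d x = d' x + if x = u then 1 else 0) :
    #{p ∈ A d | p.1.neighborSet v = {u.1}} = #(A d') := by
  symm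
  refine Finset.card_bij (fun p _ => (addLeaf v u p.1, p.2.1)) ?_ ?_ ?_
  · rintro ⟨H, s⟩ hp
    rw [mem_A] at hp
    have ha := addLeaf_adj v u H
    have hi := addLeaf_induce v u H
    have ht : ((addLeaf v u H).induce {v}ᶜ).IsTree := by rw [hi]; exact hp.1
    have hn : (addLeaf v u H).neighborSet v = {u.1} := by ext x; simp [ha]
    rw [mem_filter, mem_A]
    refine ⟨⟨(tree_iff _ v u ha).2 ht, fun x => ?_⟩, hn⟩
    by_cases hx : x = v
    · subst hx
      have : x ≠ s := fun h => s.2 h.symm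
      simp [od, this, hn, hv]
    · have := od_induce _ v u ha ht s ⟨x, hx⟩
      rw [hi, hp.2, ← hd] at this
      exact this
  · rintro ⟨H, s⟩ _ ⟨H', s'⟩ _ h
    simp only [Prod.mk.injEq] at h
    have := congrArg (fun G => G.induce {v}ᶜ) h.1
    simp only [addLeaf_induce] at this
    rw [this, Subtype.ext h.2]
  · rintro ⟨G, r⟩ hp
    rw [mem_filter] at hp
    have hl := leaf d hvw hv _ hp.1
    obtain ⟨hp, hn⟩ := hp
    rw [mem_A] at hp
    have ha : ∀ x, G.Adj v x ↔ x = u := by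
      intro x
      rw [← SimpleGraph.mem_neighborSet]
      simp only at hn
      rw [hn]; simp
    have ht := (tree_iff _ v u ha).1 hp.1
    refine ⟨(G.induce {v}ᶜ, ⟨r, hl.1⟩), ?_, ?_⟩
    · rw [mem_A]
      refine ⟨ht, fun x => ?_⟩
      have := od_induce _ v u ha ht ⟨r, hl.1⟩ x
      have h2 := hp.2 x
      have h3 := hd x
      simp only at this h2 ⊢
      omega
    · simp only [induce_addLeaf G v u ha]

lemma fiber_empty {V : Type} [Fintype V] (d : V → ℕ) {v w : V} (hvw : v ≠ w) (hv : d v = 0)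
    (u : ({v}ᶜ : Set V)) (hu : d u = 0) :
    #{p ∈ A d | p.1.neighborSet v = {u.1}} = 0 := by
  rw [Finset.card_eq_zero, Finset.eq_empty_iff_forall_notMem]
  rintro ⟨G, r⟩ hp
  rw [mem_filter] at hp
  have hl := leaf d hvw hv _ hp.1
  obtain ⟨hp, hn⟩ := hp
  rw [mem_A] at hp
  have ha : ∀ x, G.Adj v x ↔ x = u := by
    intro x
    rw [← SimpleGraph.mem_neighborSet]
    simp only at hn
    rw [hn]; simp
  have ht := (tree_iff _ v u ha).1 hp.1
  have := od_induce _ v u ha ht ⟨r, hl.1⟩ u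
  have h2 := hp.2 u
  simp only [if_true] at this h2
  omega

lemma card_A_sum {V : Type} [Fintype V] (d : V → ℕ) {v w : V} (hvw : v ≠ w) (hv : d v = 0) :
    #(A d) = ∑ u : ({v}ᶜ : Set V), #{p ∈ A d | p.1.neighborSet v = {u.1}} := by
  rw [← Finset.card_biUnion]
  · congr 1
    ext p
    simp only [mem_biUnion, mem_univ, true_and, mem_filter, exists_and_left]
    refine ⟨fun hp => ⟨hp, ?_⟩, fun h => h.1⟩
    obtain ⟨u, hu⟩ := Set.ncard_eq_one.1 (leaf d hvw hv p hp).2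
    have : p.1.Adj v u := by rw [← SimpleGraph.mem_neighborSet, hu]; rfl
    exact ⟨⟨u, this.ne'⟩, hu⟩
  · intro x _ y _ hxy
    rw [Function.onFun, Finset.disjoint_left]
    intro p hp hq
    rw [mem_filter] at hp hq
    exact hxy (Subtype.ext (Set.singleton_injective (hp.2.symm.trans hq.2)))

lemma main_count (n : ℕ) : ∀ (V : Type) [Fintype V] (d : V → ℕ), Fintype.card V = n + 1 →
    ∑ x, d x = n → #(A d) * ∏ x, (d x).factorial = n.factorial := by
  induction n with
  | zero =>
    intro V _ d hV hd
    obtain ⟨r, hr⟩ := Fintype.card_eq_one_iff.1 hV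
    have : Subsingleton V := ⟨fun a b => (hr a).trans (hr b).symm⟩
    have : Nonempty V := ⟨r⟩
    have hd0 : ∀ x, d x = 0 := fun x => by
      simpa using (Finset.sum_eq_zero_iff.1 hd x (mem_univ x))
    have : A d = {(⊥, r)} := by
      ext ⟨G, s⟩
      rw [mem_A]
      have : G = ⊥ := Subsingleton.elim _ _
      subst this
      have hs := hr s
      subst hs
      simp only [mem_singleton, iff_true]
      refine ⟨SimpleGraph.IsTree.of_subsingleton, fun x => ?_⟩
      rw [hd0]
      simp [od]
    simp [this, hd0]
  | succ n ih =>
    intro V _ d hV hd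
    obtain ⟨v, hv⟩ : ∃ v, d v = 0 := by
      by_contra! hc
      have : ∑ x : V, 1 ≤ ∑ x, d x :=
        Finset.sum_le_sum fun x _ => Nat.one_le_iff_ne_zero.2 (hc x)
      simp at this
      omega
    have : Nontrivial V := Fintype.one_lt_card_iff_nontrivial.1 (by omega)
    obtain ⟨w, hw⟩ := exists_ne v
    have hvw := hw.symm
    have hS : ∑ x : ({v}ᶜ : Set V), d x = n + 1 := by
      have := Fintype.sum_eq_add_sum_subtype_ne d v
      rw [hv, hd, zero_add] at this
      rw [this]
      convert rfl <;> simp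
    have hP : ∏ x, (d x).factorial = ∏ x : ({v}ᶜ : Set V), (d x).factorial := by
      have := Fintype.prod_eq_mul_prod_subtype_ne (fun x => (d x).factorial) v
      rw [hv, Nat.factorial_zero, one_mul] at this
      rw [this]
      convert rfl <;> simp
    have hC : Fintype.card ({v}ᶜ : Set V) = n + 1 := by
      have := Fintype.card_compl_set ({v} : Set V)
      simp at this
      simp
      omega
    rw [card_A_sum d hvw hv, Finset.sum_mul]
    have key : ∀ u : ({v}ᶜ : Set V), #{p ∈ A d | p.1.neighborSet v = {u.1}} *
        ∏ x, (d x).factorial = d u * n.factorial := by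
      intro u
      by_cases hu : d u = 0
      · rw [fiber_empty d hvw hv u hu, hu]; simp
      · let d' : ({v}ᶜ : Set V) → ℕ := fun x => d x - if x = u then 1 else 0
        have hd' : ∀ x : ({v}ᶜ : Set V), d x = d' x + if x = u then 1 else 0 := by
          intro x
          simp only [d']
          split_ifs with h
          · subst h; omega
          · omega
        rw [card_fiber d hvw hv u d' hd', hP]
        have hs' : ∑ x, d' x = n := by
          have : ∑ x : ({v}ᶜ : Set V), d x = ∑ x, d' x + 1 := by
            rw [Finset.sum_congr rfl (fun x _ => hd' x), Finset.sum_add_distrib]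
            simp
          omega
        have hp' : ∏ x : ({v}ᶜ : Set V), (d x).factorial = d u * ∏ x, (d' x).factorial := by
          rw [← Finset.mul_prod_erase univ _ (mem_univ u),
            ← Finset.mul_prod_erase univ (fun x => (d' x).factorial) (mem_univ u), ← mul_assoc]
          congr 1
          · have : d' u = d u - 1 := by simp [d']
            rw [this, Nat.mul_factorial_pred hu]
          · refine Finset.prod_congr rfl fun x hx => ?_
            rw [hd' x, if_neg (Finset.ne_of_mem_erase hx), add_zero]
        rw [hp', ← ih _ d' hC hs']
        ring
    rw [Finset.sum_congr rfl (fun u _ => key u), ← Finset.sum_mul, hS, Nat.factorial_succ]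

lemma sum_od {V : Type} [Fintype V] (G : SimpleGraph V) (hG : G.IsTree) (r : V) :
    ∑ x, od G r x + 1 = Fintype.card V := by
  have h1 := G.sum_degrees_eq_twice_card_edges
  have h2 := hG.card_edgeFinset
  have h3 : ∀ x, G.degree x + (if x = r then 1 else 0) = od G r x + 1 := by
    intro x
    unfold od
    rw [ncard_eq_degree]
    split_ifs with h
    · rfl
    · have := pos_of_conn G hG.connected h
      rw [ncard_eq_degree] at this
      omega
  have h4 := Finset.sum_congr (rfl : (univ : Finset V) = univ) (fun x _ => h3 x)
  rw [Finset.sum_add_distrib, Finset.sum_add_distrib] at h4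
  simp at h4
  omega

lemma od_eq {n : ℕ} (T : RTree n) (x : Fin n) : od T.graph T.root x = T.outdeg x := by
  unfold od RTree.outdeg
  by_cases h : x = T.root <;> simp [h]

end CatAux

open CatAux in
/-- For `n ≥ 1`, the total number of plane representations of
all rooted labeled trees on `n` vertices is `n! · Catalan(n-1)`:
`∑_T ∏_v outdeg(v)! = n! · C_{n-1}`. -/
theorem sum_products_outdeg_factorials_eq_catalan (n : ℕ) (hn : 1 ≤ n) :
    ∑ T : RTree n, ∏ v, (T.outdeg v).factorial =
      n.factorial * catalan (n - 1) := by
  obtain ⟨m, rfl⟩ : ∃ m, n = m + 1 := ⟨n - 1, by omega⟩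
  have hmaps : ∀ T ∈ (Finset.univ : Finset (RTree (m + 1))),
      (fun v => T.outdeg v) ∈ Finset.piAntidiag (Finset.univ : Finset (Fin (m + 1))) m := by
    intro T _
    have h := sum_od T.graph T.isTree T.root
    simp only [Fintype.card_fin, od_eq] at h
    rw [Finset.mem_piAntidiag]
    exact ⟨Nat.succ_injective h, fun _ _ => Finset.mem_univ _⟩
  rw [← Finset.sum_fiberwise_of_maps_to hmaps]
  have key : ∀ d ∈ Finset.piAntidiag (Finset.univ : Finset (Fin (m + 1))) m,
      ∑ T : RTree (m + 1) with (fun v => T.outdeg v) = d, ∏ v, (T.outdeg v).factorial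
        = m.factorial := by
    intro d hd
    rw [Finset.mem_piAntidiag] at hd
    rw [← main_count m (Fin (m + 1)) d (by simp) hd.1]
    rw [Finset.sum_congr rfl (g := fun _ => ∏ v, (d v).factorial)]
    · rw [Finset.sum_const, smul_eq_mul]
      congr 1
      refine Finset.card_bij (fun T _ => (T.graph, T.root)) ?_ ?_ ?_
      · intro T hT
        rw [Finset.mem_filter] at hT
        rw [mem_A]
        exact ⟨T.isTree, fun x => (od_eq T x).trans (congrFun hT.2 x)⟩
      · rintro ⟨G, h, r⟩ _ ⟨G', h', r'⟩ _ he
        simp_all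
      · rintro ⟨G, r⟩ hp
        rw [mem_A] at hp
        exact ⟨⟨G, hp.1, r⟩, by
          rw [Finset.mem_filter]
          exact ⟨Finset.mem_univ _, funext fun x => (od_eq ⟨G, hp.1, r⟩ x).symm.trans (hp.2 x)⟩, rfl⟩
    · intro T hT
      rw [Finset.mem_filter] at hT
      rw [← hT.2]
  rw [Finset.sum_congr rfl key, Finset.sum_const, smul_eq_mul,
    ← Finset.map_sym_eq_piAntidiag, Finset.card_map]
  have hc : (Finset.sym (Finset.univ : Finset (Fin (m + 1))) m).card = m.centralBinom := by
    rw [Finset.sym_univ, Finset.card_univ, Sym.card_sym_eq_choose, Fintype.card_fin,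
      Nat.centralBinom]
    congr 1
    omega
  rw [hc, ← succ_mul_catalan_eq_centralBinom, Nat.factorial_succ, Nat.add_sub_cancel]
  ring
end

section
/- For every n ≥ 1 and every rooted labeled tree T on n vertices, ∏_v outdeg(v)! ≤ 4^n · |Aut(T)|, where the product runs over all vertices v of T and Aut(T) is the group of root-fixing graph automorphisms of T. (Equivalently, the number of plane representations of any Pólya tree of size n is less than 4^n.) -/
open scoped Classical BigOperators

namespace RTree

lemma exists_parent {n : ℕ} (T : RTree n) :
    ∃ (p : Fin n → Fin n) (h : Fin n → ℕ), p T.root = T.root ∧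
      (∀ v, v ≠ T.root → h (p v) < h v) ∧
      ∀ u v, T.graph.Adj u v ↔ (u ≠ T.root ∧ p u = v) ∨ (v ≠ T.root ∧ p v = u) := by
  obtain ⟨G, hG, r⟩ := T
  dsimp only
  choose f hf hf' using (hG.existsUnique_path · r)
  have hadj : ∀ v, v ≠ r → G.Adj v (f v).snd := fun v hv =>
    (f v).adj_snd (SimpleGraph.Walk.not_nil_of_ne hv)
  refine ⟨fun v => (f v).snd, fun v => (f v).length, ?_, ?_, ?_⟩
  · have : f r = .nil := SimpleGraph.Walk.isPath_iff_eq_nil.1 (hf r)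
    simp [this]
  · intro v hv
    have h1 : (f v).tail = f (f v).snd := hf' _ _ (hf v).tail
    have h2 := SimpleGraph.Walk.length_tail_add_one (p := f v) (SimpleGraph.Walk.not_nil_of_ne hv)
    dsimp only
    rw [← h1]
    omega
  · intro u v
    constructor
    · intro huv
      by_cases hv : v ∈ (f u).support
      · left
        refine ⟨?_, (hG.isAcyclic.eq_snd_of_adj_start (hf u) huv hv).symm⟩
        rintro rfl
        have : f u = .nil := SimpleGraph.Walk.isPath_iff_eq_nil.1 (hf u)
        rw [this] at hv
        simp at hv
        exact huv.ne hv.symm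
      · right
        have h1 : (f u).cons huv.symm = f v := hf' v _ ((hf u).cons hv)
        refine ⟨?_, ?_⟩
        · rintro rfl
          exact hv (f u).end_mem_support
        · dsimp only
          rw [← h1]; simp
    · rintro (⟨h, rfl⟩ | ⟨h, rfl⟩)
      · exact hadj _ h
      · exact (hadj _ h).symm

lemma exists_key {n : ℕ} (p : Fin n → Fin n) (r : Fin n) (h : Fin n → ℕ)
    (hp : ∀ v, v ≠ r → h (p v) < h v) (s : Fin n → ℕ) :
    ∃ k : Fin n → ℕ, k r = 1 ∧ ∀ v, v ≠ r → k v = (n + 1) * k (p v) + s v := by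
  let k : Fin n → ℕ := (measure h).wf.fix fun v ih =>
    if hv : v = r then 1 else (n + 1) * ih (p v) (hp v hv) + s v
  have hk : ∀ v, k v = if v = r then 1 else (n + 1) * k (p v) + s v := by
    intro v
    have := (measure h).wf.fix_eq (fun v ih =>
      if hv : v = r then 1 else (n + 1) * ih (p v) (hp v hv) + s v) v
    simpa [k] using this
  exact ⟨k, by rw [hk]; simp, fun v hv => by rw [hk]; simp [hv]⟩

lemma card_monotone_le (n : ℕ) :
    (Finset.univ.filter fun q : Fin n → Fin n => Monotone q).card ≤ 4 ^ n := by
  have key : ∀ q : Fin n → Fin n, Monotone q → StrictMono fun i => (q i : ℕ) + i := by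
    intro q hq i j hij
    have : (q i : ℕ) ≤ q j := hq hij.le
    have : (i : ℕ) < j := hij
    dsimp only
    omega
  have : (4 : ℕ) ^ n = ((Finset.range (2 * n)).powerset).card := by
    rw [Finset.card_powerset, Finset.card_range, pow_mul]; norm_num
  rw [this]
  refine Finset.card_le_card_of_injOn
    (fun q => Finset.univ.image fun i => (q i : ℕ) + i) ?_ ?_
  · intro q _
    simp only [Finset.coe_powerset, Set.mem_preimage, Set.mem_powerset_iff, Finset.coe_subset]
    intro x hx
    simp only [Finset.mem_image, Finset.mem_univ, true_and] at hx
    obtain ⟨i, rfl⟩ := hx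
    have := (q i).2
    have := i.2
    simp only [Finset.mem_range]
    omega
  · intro q hq q' hq' hqq
    simp only [Finset.coe_filter, Finset.mem_univ, true_and, Set.mem_ofPred_eq] at hq hq'
    have h1 : Set.range (fun i => (q i : ℕ) + i) = Set.range (fun i => (q' i : ℕ) + i) := by
      have := congrArg (fun s : Finset ℕ => (s : Set ℕ)) hqq
      simpa using this
    have h2 := ((key q hq).range_inj (key q' hq')).1 h1
    funext i
    have := congrFun h2 i
    exact Fin.ext (by omega)

lemma core {n : ℕ} (p : Fin n → Fin n) (r : Fin n) (h : Fin n → ℕ) (hr : p r = r)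
    (hp : ∀ v, v ≠ r → h (p v) < h v) :
    ∏ v, (Fintype.card {u // u ≠ r ∧ p u = v}).factorial ≤
      4 ^ n * Nat.card {φ : Equiv.Perm (Fin n) // ∀ v, φ (p v) = p (φ v)} := by
  let S := ∀ v, {u // u ≠ r ∧ p u = v} ≃ Fin (Fintype.card {u // u ≠ r ∧ p u = v})
  have hS : Fintype.card S = ∏ v, (Fintype.card {u // u ≠ r ∧ p u = v}).factorial := by
    rw [Fintype.card_pi]
    refine Finset.prod_congr rfl fun v _ => ?_
    rw [Fintype.card_equiv (Fintype.equivFin _)]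
  let s : S → Fin n → ℕ := fun σ u => if hu : u ≠ r then (σ (p u) ⟨u, hu, rfl⟩ : ℕ) else 0
  have hs : ∀ σ u, s σ u < n + 1 := by
    intro σ u
    by_cases hu : u = r
    · simp [s, hu]
    · simp only [s, dif_pos (show u ≠ r from hu)]
      have h1 := (σ (p u) ⟨u, hu, rfl⟩).2
      have h2 := Fintype.card_subtype_le (fun w => w ≠ r ∧ p w = p u)
      rw [Fintype.card_fin] at h2
      omega
  have hs' : ∀ (σ : S) v (u : {u // u ≠ r ∧ p u = v}), s σ u = σ v u := by
    rintro σ v ⟨u, hu, rfl⟩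
    simp [s, hu]
  choose k hk1 hk using fun σ => exists_key p r h hp (s σ)
  have hn : 0 < n := r.pos
  have hkpos : ∀ σ v, 1 ≤ k σ v := by
    intro σ v
    induction hv : h v using Nat.strong_induction_on generalizing v with
    | _ m ih =>
      by_cases hvr : v = r
      · rw [hvr, hk1]
      · have h1 := ih _ (hv ▸ hp v hvr) (p v) rfl
        rw [hk σ v hvr]
        nlinarith
  have hkgt : ∀ σ v, v ≠ r → 1 < k σ v := by
    intro σ v hv
    rw [hk σ v hv]
    have := hkpos σ (p v)
    nlinarith
  have hdiv : ∀ σ v, v ≠ r → k σ v / (n + 1) = k σ (p v) := by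
    intro σ v hv
    rw [hk σ v hv, Nat.mul_add_div (by omega), Nat.div_eq_of_lt (hs σ v), add_zero]
  have hinj : ∀ σ, Function.Injective (k σ) := by
    intro σ u v
    induction hv : h u using Nat.strong_induction_on generalizing u v with
    | _ m ih =>
      intro huv
      by_cases hur : u = r
      · by_contra hne
        have := hkgt σ v (fun hvr => hne (hur.trans hvr.symm))
        rw [← huv, hur, hk1] at this
        omega
      by_cases hvr : v = r
      · have := hkgt σ u hur
        rw [huv, hvr, hk1] at this
        omega
      have hpp : p u = p v := by
        refine ih _ (hv ▸ hp u hur) rfl ?_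
        rw [← hdiv σ u hur, ← hdiv σ v hvr, huv]
      rw [hk σ u hur, hk σ v hvr, hpp] at huv
      have h1 : s σ u = s σ v := by omega
      have h2 := hs' σ (p v) ⟨u, hur, hpp⟩
      have h3 := hs' σ (p v) ⟨v, hvr, rfl⟩
      dsimp only at h2 h3
      rw [h1, h3] at h2
      have := (σ (p v)).injective (Fin.ext h2)
      exact (congrArg Subtype.val this).symm
  have hmono : ∀ σ u v, k σ u ≤ k σ v → k σ (p u) ≤ k σ (p v) := by
    intro σ u v huv
    by_cases hur : u = r
    · rw [hur, hr, hk1]; exact hkpos _ _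
    by_cases hvr : v = r
    · have := hkgt σ u hur
      rw [hvr, hk1] at huv
      omega
    rw [← hdiv σ u hur, ← hdiv σ v hvr]
    exact Nat.div_le_div_right huv
  let e : S → Equiv.Perm (Fin n) := fun σ => Tuple.sort (k σ)
  have he : ∀ σ, StrictMono (k σ ∘ e σ) := fun σ =>
    (Tuple.monotone_sort (k σ)).strictMono_of_injective ((hinj σ).comp (e σ).injective)
  let q : S → Fin n → Fin n := fun σ i => (e σ).symm (p (e σ i))
  have hq : ∀ σ, Monotone (q σ) := by
    intro σ i j hij
    rw [← (he σ).le_iff_le]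
    have h1 := (he σ).monotone hij
    simpa [q] using hmono σ _ _ h1
  -- e determines σ
  have heinj : Function.Injective e := by
    intro σ τ hστ
    have hlt : ∀ u w, k σ u < k σ w ↔ k τ u < k τ w := by
      intro u w
      have h1 := (he σ).lt_iff_lt (a := (e σ).symm u) (b := (e σ).symm w)
      have h2 := (he τ).lt_iff_lt (a := (e τ).symm u) (b := (e τ).symm w)
      simp only [Function.comp, Equiv.apply_symm_apply] at h1 h2
      rw [h1, h2, hστ]
    have hsib : ∀ (ρ : S) v (a b : {u // u ≠ r ∧ p u = v}), ρ v a < ρ v b ↔ k ρ a < k ρ b := by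
      intro ρ v a b
      rw [Fin.lt_def, ← hs', ← hs', hk ρ a a.2.1, hk ρ b b.2.1, a.2.2, b.2.2]
      omega
    funext v
    have hab : ∀ a b, σ v a < σ v b ↔ τ v a < τ v b := by
      intro a b
      rw [hsib, hsib, hlt]
    have hsm : StrictMono ((σ v).symm.trans (τ v)) := by
      intro i j hij
      simp only [Equiv.trans_apply]
      rw [← hab]
      simpa using hij
    have hsm' : StrictMono (id : Fin (Fintype.card {u // u ≠ r ∧ p u = v}) → _) := strictMono_id
    have hid := (hsm.range_inj hsm').1 (by
      rw [Set.range_id, ((σ v).symm.trans (τ v)).surjective.range_eq])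
    ext a : 1
    have := congrFun hid (σ v a)
    simpa using this.symm
  rw [← hS, mul_comm]
  have hfib := Finset.card_le_mul_card_image_of_maps_to (s := (Finset.univ : Finset S))
    (t := Finset.univ.filter fun q : Fin n → Fin n => Monotone q) (f := q)
    (fun σ _ => by simpa using hq σ)
    (Nat.card {φ : Equiv.Perm (Fin n) // ∀ v, φ (p v) = p (φ v)}) (by
      intro c _
      by_cases hne : (Finset.univ.filter fun σ => q σ = c).Nonempty
      swap
      · rw [Finset.not_nonempty_iff_eq_empty.1 hne]; simp
      obtain ⟨τ, hτ⟩ := hne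
      simp only [Finset.mem_filter, Finset.mem_univ, true_and] at hτ
      rw [Nat.card_eq_fintype_card, Fintype.card_subtype]
      refine Finset.card_le_card_of_injOn (fun σ => (e τ).symm.trans (e σ)) ?_ ?_
      · intro σ hσ
        simp only [Finset.coe_filter, Finset.mem_univ, true_and, Set.mem_ofPred_eq] at hσ ⊢
        intro v
        have h1 := congrFun (hσ.trans hτ.symm) ((e τ).symm v)
        simp only [q, Equiv.apply_symm_apply] at h1
        simp only [Equiv.trans_apply]
        rw [← h1, Equiv.apply_symm_apply]
      · intro σ _ σ' _ hh
        apply heinj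
        ext i : 1
        have := congrArg (fun f : Equiv.Perm (Fin n) => f (e τ i)) hh
        simpa using this)
  rw [Finset.card_univ] at hfib
  exact hfib.trans (Nat.mul_le_mul_left _ (card_monotone_le n))

end RTree

/-- For every rooted labeled tree `T` on `n ≥ 1` vertices,
`∏_v outdeg(v)! ≤ 4^n · |Aut(T)|`; equivalently, the number of plane
representations of a Pólya tree of size `n` is less than `4^n`. -/
theorem prod_outdeg_factorials_le_four_pow_mul_autCard
    (n : ℕ) (hn : 1 ≤ n) (T : RTree n) :
    ∏ v, (T.outdeg v).factorial ≤ 4 ^ n * T.autCard := by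
  obtain ⟨p, h, hr, hp, hadj⟩ := T.exists_parent
  have hdeg : ∀ v, T.outdeg v = Fintype.card {u // u ≠ T.root ∧ p u = v} := by
    intro v
    have hc : Fintype.card {u // u ≠ T.root ∧ p u = v} =
        ({u | u ≠ T.root ∧ p u = v} : Set (Fin n)).ncard := by
      rw [← Nat.card_eq_fintype_card]; rfl
    rw [hc, RTree.outdeg]
    split_ifs with hv
    · congr 1
      ext u
      simp only [SimpleGraph.mem_neighborSet, hadj, Set.mem_ofPred_eq]
      tauto
    · have : T.graph.neighborSet v = insert (p v) {u | u ≠ T.root ∧ p u = v} := by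
        ext u
        simp only [SimpleGraph.mem_neighborSet, hadj, Set.mem_ofPred_eq, Set.mem_insert_iff]
        constructor
        · rintro (h | h)
          · exact Or.inl h.2.symm
          · exact Or.inr h
        · rintro (h | h)
          · exact Or.inl ⟨hv, h.symm⟩
          · exact Or.inr h
      rw [this, Set.ncard_insert_of_notMem, Nat.add_sub_cancel]
      rintro ⟨h1, h2⟩
      have := hp _ h1
      have := hp _ hv
      rw [h2] at *
      omega
  simp only [hdeg]
  refine (RTree.core p T.root h hr hp).trans (Nat.mul_le_mul_left _ ?_)
  have hfix : ∀ φ : Equiv.Perm (Fin n), (∀ v, φ (p v) = p (φ v)) → φ T.root = T.root := by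
    intro φ hφ
    by_contra hne
    have h1 := hp _ hne
    rw [← hφ, hr] at h1
    exact lt_irrefl _ h1
  have : Finite {φ : T.graph ≃g T.graph // φ T.root = T.root} :=
    Finite.of_injective (fun φ => (φ.1 : Fin n → Fin n)) (by
      intro φ ψ hh
      exact Subtype.ext (DFunLike.coe_injective hh))
  refine Nat.card_le_card_of_injective
    (fun φ : {φ : Equiv.Perm (Fin n) // ∀ v, φ (p v) = p (φ v)} =>
      (⟨⟨φ.1, ?_⟩, hfix φ.1 φ.2⟩ : {φ : T.graph ≃g T.graph // φ T.root = T.root})) ?_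
  · intro u v
    have hne : ∀ w, φ.1 w ≠ T.root ↔ w ≠ T.root := by
      intro w
      rw [not_iff_not]
      conv_lhs => rw [← hfix φ.1 φ.2]
      exact φ.1.injective.eq_iff
    rw [hadj, hadj, hne, hne, ← φ.2, ← φ.2, φ.1.injective.eq_iff, φ.1.injective.eq_iff]
  · intro φ ψ hh
    apply Subtype.ext
    have := congrArg (fun x => x.1.toEquiv) hh
    exact this
end

section
/- For j ≥ 1 and t ∈ ℝ, define c(j,t) = j · ∑_{λ ⊢ j} ((−1)^{ℓ(λ)−1}/ℓ(λ)) · (ℓ(λ)!/∏_m λ_m!) · ∏_m (m!)^{−λ_m·t}, a finite sum over all integer partitions λ of j, where λ_m is the number of parts of λ equal to m and ℓ(λ) = ∑_m λ_m is the total number of parts. Then |c(j,2)| ≤ j · 2^{j−1} for every j ≥ 1. -/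
open scoped BigOperators

/-- The coefficient `c(j,t)` from the Pólya-tree functional equation:
`c(j,t) = j · ∑_{λ ⊢ j} ((−1)^{ℓ(λ)−1}/ℓ(λ)) · (ℓ(λ)!/∏_m λ_m!) · ∏_m (m!)^{−λ_m t}`,
where the sum runs over the integer partitions of `j`, `λ_m` is the number of
parts equal to `m` and `ℓ(λ)` is the number of parts. -/
noncomputable def polyaC (j : ℕ) (t : ℝ) : ℝ :=
  j * ∑ P : Nat.Partition j,
    ((-1 : ℝ) ^ (Multiset.card P.parts - 1) / (Multiset.card P.parts : ℝ)) *
      (((Multiset.card P.parts).factorial : ℝ) /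
        ∏ m ∈ Finset.range (j + 1), ((P.parts.count m).factorial : ℝ)) *
      ∏ m ∈ Finset.range (j + 1),
        ((m.factorial : ℝ)) ^ (-(P.parts.count m : ℝ) * t)

theorem aux_count (l : List ℕ) (i : ℕ) :
    Fintype.card {a : Fin l.length // l.get a = i} = l.count i := by
  rw [Fintype.card_subtype]
  conv_rhs => rw [← List.ofFn_get l]
  rw [← Multiset.coe_count, ← Fin.univ_val_map, Multiset.count_map, Finset.card_def,
    Finset.filter_val]
  simp only [eq_comm]

theorem aux_stab (l : List ℕ) (N : ℕ) (h : ∀ x ∈ l, x < N) :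
    Fintype.card {g : Equiv.Perm (Fin l.length) // l.get ∘ g = l.get} =
      ∏ m ∈ Finset.range N, (l.count m).factorial := by
  rw [DomMulAct.stabilizer_card']
  simp only [aux_count]
  apply Finset.prod_subset
  · intro x hx
    simp only [Finset.mem_image, Finset.mem_univ, true_and] at hx
    obtain ⟨a, rfl⟩ := hx
    exact Finset.mem_range.2 (h _ (List.get_mem l a))
  · intro x _ hx
    have : x ∉ l := fun hl => hx (by
      obtain ⟨a, ha⟩ := List.get_of_mem hl
      exact Finset.mem_image.2 ⟨a, Finset.mem_univ _, ha⟩)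
    rw [List.count_eq_zero_of_not_mem this]
    rfl

theorem aux_fiber (j : ℕ) (P : Nat.Partition j) :
    (Multiset.card P.parts).factorial ≤
      (∏ m ∈ Finset.range (j + 1), (P.parts.count m).factorial) *
      (Finset.univ.filter (fun c : Composition j => Nat.Partition.ofComposition j c = P)).card := by
  classical
  obtain ⟨c0, rfl⟩ := Nat.Partition.ofComposition_surj P
  have hp : (Nat.Partition.ofComposition j c0).parts = (c0.blocks : Multiset ℕ) := rfl
  have hperm : ∀ σ : Equiv.Perm (Fin c0.blocks.length),
      (List.ofFn (c0.blocks.get ∘ σ)).Perm c0.blocks := fun σ => by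
    have := Equiv.Perm.ofFn_comp_perm σ c0.blocks.get
    rwa [List.ofFn_get] at this
  let F : Equiv.Perm (Fin c0.blocks.length) → Composition j := fun σ =>
    ⟨List.ofFn (c0.blocks.get ∘ σ), fun {i} hi => c0.blocks_pos ((hperm σ).mem_iff.1 hi),
      by rw [(hperm σ).sum_eq, c0.blocks_sum]⟩
  have hF : ∀ σ τ, F σ = F τ → c0.blocks.get ∘ σ = c0.blocks.get ∘ τ := fun σ τ h =>
    List.ofFn_injective (congrArg Composition.blocks h)
  have key := Finset.card_le_mul_card_image_of_maps_to (s := Finset.univ) (f := F)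
    (t := Finset.univ.filter (fun c : Composition j =>
      Nat.Partition.ofComposition j c = Nat.Partition.ofComposition j c0))
    (fun σ _ => by
      simp only [Finset.mem_filter, Finset.mem_univ, true_and]
      exact Nat.Partition.ext (Multiset.coe_eq_coe.2 (hperm σ)))
    (∏ m ∈ Finset.range (j + 1), (c0.blocks.count m).factorial)
    (fun b _ => by
      rw [← aux_stab c0.blocks (j + 1) (fun x hx => by
        have := List.le_sum_of_mem hx
        rw [c0.blocks_sum] at this
        omega)]
      by_cases he : ∃ σ, F σ = b
      · obtain ⟨σ, rfl⟩ := he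
        rw [Fintype.card_subtype]
        apply Finset.card_le_card_of_injOn (fun τ => τ * σ⁻¹)
        · intro τ hτ
          simp only [Finset.coe_filter, Finset.mem_univ, true_and, Set.mem_setOf_eq] at hτ ⊢
          have := hF _ _ hτ
          funext x
          have := congrFun this (σ⁻¹ x)
          simpa using this
        · intro a _ b _ hab
          exact mul_right_cancel hab
      · rw [Finset.filter_false_of_mem (fun σ _ hs => he ⟨σ, hs⟩)]
        simp)
  rw [Finset.card_univ, Fintype.card_perm, Fintype.card_fin] at key
  simpa [hp] using key

/-- `|c(j,2)| ≤ j · 2^{j-1}` for every `j ≥ 1`. -/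
theorem abs_polyaC_two_le (j : ℕ) (hj : 1 ≤ j) :
    |polyaC j 2| ≤ (j : ℝ) * 2 ^ (j - 1) := by
  rw [polyaC, abs_mul, Nat.abs_cast]
  apply mul_le_mul_of_nonneg_left _ (Nat.cast_nonneg j)
  have hcard : ∑ P : Nat.Partition j, ((Finset.univ.filter
      (fun c : Composition j => Nat.Partition.ofComposition j c = P)).card : ℝ) = 2 ^ (j - 1) := by
    rw [← Nat.cast_sum, ← Finset.card_eq_sum_card_fiberwise (fun _ _ => Finset.mem_coe.2
      (Finset.mem_univ _)), Finset.card_univ, composition_card]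
    simp
  rw [← hcard]
  refine (Finset.abs_sum_le_sum_abs _ _).trans (Finset.sum_le_sum fun P _ => ?_)
  have h1 : |(-1 : ℝ) ^ (Multiset.card P.parts - 1) / (Multiset.card P.parts : ℝ)| ≤ 1 := by
    rw [abs_div, abs_pow, abs_neg, abs_one, one_pow, Nat.abs_cast]
    rcases Nat.eq_zero_or_pos (Multiset.card P.parts) with h | h
    · simp [h]
    · exact div_le_one_of_le₀ (by exact_mod_cast h) (by positivity)
  have hpos : (0 : ℝ) < ∏ m ∈ Finset.range (j + 1), ((P.parts.count m).factorial : ℝ) :=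
    Finset.prod_pos fun m _ => by exact_mod_cast Nat.factorial_pos _
  have h2 : (((Multiset.card P.parts).factorial : ℝ) /
        ∏ m ∈ Finset.range (j + 1), ((P.parts.count m).factorial : ℝ)) ≤ ((Finset.univ.filter
      (fun c : Composition j => Nat.Partition.ofComposition j c = P)).card : ℝ) := by
    rw [div_le_iff₀' hpos]
    exact_mod_cast aux_fiber j P
  have h20 : 0 ≤ (((Multiset.card P.parts).factorial : ℝ) /
        ∏ m ∈ Finset.range (j + 1), ((P.parts.count m).factorial : ℝ)) := by positivity
  have h30 : 0 ≤ ∏ m ∈ Finset.range (j + 1),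
        ((m.factorial : ℝ)) ^ (-(P.parts.count m : ℝ) * 2) :=
    Finset.prod_nonneg fun m _ => Real.rpow_nonneg (Nat.cast_nonneg _) _
  have h3 : ∏ m ∈ Finset.range (j + 1),
        ((m.factorial : ℝ)) ^ (-(P.parts.count m : ℝ) * 2) ≤ 1 := by
    apply Finset.prod_le_one
    · exact fun m _ => Real.rpow_nonneg (Nat.cast_nonneg _) _
    · intro m _
      apply Real.rpow_le_one_of_one_le_of_nonpos
      · exact_mod_cast Nat.factorial_pos m
      · have : (0 : ℝ) ≤ (P.parts.count m : ℝ) := Nat.cast_nonneg _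
        linarith
  rw [abs_mul, abs_mul, abs_of_nonneg h20, abs_of_nonneg h30]
  refine (mul_le_of_le_one_right (mul_nonneg (abs_nonneg _) h20) h3).trans ?_
  exact (mul_le_of_le_one_left h20 h1).trans h2
end

section
/- Let D ⊆ ℕ be a finite set with 0 ∈ D and containing some d ≥ 2. Then there exists a constant c > 1 such that for infinitely many n, the number of isomorphism classes of rooted labeled trees on n vertices all of whose out-degrees lie in D is at least c^n. -/
open scoped Classical BigOperators

/-- Rooted labeled trees on `n` vertices with all out-degrees in `D`. -/
def DTree (D : Finset ℕ) (n : ℕ) : Type :=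
  {T : RTree n // ∀ v, T.outdeg v ∈ D}

instance (D : Finset ℕ) (n : ℕ) : Finite (DTree D n) := by
  unfold DTree; infer_instance

/-- The isomorphism classes of rooted labeled trees on `n` vertices with all
out-degrees in `D` (Pólya trees of size `n` with degrees in `D`). -/
def PolyaD (D : Finset ℕ) (n : ℕ) : Type :=
  Quot (fun T₁ T₂ : DTree D n => T₁.1.Isom T₂.1)

namespace PolyaAux

/-- The graph of a parent function. -/
def pG (p : ℕ → ℕ) (N : ℕ) : SimpleGraph (Fin (N+1)) :=
  SimpleGraph.fromRel fun u v => v.1 ≠ 0 ∧ p v.1 = u.1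

lemma pG_adj {p : ℕ → ℕ} (hp : ∀ v, v ≠ 0 → p v < v) {N : ℕ} (u v : Fin (N+1)) :
    (pG p N).Adj u v ↔ (v.1 ≠ 0 ∧ p v.1 = u.1) ∨ (u.1 ≠ 0 ∧ p u.1 = v.1) := by
  unfold pG
  rw [SimpleGraph.fromRel_adj]
  constructor
  · exact fun h => h.2
  · intro h
    refine ⟨?_, h⟩
    rintro rfl
    rcases h with ⟨h1, h2⟩ | ⟨h1, h2⟩ <;> have := hp _ h1 <;> omega

lemma pG_reach {p : ℕ → ℕ} (hp : ∀ v, v ≠ 0 → p v < v) {N : ℕ} {h : ℕ → ℕ} (h0 : h 0 = 0)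
    (hs : ∀ v, v ≠ 0 → v ≤ N → h v = h (p v) + 1) (k : ℕ) :
    ∀ hk : k < N + 1, ∃ w : (pG p N).Walk 0 ⟨k, hk⟩, w.length = h k := by
  induction k using Nat.strong_induction_on with
  | _ k ih =>
    intro hk
    by_cases k0 : k = 0
    · subst k0
      exact ⟨SimpleGraph.Walk.nil, by simp [h0]⟩
    · have hlt := hp k k0
      obtain ⟨w, hw⟩ := ih (p k) hlt (by omega)
      have ha : (pG p N).Adj ⟨p k, by omega⟩ ⟨k, hk⟩ := by
        rw [pG_adj hp]; left; exact ⟨k0, rfl⟩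
      refine ⟨w.concat ha, ?_⟩
      rw [SimpleGraph.Walk.length_concat, hw, hs k k0 (by omega)]

lemma pG_dist {p : ℕ → ℕ} (hp : ∀ v, v ≠ 0 → p v < v) {N : ℕ} {h : ℕ → ℕ} (h0 : h 0 = 0)
    (hs : ∀ v, v ≠ 0 → v ≤ N → h v = h (p v) + 1) (v : Fin (N+1)) :
    (pG p N).dist 0 v = h v.1 := by
  obtain ⟨w, hw⟩ := pG_reach hp h0 hs v.1 v.2
  apply le_antisymm
  · rw [← hw]; exact SimpleGraph.dist_le w
  · obtain ⟨w', hw'⟩ := (SimpleGraph.Walk.reachable w).exists_walk_length_eq_dist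
    have key : ∀ (a b : Fin (N+1)) (q : (pG p N).Walk a b), h b.1 ≤ h a.1 + q.length := by
      intro a b q
      induction q with
      | nil => simp
      | cons hadj q ih =>
        rename_i x y z
        rw [SimpleGraph.Walk.length_cons]
        rw [pG_adj hp] at hadj
        rcases hadj with ⟨h1, h2⟩ | ⟨h1, h2⟩
        · have := hs _ h1 (by omega); rw [h2] at this; omega
        · have := hs _ h1 (by omega); rw [h2] at this; omega
    have := key _ _ w'
    simp only [Fin.val_zero, h0] at this
    change h v.1 ≤ (pG p N).dist 0 ⟨v.1, v.2⟩
    omega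

lemma pG_conn {p : ℕ → ℕ} (hp : ∀ v, v ≠ 0 → p v < v) {N : ℕ} : (pG p N).Connected := by
  have r : ∀ k : ℕ, ∀ hk : k < N + 1, (pG p N).Reachable 0 ⟨k, hk⟩ := by
    intro k
    induction k using Nat.strong_induction_on with
    | _ k ih =>
      intro hk
      by_cases k0 : k = 0
      · subst k0
        exact SimpleGraph.Reachable.refl _
      · have hlt := hp k k0
        refine (ih (p k) hlt (by omega)).trans (SimpleGraph.Adj.reachable ?_)
        rw [pG_adj hp]; left; exact ⟨k0, rfl⟩
  rw [SimpleGraph.connected_iff]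
  exact ⟨fun u v => (r u.1 u.2).symm.trans (r v.1 v.2), ⟨0⟩⟩

lemma pG_tree {p : ℕ → ℕ} (hp : ∀ v, v ≠ 0 → p v < v) {N : ℕ} : (pG p N).IsTree := by
  rw [SimpleGraph.isTree_iff_connected_and_card]
  refine ⟨pG_conn hp, le_antisymm ?_ (pG_conn hp).card_vert_le_card_edgeSet_add_one⟩
  have hsub : (pG p N).edgeSet ⊆ Set.range
      (fun i : Fin N => s(i.succ, (⟨p i.succ.1, by
        have := hp i.succ.1 (by simp); omega⟩ : Fin (N+1)))) := by
    intro e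
    induction e using Sym2.ind with
    | _ x y =>
      intro he
      rw [SimpleGraph.mem_edgeSet, pG_adj hp] at he
      rcases he with ⟨h1, h2⟩ | ⟨h1, h2⟩
      · refine ⟨y.pred (by intro h; simp [h] at h1), ?_⟩
        simp only [Fin.succ_pred]
        rw [Sym2.eq_swap]
        congr 1
        ext <;> simp [h2]
      · refine ⟨x.pred (by intro h; simp [h] at h1), ?_⟩
        simp only [Fin.succ_pred]
        congr 1
        ext <;> simp [h2]
  have h1 := Set.ncard_le_ncard hsub (Set.finite_range _)
  have h2 : (Set.range (fun i : Fin N => s(i.succ, (⟨p i.succ.1, by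
        have := hp i.succ.1 (by simp); omega⟩ : Fin (N+1))))).ncard ≤ N := by
    rw [← Set.image_univ]
    refine (Set.ncard_image_le (Set.finite_univ)).trans ?_
    simp [Set.ncard_univ]
  rw [Nat.card_fin]
  rw [← Nat.card_coe_set_eq] at h1
  omega

/-- The rooted tree of a parent function. -/
def pT (p : ℕ → ℕ) (hp : ∀ v, v ≠ 0 → p v < v) (N : ℕ) : RTree (N+1) :=
  ⟨pG p N, pG_tree hp, 0⟩

lemma pT_outdeg {p : ℕ → ℕ} (hp : ∀ v, v ≠ 0 → p v < v) {N : ℕ} (v : Fin (N+1)) :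
    (pT p hp N).outdeg v = {u : Fin (N+1) | u.1 ≠ 0 ∧ p u.1 = v.1}.ncard := by
  unfold RTree.outdeg
  split_ifs with hv
  · congr 1
    ext u
    change (pG p N).Adj v u ↔ _
    rw [pG_adj hp]
    change v = 0 at hv
    subst hv
    simp
  · have hv0 : v.1 ≠ 0 := fun h => hv (Fin.ext h)
    have hlt := hp _ hv0
    have : (pT p hp N).graph.neighborSet v =
        insert (⟨p v.1, by omega⟩ : Fin (N+1)) {u : Fin (N+1) | u.1 ≠ 0 ∧ p u.1 = v.1} := by
      ext u
      change (pG p N).Adj v u ↔ _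
      rw [pG_adj hp, Set.mem_insert_iff, Set.mem_setOf_eq, Fin.ext_iff]
      simp only [hv0, ne_eq, not_false_eq_true, true_and]
      constructor
      · rintro (h | h)
        · exact Or.inr h
        · exact Or.inl h.symm
      · rintro (h | h)
        · exact Or.inr h.symm
        · exact Or.inl h
    rw [this, Set.ncard_insert_of_notMem _ (Set.toFinite _)]
    · simp
    · rintro ⟨h1, h2⟩
      have := hp _ h1
      simp only at this h2
      omega

/-- Position (block parent). -/
def q (b : ℕ → Bool) (k : ℕ) : ℕ :=
  if k % 3 = 0 then k - 2 else if k % 3 = 1 then k - 1 else if b (k / 3) then k - 1 else k - 2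

def e (k : ℕ) : ℕ := if k % 3 = 2 then 1 else 0

def a (d : ℕ) (b : ℕ → Bool) (k : ℕ) : ℕ := if k = 0 then 0 else d * q b k + (1 + e k)

def H (b : ℕ → Bool) (k : ℕ) : ℕ :=
  if k % 3 = 0 then 2 * (k / 3) else if k % 3 = 1 then 2 * (k / 3) + 1
  else if b (k / 3) then 2 * (k / 3) + 2 else 2 * (k / 3) + 1

def par (d : ℕ) (b : ℕ → Bool) (v : ℕ) : ℕ := a d b ((v - 1) / d)

def dep (d : ℕ) (b : ℕ → Bool) (v : ℕ) : ℕ := if v = 0 then 0 else H b ((v - 1) / d) + 1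

lemma e_lt (k : ℕ) : e k < 2 := by unfold e; split_ifs <;> omega

lemma q_lt (b : ℕ → Bool) (k : ℕ) (hk : k ≠ 0) : q b k + 1 ≤ k := by
  unfold q; split_ifs <;> omega

lemma a_le {d : ℕ} (hd : 2 ≤ d) (b : ℕ → Bool) (k : ℕ) : a d b k ≤ d * k := by
  unfold a
  split_ifs with h
  · simp
  · have := q_lt b k h
    have h2 := Nat.mul_le_mul_left d this
    have := e_lt k
    rw [Nat.mul_add] at h2
    omega

lemma a_div {d : ℕ} (hd : 2 ≤ d) (b : ℕ → Bool) (k : ℕ) (hk : k ≠ 0) :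
    a d b k ≠ 0 ∧ (a d b k - 1) / d = q b k ∧ (a d b k - 1) % d = e k := by
  have he := e_lt k
  have h1 : a d b k - 1 = e k + d * q b k := by
    unfold a; rw [if_neg hk]; omega
  refine ⟨by unfold a; rw [if_neg hk]; omega, ?_, ?_⟩
  · rw [h1, Nat.add_mul_div_left _ _ (by omega), Nat.div_eq_of_lt (by omega), zero_add]
  · rw [h1, Nat.add_mul_mod_self_left, Nat.mod_eq_of_lt (by omega)]

lemma a_inj {d : ℕ} (hd : 2 ≤ d) (b : ℕ → Bool) {k l : ℕ} (h : a d b k = a d b l) : k = l := by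
  by_cases hk : k = 0
  · by_cases hl : l = 0
    · omega
    · have := (a_div hd b l hl).1
      rw [← h] at this
      simp [a, hk] at this
  · by_cases hl : l = 0
    · have := (a_div hd b k hk).1
      rw [h] at this
      simp [a, hl] at this
    · obtain ⟨-, h1, h2⟩ := a_div hd b k hk
      obtain ⟨-, h3, h4⟩ := a_div hd b l hl
      rw [h] at h1 h2
      have hq : q b k = q b l := h1.symm.trans h3
      have he : e k = e l := h2.symm.trans h4
      unfold q at hq
      unfold e at he
      split_ifs at hq he <;> omega

lemma par_lt {d : ℕ} (hd : 2 ≤ d) (b : ℕ → Bool) (v : ℕ) (hv : v ≠ 0) : par d b v < v := by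
  have := a_le hd b ((v - 1) / d)
  have h2 := Nat.mul_div_le (v - 1) d
  unfold par
  omega

lemma dep_a {d : ℕ} (hd : 2 ≤ d) (b : ℕ → Bool) (k : ℕ) : dep d b (a d b k) = H b k := by
  by_cases hk : k = 0
  · subst hk; simp [dep, a, H]
  · obtain ⟨h0, h1, -⟩ := a_div hd b k hk
    unfold dep
    rw [if_neg h0, h1]
    obtain ⟨i, r, hr, rfl⟩ : ∃ i r, r < 3 ∧ k = 3 * i + r :=
      ⟨k / 3, k % 3, Nat.mod_lt _ (by norm_num), by omega⟩
    interval_cases r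
    · obtain ⟨j, rfl⟩ : ∃ j, i = j + 1 := ⟨i - 1, by omega⟩
      have : q b (3 * (j + 1) + 0) = 3 * j + 1 := by unfold q; split_ifs <;> omega
      rw [this]
      unfold H
      split_ifs <;> omega
    · have : q b (3 * i + 1) = 3 * i := by unfold q; split_ifs <;> omega
      rw [this]
      unfold H
      split_ifs <;> omega
    · have hi : (3 * i + 2) / 3 = i := by omega
      cases hb : b i
      · have : q b (3 * i + 2) = 3 * i := by unfold q; simp [hi, hb]
        rw [this]
        unfold H
        simp only [hi, hb]
        split_ifs <;> first | omega | simp_all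
      · have : q b (3 * i + 2) = 3 * i + 1 := by unfold q; simp [hi, hb]
        rw [this]
        unfold H
        simp only [hi, hb]
        split_ifs <;> first | omega | simp_all

lemma dep_par {d : ℕ} (hd : 2 ≤ d) (b : ℕ → Bool) (v : ℕ) (hv : v ≠ 0) :
    dep d b v = dep d b (par d b v) + 1 := by
  rw [par, dep_a hd, dep, if_neg hv]

/-- The tree. -/
def T (d : ℕ) (hd : 2 ≤ d) (b : ℕ → Bool) (m : ℕ) : RTree (d * (3 * m) + 1) :=
  pT (par d b) (par_lt hd b) (d * (3 * m))

lemma T_outdeg (d : ℕ) (hd : 2 ≤ d) (b : ℕ → Bool) (m : ℕ) (v) :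
    (T d hd b m).outdeg v = 0 ∨ (T d hd b m).outdeg v = d := by
  unfold T
  rw [pT_outdeg]
  rcases Set.eq_empty_or_nonempty
    {u : Fin (d * (3 * m) + 1) | u.1 ≠ 0 ∧ par d b u.1 = v.1} with h | ⟨w, hw0, hw⟩
  · left; rw [h]; simp
  · right
    set k := (w.1 - 1) / d with hk
    have hkm : k < 3 * m := by
      rw [hk, Nat.div_lt_iff_lt_mul (by omega)]
      have h1 := w.2
      have h2 := Nat.mul_comm d (3 * m)
      omega
    have hb : d * (k + 1) ≤ d * (3 * m) := Nat.mul_le_mul_left d hkm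
    rw [Nat.mul_add] at hb
    have hset : {u : Fin (d * (3 * m) + 1) | u.1 ≠ 0 ∧ par d b u.1 = v.1} =
        Set.range (fun j : Fin d => (⟨d * k + 1 + j.1, by omega⟩ : Fin (d * (3 * m) + 1))) := by
      ext u
      constructor
      · rintro ⟨h0, h1⟩
        have h2 : (u.1 - 1) / d = k := a_inj hd b (h1.trans hw.symm)
        refine ⟨⟨(u.1 - 1) % d, Nat.mod_lt _ (by omega)⟩, ?_⟩
        ext
        have := Nat.div_add_mod (u.1 - 1) d
        rw [h2] at this
        simp only
        omega
      · rintro ⟨j, rfl⟩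
        refine ⟨by simp, ?_⟩
        rw [← hw]
        unfold par
        congr 1
        rw [← hk]
        simp only
        have : d * k + 1 + j.1 - 1 = j.1 + d * k := by omega
        rw [this, Nat.add_mul_div_left _ _ (by omega), Nat.div_eq_of_lt j.2, zero_add]
    rw [hset, ← Set.image_univ, Set.ncard_image_of_injective]
    · simp [Set.ncard_univ]
    · intro x y hxy
      simp only [Fin.mk.injEq] at hxy
      ext; omega

/-- The invariant. -/
def P {n : ℕ} (T : RTree n) (i : ℕ) : Prop :=
  ∃ u u' w w', u ≠ u' ∧ T.graph.Adj u w ∧ T.graph.Adj u' w' ∧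
    T.graph.dist T.root u = 2 * i + 1 ∧ T.graph.dist T.root u' = 2 * i + 1 ∧
    T.graph.dist T.root w = 2 * i + 2 ∧ T.graph.dist T.root w' = 2 * i + 2

lemma iso_dist_le {n : ℕ} {G G' : SimpleGraph (Fin n)} (φ : G ≃g G') (hc : G.Connected) (u v) :
    G'.dist (φ u) (φ v) ≤ G.dist u v := by
  obtain ⟨w, hw⟩ := (hc u v).exists_walk_length_eq_dist
  rw [← hw, ← SimpleGraph.Walk.length_map φ.toHom w]
  exact SimpleGraph.dist_le _

lemma iso_dist {n : ℕ} {G G' : SimpleGraph (Fin n)} (φ : G ≃g G') (hc : G.Connected)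
    (hc' : G'.Connected) (u v) : G'.dist (φ u) (φ v) = G.dist u v := by
  apply le_antisymm (iso_dist_le φ hc u v)
  have := iso_dist_le φ.symm hc' (φ u) (φ v)
  simpa using this

lemma P_mono {n : ℕ} {T₁ T₂ : RTree n} (h : T₁.Isom T₂) (i : ℕ) (hP : P T₁ i) : P T₂ i := by
  obtain ⟨φ, hr⟩ := h
  obtain ⟨u, u', w, w', h0, h1, h2, h3, h4, h5, h6⟩ := hP
  have hd := iso_dist φ T₁.isTree.1 T₂.isTree.1 T₁.root
  rw [hr] at hd
  refine ⟨φ u, φ u', φ w, φ w', fun h => h0 (φ.injective h), φ.map_rel_iff.2 h1,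
    φ.map_rel_iff.2 h2, ?_, ?_, ?_, ?_⟩ <;> rw [hd] <;> assumption

lemma P_iff {n : ℕ} {T₁ T₂ : RTree n} (h : T₁.Isom T₂) (i : ℕ) : P T₁ i ↔ P T₂ i := by
  refine ⟨P_mono h i, P_mono ?_ i⟩
  obtain ⟨φ, hr⟩ := h
  exact ⟨φ.symm, by rw [← hr]; simp⟩

lemma T_dist (d : ℕ) (hd : 2 ≤ d) (b : ℕ → Bool) (m : ℕ) (v) :
    (T d hd b m).graph.dist (T d hd b m).root v = dep d b v.1 :=
  pG_dist (par_lt hd b) (by simp [dep]) (fun v hv _ => dep_par hd b v hv) v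

lemma T_adj (d : ℕ) (hd : 2 ≤ d) (b : ℕ → Bool) (m : ℕ) (u v) :
    (T d hd b m).graph.Adj u v ↔
      (v.1 ≠ 0 ∧ par d b v.1 = u.1) ∨ (u.1 ≠ 0 ∧ par d b u.1 = v.1) :=
  pG_adj (par_lt hd b) u v

lemma T_child (d : ℕ) (hd : 2 ≤ d) (b : ℕ → Bool) (m : ℕ) (k : ℕ) (hk : k < 3 * m) :
    ∃ u w, (T d hd b m).graph.Adj u w ∧ u.1 = a d b k ∧
      (T d hd b m).graph.dist (T d hd b m).root u = H b k ∧
      (T d hd b m).graph.dist (T d hd b m).root w = H b k + 1 := by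
  have hb : d * (k + 1) ≤ d * (3 * m) := Nat.mul_le_mul_left d hk
  rw [Nat.mul_add] at hb
  have ha := a_le hd b k
  have hp : par d b (d * k + 1) = a d b k := by
    unfold par
    rw [Nat.add_sub_cancel, Nat.mul_div_cancel_left _ (by omega)]
  refine ⟨⟨a d b k, by omega⟩, ⟨d * k + 1, by omega⟩, ?_, rfl, ?_, ?_⟩
  · rw [T_adj]; left; exact ⟨by simp, hp⟩
  · rw [T_dist, dep_a hd]
  · rw [T_dist, dep_par hd b _ (by simp), hp, dep_a hd]

lemma T_up (d : ℕ) (hd : 2 ≤ d) (b : ℕ → Bool) (m : ℕ) (i : ℕ) (hb : b i = true) (u w)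
    (h : (T d hd b m).graph.Adj u w)
    (hu : (T d hd b m).graph.dist (T d hd b m).root u = 2 * i + 1)
    (hw : (T d hd b m).graph.dist (T d hd b m).root w = 2 * i + 2) :
    u.1 = a d b (3 * i + 1) := by
  rw [T_dist] at hu hw
  rw [T_adj] at h
  rcases h with ⟨h1, h2⟩ | ⟨h1, h2⟩
  · rw [← h2]
    rw [← h2, par, dep_a hd] at hu
    unfold par
    congr 1
    generalize (w.1 - 1) / d = k at hu
    unfold H at hu
    by_cases hki : k / 3 = i
    · rw [hki, hb] at hu
      split_ifs at hu <;> first | omega | simp_all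
    · split_ifs at hu <;> omega
  · have := dep_par hd b _ h1
    rw [h2] at this
    omega

lemma T_P (d : ℕ) (hd : 2 ≤ d) (b : ℕ → Bool) (m : ℕ) (i : ℕ) (hi : i < m) :
    P (T d hd b m) i ↔ b i = false := by
  constructor
  · rintro ⟨u, u', w, w', h0, h1, h2, h3, h4, h5, h6⟩
    by_contra hb
    have hb : b i = true := by simpa using hb
    apply h0
    ext
    rw [T_up d hd b m i hb u w h1 h3 h5, T_up d hd b m i hb u' w' h2 h4 h6]
  · intro hb
    obtain ⟨u, w, h1, h2, h3, h4⟩ := T_child d hd b m (3 * i + 1) (by omega)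
    obtain ⟨u', w', h1', h2', h3', h4'⟩ := T_child d hd b m (3 * i + 2) (by omega)
    have e1 : H b (3 * i + 1) = 2 * i + 1 := by unfold H; split_ifs <;> omega
    have e2 : H b (3 * i + 2) = 2 * i + 1 := by
      have : (3 * i + 2) / 3 = i := by omega
      unfold H; simp only [this, hb]; split_ifs <;> first | omega | simp_all
    rw [e1] at h3 h4
    rw [e2] at h3' h4'
    refine ⟨u, u', w, w', ?_, h1, h1', h3, h3', h4, h4'⟩
    rintro rfl
    have := a_inj hd b (h2.symm.trans h2')
    omega

lemma card_ge (D : Finset ℕ) (hD0 : 0 ∈ D) (d : ℕ) (hdD : d ∈ D) (hd : 2 ≤ d) (m : ℕ) :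
    2 ^ m ≤ Nat.card (PolyaD D (d * (3 * m) + 1)) := by
  let ext : (Fin m → Bool) → ℕ → Bool := fun b i => if h : i < m then b ⟨i, h⟩ else false
  let f : (Fin m → Bool) → PolyaD D (d * (3 * m) + 1) := fun b =>
    Quot.mk _ ⟨T d hd (ext b) m, fun v => by
      rcases T_outdeg d hd (ext b) m v with h | h <;> rw [h] <;> assumption⟩
  have hf : Function.Injective f := by
    intro b b' hbb
    funext i
    let L : PolyaD D (d * (3 * m) + 1) → Prop :=
      Quot.lift (fun S => P S.1 i.1) (fun S S' h => propext (P_iff h i.1))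
    have hL : L (f b) = L (f b') := by rw [hbb]
    have h2 : P (T d hd (ext b) m) i.1 ↔ P (T d hd (ext b') m) i.1 := iff_of_eq hL
    rw [T_P d hd _ m _ i.2, T_P d hd _ m _ i.2] at h2
    simp only [ext, i.2, dif_pos, Fin.eta] at h2
    cases hb : b i <;> cases hb' : b' i <;> simp_all
  have : Finite (PolyaD D (d * (3 * m) + 1)) := by unfold PolyaD; infer_instance
  have := Nat.card_le_card_of_injective f hf
  simpa using this

end PolyaAux

/-- If the finite degree set `D` contains `0` and some
`d ≥ 2`, then there is a constant `c > 1` such that for infinitely many `n`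
the number of isomorphism classes of rooted labeled trees on `n` vertices with
out-degrees in `D` is at least `c^n`. -/
theorem polya_trees_restricted_degrees_exponential_growth
    (D : Finset ℕ) (hD0 : 0 ∈ D) (hD2 : ∃ d ∈ D, 2 ≤ d) :
    ∃ c : ℝ, 1 < c ∧ ∀ N : ℕ, ∃ n, N ≤ n ∧ c ^ n ≤ (Nat.card (PolyaD D n) : ℝ) := by
  obtain ⟨d, hdD, hd⟩ := hD2
  have h4 : 4 * d ≠ 0 := by omega
  set c : ℝ := (2 : ℝ) ^ (((4 * d : ℕ) : ℝ)⁻¹) with hc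
  have hc4 : c ^ (4 * d) = 2 := Real.rpow_inv_natCast_pow (by norm_num) h4
  have hc1 : 1 < c := Real.one_lt_rpow (by norm_num) (by positivity)
  refine ⟨c, hc1, fun N => ⟨d * (3 * (N + 1)) + 1, by nlinarith, ?_⟩⟩
  calc c ^ (d * (3 * (N + 1)) + 1) ≤ c ^ (4 * d * (N + 1)) :=
        pow_le_pow_right₀ hc1.le (by nlinarith)
    _ = 2 ^ (N + 1) := by rw [pow_mul, hc4]
    _ ≤ _ := by exact_mod_cast PolyaAux.card_ge D hD0 d hdD hd (N + 1)
end
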